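/- Let (W,W') be an exchangeable pair (i.e., (W,W') and (W',W) have the same joint distribution) with Δ = W−W' satisfying |Δ| ≤ δ and E(Δ|W) = λ(g(W)−R(W)) for some 0<λ<1, where g satisfies (A1)–(A4). Set K̂₁ = Δ²/(2λ). Assume there exist τ₁>0, τ₂>0, δ₁>0, δ₂≥0 with |E(K̂₁|W)−1| ≤ δ₁(|g(W)|^{τ₁}+1) and |R(W)| ≤ δ₂(|g(W)|^{τ₂}+1), and constants d₀≥1, d₁>0, 0≤α<1 with E(K̂₁|W) ≤ d₀, δ|g(W)| ≤ d₁, and |R(W)| ≤ α(|g(W)|+1). Then there is a finite constant C, depending only on d₀, d₁, c₁, c₂, c₃, τ₁, τ₂, α and max(g(1),|g(−1)|), such that for every z ≥ 0 with δ·z·g(z)² + δ₁·z·g(z)^{τ₁+1} + δ₂·z·g(z)^{τ₂} ≤ 1, |P(W>z)/P(Y>z) − 1| ≤ C·( δ(1+z·g(z)²) + δ₁(1+z·g(z)^{τ₁+1}) + δ₂(1+z·g(z)^{τ₂}) ). -/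

import Mathlib

open MeasureTheory Real

/-- Conditions (A1)–(A4) on the function `g`. -/
structure GCond (g : ℝ → ℝ) (c₂ c₃ : ℝ) : Prop where
  diff : Differentiable ℝ g
  mono : Monotone g
  zero : g 0 = 0
  sign : ∀ y : ℝ, y ≠ 0 → 0 < y * g y
  c₂pos : 0 < c₂
  subadd : ∀ x y : ℝ, |g (x + y)| ≤ c₂ * (|g x| + |g y| + 1)
  c₃ge : 1 ≤ c₃
  derivBound : ∀ y : ℝ, |deriv g y| ≤ c₃ * (1 + |g y|) / (1 + |y|)

/-- `G(y) = ∫₀^y g`. -/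
noncomputable def Gfun (g : ℝ → ℝ) (y : ℝ) : ℝ := ∫ t in (0:ℝ)..y, g t

/-- The density `p(y) = c₁ e^{-G(y)}`. -/
noncomputable def pfun (g : ℝ → ℝ) (c₁ y : ℝ) : ℝ := c₁ * Real.exp (-(Gfun g y))

/-!
For bounded increments, exchangeability turns the regression property into the identity
`E[(g(W) - R) f(W)] = E[(f(W) - f(W')) Δ] / (2λ)`, and the right side is at most `E[K̂₁ D(W)]` as
soon as `D` bounds `f'` from above within distance `δ`. Applied to `± f_{z'}`, with `f_{z'}` the
solution of Stein's equation for the indicator of `[z', ∞)` and `z' = z ∓ 2δ`, this one-sided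
inequality compares `P(W > z)` with `P(Y > z')` up to errors that are moments
`E[(1 + |g(W)|)^k e^{G(W)}]`, with `G(W)` replaced by `0` for `W ≤ 0` and by `G(z)` for `W ≥ z`,
multiplied by `P(Y > z)`: the shift of the level makes the jump of the indicator act in the
favourable direction.

The moments are bounded by testing the same inequality with a tilted copy of their integrand,
`e^{G(W ∧ z) - κ (W ∧ z) / z} ((1 + g(W ∨ z)) / (1 + g(z)))^m`: the tilt creates a drift of at least
`1 / z`, which absorbs every error term since each of them is `O(1 / z)` in the moderate range. It
costs only a factor of order `z`, so that the moments are `O((1 + z) (1 + g(z))^k)`.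
-/

section ExchangeablePair

variable {Ω : Type*} [MeasurableSpace Ω] {μ : Measure Ω} {W W' X : Ω → ℝ} {f : ℝ → ℝ}

lemma map_eq_map_of_swap (hW : Measurable W) (hW' : Measurable W')
    (hswap : μ.map (fun ω => (W ω, W' ω)) = μ.map (fun ω => (W' ω, W ω))) :
    μ.map W = μ.map W' := by
  have hfst := congrArg (Measure.map Prod.fst) hswap
  rwa [Measure.map_map measurable_fst (hW.prodMk hW'),
    Measure.map_map measurable_fst (hW'.prodMk hW)] at hfst

lemma two_mul_integral_comp_mul_sub_of_swap (hW : Measurable W) (hW' : Measurable W')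
    (hswap : μ.map (fun ω => (W ω, W' ω)) = μ.map (fun ω => (W' ω, W ω)))
    (hf : Measurable f) (hint : Integrable (fun ω => f (W ω) * (W ω - W' ω)) μ) :
    2 * ∫ ω, f (W ω) * (W ω - W' ω) ∂μ = ∫ ω, (f (W ω) - f (W' ω)) * (W ω - W' ω) ∂μ := by
  have hm : Measurable fun q : ℝ × ℝ => f q.1 * (q.1 - q.2) := by fun_prop
  have hint' : Integrable (fun ω => f (W' ω) * (W' ω - W ω)) μ := by
    have h : Integrable (fun q : ℝ × ℝ => f q.1 * (q.1 - q.2)) (μ.map fun ω => (W ω, W' ω)) :=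
      (integrable_map_measure hm.aestronglyMeasurable (hW.prodMk hW').aemeasurable).2 hint
    rw [hswap] at h
    exact (integrable_map_measure hm.aestronglyMeasurable (hW'.prodMk hW).aemeasurable).1 h
  have hsymm : ∫ ω, f (W' ω) * (W' ω - W ω) ∂μ = ∫ ω, f (W ω) * (W ω - W' ω) ∂μ := by
    rw [← integral_map (hW.prodMk hW').aemeasurable hm.aestronglyMeasurable, hswap,
      integral_map (hW'.prodMk hW).aemeasurable hm.aestronglyMeasurable]
  calc 2 * ∫ ω, f (W ω) * (W ω - W' ω) ∂μ
      = ∫ ω, (f (W ω) * (W ω - W' ω) + f (W' ω) * (W' ω - W ω)) ∂μ := by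
        rw [integral_add hint hint', hsymm, two_mul]
    _ = ∫ ω, (f (W ω) - f (W' ω)) * (W ω - W' ω) ∂μ := by congr 1; ext ω; ring

lemma condExp_comp_mul (hf : Measurable f) (hX : Integrable X μ)
    (hfX : Integrable (fun ω => f (W ω) * X ω) μ) :
    μ[fun ω => f (W ω) * X ω | MeasurableSpace.comap W Real.measurableSpace] =ᵐ[μ]
      fun ω => f (W ω) * (μ[X | MeasurableSpace.comap W Real.measurableSpace]) ω :=
  condExp_mul_of_stronglyMeasurable_left (hf.comp (comap_measurable W)).stronglyMeasurable hfX hX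

lemma integrable_comp_mul_condExp (hf : Measurable f) (hX : Integrable X μ)
    (hfX : Integrable (fun ω => f (W ω) * X ω) μ) :
    Integrable (fun ω => f (W ω) * (μ[X | MeasurableSpace.comap W Real.measurableSpace]) ω) μ :=
  integrable_condExp.congr (condExp_comp_mul hf hX hfX)

lemma integral_comp_mul_condExp [IsFiniteMeasure μ] (hW : Measurable W) (hf : Measurable f)
    (hX : Integrable X μ) (hfX : Integrable (fun ω => f (W ω) * X ω) μ) :
    ∫ ω, f (W ω) * (μ[X | MeasurableSpace.comap W Real.measurableSpace]) ω ∂μ =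
      ∫ ω, f (W ω) * X ω ∂μ := by
  rw [← integral_congr_ae (condExp_comp_mul hf hX hfX), integral_condExp hW.comap_le]

end ExchangeablePair

section SlopeBounds

variable {u u' : ℝ → ℝ} {x y D : ℝ}

lemma sub_mul_sub_le_of_rightDeriv_le (hu : Continuous u)
    (hu' : ∀ t, HasDerivWithinAt u (u' t) (Set.Ici t) t) (hD : ∀ t ∈ Set.uIcc x y, u' t ≤ D) :
    (u x - u y) * (x - y) ≤ D * (x - y) ^ 2 := by
  have increment_le : ∀ a b, a ≤ b → (∀ t ∈ Set.Icc a b, u' t ≤ D) → u b - u a ≤ D * (b - a) := by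
    intro a b hab hab'
    have hline : ∀ t, HasDerivAt (fun t => u a + D * (t - a)) D t := fun t => by
      simpa using (((hasDerivAt_id t).sub_const a).const_mul D).const_add (u a)
    have := image_le_of_deriv_right_le_deriv_boundary hu.continuousOn (fun t _ => hu' t)
      (by simp) (by fun_prop) (fun t _ => (hline t).hasDerivWithinAt)
      (fun t ht => hab' t ⟨ht.1, ht.2.le⟩) (Set.right_mem_Icc.2 hab)
    linarith
  rcases le_total x y with hxy | hxy
  · rw [Set.uIcc_of_le hxy] at hD
    nlinarith [increment_le x y hxy hD]
  · rw [Set.uIcc_of_ge hxy] at hD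
    nlinarith [increment_le y x hxy hD]

lemma abs_sub_le_of_abs_rightDeriv_le (hu : Continuous u)
    (hu' : ∀ t, HasDerivWithinAt u (u' t) (Set.Ici t) t) (hD : ∀ t ∈ Set.uIcc x y, |u' t| ≤ D) :
    |u x - u y| ≤ D * |x - y| := by
  rcases eq_or_ne x y with rfl | hne
  · simp
  have hupper := sub_mul_sub_le_of_rightDeriv_le hu hu' fun t ht => (le_abs_self _).trans (hD t ht)
  have hlower := sub_mul_sub_le_of_rightDeriv_le hu.neg (fun t => (hu' t).neg)
    fun t ht => (neg_le_abs _).trans (hD t ht)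
  have hsq : |u x - u y| * |x - y| ≤ D * |x - y| * |x - y| := by
    rw [← abs_mul, mul_assoc, abs_mul_abs_self, ← sq]
    simp only [Pi.neg_apply] at hlower
    exact abs_le.2 ⟨by linarith, hupper⟩
  exact le_of_mul_le_mul_right hsq (abs_pos.2 (sub_ne_zero.2 hne))

end SlopeBounds

/-- The values `r` of the remainder `R` and `k` of the conditional second moment
`E(Δ² / (2λ) | W)` that the hypotheses on the exchangeable pair allow at `W = w`. -/
structure Admissible (g : ℝ → ℝ) (δ₁ δ₂ τ₁ τ₂ d₀ α w r k : ℝ) : Prop where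
  k_nonneg : 0 ≤ k
  k_le : k ≤ d₀
  abs_k_sub_one_le : |k - 1| ≤ δ₁ * (|g w| ^ τ₁ + 1)
  abs_r_le : |r| ≤ δ₂ * (|g w| ^ τ₂ + 1)
  abs_r_le_linear : |r| ≤ α * (|g w| + 1)

/-- An exchangeable pair `(W, W')` with increments bounded by `δ` that satisfies the approximate
regression property `E(W - W' | W) = λ (g(W) - R)`, with the bounds on `R` and on
`E((W - W')² / (2λ) | W)` under which `W` is close in law to the density `exp (-G)`. -/
structure ApproxExchangeablePair {Ω : Type*} [MeasurableSpace Ω] (μ : Measure Ω) (W W' R : Ω → ℝ)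
    (g : ℝ → ℝ) (lam δ δ₁ δ₂ τ₁ τ₂ d₀ α : ℝ) : Prop where
  measurable_left : Measurable W
  measurable_right : Measurable W'
  lam_pos : 0 < lam
  map_swap : μ.map (fun ω => (W ω, W' ω)) = μ.map (fun ω => (W' ω, W ω))
  abs_sub_le : ∀ ω, |W ω - W' ω| ≤ δ
  condExp_sub : μ[fun ω => W ω - W' ω | MeasurableSpace.comap W Real.measurableSpace]
    =ᵐ[μ] fun ω => lam * (g (W ω) - R ω)
  admissible : ∀ᵐ ω ∂μ, Admissible g δ₁ δ₂ τ₁ τ₂ d₀ α (W ω) (R ω)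
    ((μ[fun ω => (W ω - W' ω) ^ 2 / (2 * lam) |
      MeasurableSpace.comap W Real.measurableSpace]) ω)

namespace ApproxExchangeablePair

variable {Ω : Type*} [MeasurableSpace Ω] {μ : Measure Ω}
  {W W' R : Ω → ℝ} {g f f' D Φ : ℝ → ℝ} {lam δ δ₁ δ₂ τ₁ τ₂ d₀ α : ℝ}

lemma integrable_mul_sub (h : ApproxExchangeablePair μ W W' R g lam δ δ₁ δ₂ τ₁ τ₂ d₀ α)
    {X : Ω → ℝ} (hX : Integrable X μ) : Integrable (fun ω => X ω * (W ω - W' ω)) μ :=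
  hX.mul_bdd (h.measurable_left.sub h.measurable_right).aestronglyMeasurable
    (.of_forall h.abs_sub_le)

lemma integrable_mul_sq (h : ApproxExchangeablePair μ W W' R g lam δ δ₁ δ₂ τ₁ τ₂ d₀ α)
    {X : Ω → ℝ} (hX : Integrable X μ) :
    Integrable (fun ω => X ω * ((W ω - W' ω) ^ 2 / (2 * lam))) μ := by
  have hsq := (h.integrable_mul_sub (h.integrable_mul_sub hX)).mul_const (2 * lam)⁻¹
  refine hsq.congr (.of_forall fun ω => ?_)
  simp only [div_eq_mul_inv]
  ring

variable [IsProbabilityMeasure μ]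

lemma integral_comp_mul_drift (h : ApproxExchangeablePair μ W W' R g lam δ δ₁ δ₂ τ₁ τ₂ d₀ α)
    (hf : Measurable f) (hfi : Integrable (fun ω => f (W ω)) μ) :
    Integrable (fun ω => f (W ω) * (g (W ω) - R ω)) μ ∧
      lam * ∫ ω, f (W ω) * (g (W ω) - R ω) ∂μ = ∫ ω, f (W ω) * (W ω - W' ω) ∂μ := by
  have hΔ : Integrable (fun ω => W ω - W' ω) μ := by
    simpa using h.integrable_mul_sub (integrable_const 1)
  have hfΔ := h.integrable_mul_sub hfi
  have hdrift : (fun ω => f (W ω) * (μ[fun ω => W ω - W' ω |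
      MeasurableSpace.comap W Real.measurableSpace]) ω)
      =ᵐ[μ] fun ω => lam * (f (W ω) * (g (W ω) - R ω)) := by
    filter_upwards [h.condExp_sub] with ω hω
    rw [hω]; ring
  refine ⟨?_, ?_⟩
  · have := ((integrable_comp_mul_condExp hf hΔ hfΔ).congr hdrift).const_mul lam⁻¹
    simpa only [inv_mul_cancel_left₀ h.lam_pos.ne'] using this
  · rw [← integral_comp_mul_condExp h.measurable_left hf hΔ hfΔ, integral_congr_ae hdrift,
      integral_const_mul]

/- Exchangeability turns `2 E f(W)(W - W')` into `E (f(W) - f(W'))(W - W')`, so a slope bound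
on `f` gives `E f(W)(g(W) - R) ≤ E D(W) K` with `K = (W - W')² / (2λ)`. -/
lemma integral_comp_mul_drift_le (h : ApproxExchangeablePair μ W W' R g lam δ δ₁ δ₂ τ₁ τ₂ d₀ α)
    (hf : Continuous f) (hf' : ∀ x, HasDerivWithinAt f (f' x) (Set.Ici x) x)
    (hfi : Integrable (fun ω => f (W ω)) μ) (hfi' : Integrable (fun ω => f (W' ω)) μ)
    (hDi : Integrable (fun ω => D (W ω)) μ) (hslope : ∀ x ξ, |ξ - x| ≤ δ → f' ξ ≤ D x) :
    ∫ ω, f (W ω) * (g (W ω) - R ω) ∂μ ≤ ∫ ω, D (W ω) * ((W ω - W' ω) ^ 2 / (2 * lam)) ∂μ := by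
  have hslope' : ∀ ω, (f (W ω) - f (W' ω)) * (W ω - W' ω) ≤ D (W ω) * (W ω - W' ω) ^ 2 :=
    fun ω => sub_mul_sub_le_of_rightDeriv_le hf hf' fun ξ hξ => hslope _ _
      ((Set.abs_sub_left_of_mem_uIcc hξ).trans ((abs_sub_comm _ _).trans_le (h.abs_sub_le ω)))
  have hsq : ∀ ω, D (W ω) * (W ω - W' ω) ^ 2
      = 2 * lam * (D (W ω) * ((W ω - W' ω) ^ 2 / (2 * lam))) := fun ω => by
    have := h.lam_pos.ne'
    field_simp
  have hdrift := (h.integral_comp_mul_drift hf.measurable hfi).2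
  have hswap := two_mul_integral_comp_mul_sub_of_swap h.measurable_left h.measurable_right
    h.map_swap hf.measurable (h.integrable_mul_sub hfi)
  refine le_of_mul_le_mul_left ?_ (mul_pos two_pos h.lam_pos)
  calc 2 * lam * ∫ ω, f (W ω) * (g (W ω) - R ω) ∂μ
      = ∫ ω, (f (W ω) - f (W' ω)) * (W ω - W' ω) ∂μ := by rw [← hswap, ← hdrift]; ring
    _ ≤ ∫ ω, 2 * lam * (D (W ω) * ((W ω - W' ω) ^ 2 / (2 * lam))) ∂μ :=
        integral_mono (h.integrable_mul_sub (hfi.sub hfi')) ((h.integrable_mul_sq hDi).const_mul _)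
          fun ω => (hslope' ω).trans_eq (hsq ω)
    _ = _ := integral_const_mul _ _

lemma integral_nonpos (h : ApproxExchangeablePair μ W W' R g lam δ δ₁ δ₂ τ₁ τ₂ d₀ α)
    (hf : Continuous f) (hf' : ∀ x, HasDerivWithinAt f (f' x) (Set.Ici x) x) (hD : Measurable D)
    (hfi : Integrable (fun ω => f (W ω)) μ) (hfi' : Integrable (fun ω => f (W' ω)) μ)
    (hDi : Integrable (fun ω => D (W ω)) μ) (hΦi : Integrable (fun ω => Φ (W ω)) μ)
    (hslope : ∀ x ξ, |ξ - x| ≤ δ → f' ξ ≤ D x)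
    (hΦ : ∀ w r k, Admissible g δ₁ δ₂ τ₁ τ₂ d₀ α w r k → Φ w ≤ (g w - r) * f w - D w * k) :
    ∫ ω, Φ (W ω) ∂μ ≤ 0 := by
  have hK : Integrable (fun ω => (W ω - W' ω) ^ 2 / (2 * lam)) μ := by
    simpa using h.integrable_mul_sq (integrable_const 1)
  have hDK := h.integrable_mul_sq hDi
  have hcond := integral_comp_mul_condExp h.measurable_left hD hK hDK
  have hDk := integrable_comp_mul_condExp hD hK hDK
  have hfr := (h.integral_comp_mul_drift hf.measurable hfi).1
  have hdrift := h.integral_comp_mul_drift_le hf hf' hfi hfi' hDi hslope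
  calc ∫ ω, Φ (W ω) ∂μ
      ≤ ∫ ω, (f (W ω) * (g (W ω) - R ω) - D (W ω) * (μ[fun ω => (W ω - W' ω) ^ 2 / (2 * lam) |
          MeasurableSpace.comap W Real.measurableSpace]) ω) ∂μ := by
        refine integral_mono_ae hΦi (hfr.sub hDk) ?_
        filter_upwards [h.admissible] with ω hω
        simpa only [mul_comm (f (W ω))] using hΦ _ _ _ hω
    _ ≤ 0 := by
        rw [integral_sub hfr hDk, hcond]
        linarith

end ApproxExchangeablePair

/-- With `f'` the right derivative of `f`, the number `d` bounds the slopes of `f` that a jump of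
size at most `δ` from `x` can see, and `φ` is then a lower bound at `x` for the integrand of the
exchangeable pair inequality. -/
def IsDriftMajorant (g : ℝ → ℝ) (δ δ₁ δ₂ τ₁ τ₂ d₀ α : ℝ) (f f' : ℝ → ℝ) (x φ d : ℝ) : Prop :=
  (∀ ξ, |ξ - x| ≤ δ → f' ξ ≤ d) ∧
    ∀ r k, Admissible g δ₁ δ₂ τ₁ τ₂ d₀ α x r k → φ ≤ (g x - r) * f x - d * k

/-- The properties of the law `ν` of `W` that the proof uses: moments of `g` and the one-sided
Stein inequality, in which `D` majorizes the right derivative `f'` on `δ`-neighbourhoods and `Φ`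
minorizes the Stein operator applied to `f`, whatever the admissible remainder and variance. -/
structure ApproxStein (ν : Measure ℝ) (g : ℝ → ℝ) (δ δ₁ δ₂ τ₁ τ₂ d₀ α : ℝ) : Prop where
  isProbabilityMeasure : IsProbabilityMeasure ν
  integrable_pow : ∀ N : ℕ, Integrable (fun w => (1 + |g w|) ^ N) ν
  integral_nonpos : ∀ f f' D Φ : ℝ → ℝ, Continuous f →
    (∀ x, HasDerivWithinAt f (f' x) (Set.Ici x) x) →
    Measurable D → Integrable f ν → Integrable D ν → Integrable Φ ν →
    (∀ x, IsDriftMajorant g δ δ₁ δ₂ τ₁ τ₂ d₀ α f f' x (Φ x) (D x)) → ∫ w, Φ w ∂ν ≤ 0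

lemma ApproxExchangeablePair.approxStein_map {Ω : Type*} [MeasurableSpace Ω] {μ : Measure Ω}
    [IsProbabilityMeasure μ] {W W' R : Ω → ℝ} {g : ℝ → ℝ} {lam δ δ₁ δ₂ τ₁ τ₂ d₀ α : ℝ}
    (h : ApproxExchangeablePair μ W W' R g lam δ δ₁ δ₂ τ₁ τ₂ d₀ α) (hg : Measurable g)
    (hmom : ∀ n : ℕ, Integrable (fun ω => |g (W ω)| ^ n) μ) :
    ApproxStein (μ.map W) g δ δ₁ δ₂ τ₁ τ₂ d₀ α where
  isProbabilityMeasure := Measure.isProbabilityMeasure_map h.measurable_left.aemeasurable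
  integrable_pow N := by
    rw [integrable_map_measure (by fun_prop) h.measurable_left.aemeasurable]
    simp only [Function.comp_def, add_comm (1 : ℝ), add_pow, one_pow, mul_one]
    exact integrable_finsetSum _ fun n _ => (hmom n).mul_const _
  integral_nonpos f f' D Φ hf hf' hD hfi hDi hΦi hmaj := by
    have hfi' := hfi
    rw [map_eq_map_of_swap h.measurable_left h.measurable_right h.map_swap] at hfi'
    rw [integral_map h.measurable_left.aemeasurable hΦi.aestronglyMeasurable]
    exact h.integral_nonpos hf hf' hD (hfi.comp_measurable h.measurable_left)
      (hfi'.comp_measurable h.measurable_right) (hDi.comp_measurable h.measurable_left)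
      (hΦi.comp_measurable h.measurable_left) (fun x => (hmaj x).1) fun w => (hmaj w).2

/-- A drift `g` that vanishes at `0`, is nondecreasing and grows slowly in the sense of
`g' ≤ c₃ (1 + |g|) / (1 + |y|)`, for which `c₁ exp (-G)` is a probability density. -/
structure SteinDrift (g : ℝ → ℝ) (c₁ c₃ : ℝ) : Prop where
  differentiable : Differentiable ℝ g
  monotone : Monotone g
  map_zero : g 0 = 0
  c₁_pos : 0 < c₁
  c₃_pos : 0 < c₃
  abs_deriv_le : ∀ y, |deriv g y| ≤ c₃ * (1 + |g y|) / (1 + |y|)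
  integral_pfun : ∫ y, pfun g c₁ y = 1

lemma Gfun_zero (g : ℝ → ℝ) : Gfun g 0 = 0 := intervalIntegral.integral_same

lemma Gfun_neg_comp_neg (g : ℝ → ℝ) (y : ℝ) : Gfun (fun x => -g (-x)) y = Gfun g (-y) := by
  rw [Gfun, Gfun, intervalIntegral.integral_neg, intervalIntegral.integral_comp_neg,
    intervalIntegral.integral_symm, neg_neg, neg_zero]

lemma pfun_neg_comp_neg (g : ℝ → ℝ) (c₁ y : ℝ) :
    pfun (fun x => -g (-x)) c₁ y = pfun g c₁ (-y) := by
  rw [pfun, pfun, Gfun_neg_comp_neg]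

/-- The upper tail `P(Y > z)` of the density `p`. -/
noncomputable def tail (g : ℝ → ℝ) (c₁ z : ℝ) : ℝ := ∫ y in Set.Ioi z, pfun g c₁ y

namespace SteinDrift

variable {g : ℝ → ℝ} {c₁ c₃ x y z w a : ℝ}

lemma continuous (h : SteinDrift g c₁ c₃) : Continuous g := h.differentiable.continuous

lemma measurable (h : SteinDrift g c₁ c₃) : Measurable g := h.continuous.measurable

lemma nonneg (h : SteinDrift g c₁ c₃) (hx : 0 ≤ x) : 0 ≤ g x := h.map_zero ▸ h.monotone hx

lemma neg_comp_neg (h : SteinDrift g c₁ c₃) : SteinDrift (fun x => -g (-x)) c₁ c₃ where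
  differentiable := (h.differentiable.comp differentiable_neg).neg
  monotone x y hxy := neg_le_neg (h.monotone (neg_le_neg hxy))
  map_zero := by simp [h.map_zero]
  c₁_pos := h.c₁_pos
  c₃_pos := h.c₃_pos
  abs_deriv_le y := by
    rw [deriv.fun_neg, deriv_comp_neg]
    simpa using h.abs_deriv_le (-y)
  integral_pfun := by
    simp only [pfun_neg_comp_neg]
    rw [integral_neg_eq_self (pfun g c₁), h.integral_pfun]

lemma abs_deriv_le_mul (h : SteinDrift g c₁ c₃) (y : ℝ) : |deriv g y| ≤ c₃ * (1 + |g y|) :=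
  (h.abs_deriv_le y).trans <|
    div_le_self (mul_nonneg h.c₃_pos.le (by positivity)) (by linarith [abs_nonneg y])

lemma one_add_abs_le_exp_mul_of_le (h : SteinDrift g c₁ c₃) (hyx : y ≤ x) :
    1 + |g x| ≤ exp (c₃ * (x - y)) * (1 + |g y|) := by
  have hgronwall := norm_le_gronwallBound_of_norm_deriv_right_le (f := g) (f' := deriv g)
    (δ := |g y|) (K := c₃) (ε := c₃) (a := y) (b := x) h.continuous.continuousOn
    (fun t _ => (h.differentiable t).hasDerivAt.hasDerivWithinAt) le_rfl
    (fun t _ => (h.abs_deriv_le_mul t).trans_eq (by rw [norm_eq_abs]; ring))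
    x (Set.right_mem_Icc.2 hyx)
  rw [gronwallBound_of_K_ne_0 h.c₃_pos.ne', div_self h.c₃_pos.ne', norm_eq_abs] at hgronwall
  linarith

lemma one_add_abs_le_exp_mul (h : SteinDrift g c₁ c₃) (x y : ℝ) :
    1 + |g x| ≤ exp (c₃ * |x - y|) * (1 + |g y|) := by
  rcases le_total y x with hyx | hxy
  · rw [abs_of_nonneg (sub_nonneg.2 hyx)]
    exact h.one_add_abs_le_exp_mul_of_le hyx
  · have := h.neg_comp_neg.one_add_abs_le_exp_mul_of_le (neg_le_neg hxy)
    rw [abs_sub_comm, abs_of_nonneg (sub_nonneg.2 hxy)]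
    simpa [← sub_eq_neg_add] using this

lemma one_add_abs_le_of_abs_sub_le_one (h : SteinDrift g c₁ c₃) (hxy : |x - y| ≤ 1) :
    1 + |g x| ≤ exp c₃ * (1 + |g y|) := by
  refine (h.one_add_abs_le_exp_mul x y).trans ?_
  gcongr
  exact mul_le_of_le_one_right h.c₃_pos.le hxy

lemma one_add_abs_le_exp (h : SteinDrift g c₁ c₃) (hx : |x| ≤ a) :
    1 + |g x| ≤ exp (c₃ * a) := by
  have hgrowth := h.one_add_abs_le_exp_mul x 0
  rw [h.map_zero, abs_zero, add_zero, mul_one, sub_zero] at hgrowth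
  refine hgrowth.trans ?_
  have := h.c₃_pos.le
  gcongr

lemma abs_sub_le (h : SteinDrift g c₁ c₃) (hxy : |x - y| ≤ 1) :
    |g x - g y| ≤ c₃ * exp c₃ * (1 + |g y|) * |x - y| := by
  refine abs_sub_le_of_abs_rightDeriv_le h.continuous
    (fun t => (h.differentiable t).hasDerivAt.hasDerivWithinAt) fun t ht => ?_
  rw [Set.uIcc_comm] at ht
  rw [mul_assoc]
  exact (h.abs_deriv_le_mul t).trans <| mul_le_mul_of_nonneg_left
    (h.one_add_abs_le_of_abs_sub_le_one ((Set.abs_sub_left_of_mem_uIcc ht).trans hxy)) h.c₃_pos.le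

lemma hasDerivAt_Gfun (h : SteinDrift g c₁ c₃) (w : ℝ) : HasDerivAt (Gfun g) (g w) w :=
  h.continuous.integral_hasStrictDerivAt 0 w |>.hasDerivAt

lemma continuous_Gfun (h : SteinDrift g c₁ c₃) : Continuous (Gfun g) :=
  continuous_iff_continuousAt.2 fun w => (h.hasDerivAt_Gfun w).continuousAt

lemma convexOn_Gfun (h : SteinDrift g c₁ c₃) : ConvexOn ℝ Set.univ (Gfun g) := by
  have hderiv : deriv (Gfun g) = g := funext fun w => (h.hasDerivAt_Gfun w).deriv
  exact (hderiv ▸ h.monotone).convexOn_univ_of_deriv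
    fun w => (h.hasDerivAt_Gfun w).differentiableAt

lemma Gfun_add_mul_sub_le (h : SteinDrift g c₁ c₃) (x y : ℝ) :
    Gfun g y + g y * (x - y) ≤ Gfun g x := by
  have slope_eq : ∀ a b, slope (Gfun g) a b = (Gfun g b - Gfun g a) / (b - a) := slope_def_field _
  rcases lt_trichotomy x y with hxy | rfl | hxy
  · have := h.convexOn_Gfun.slope_le_of_hasDerivAt (Set.mem_univ x) (Set.mem_univ y) hxy
      (h.hasDerivAt_Gfun y)
    rw [slope_eq, div_le_iff₀ (sub_pos.2 hxy)] at this
    linarith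
  · simp
  · have := h.convexOn_Gfun.le_slope_of_hasDerivAt (Set.mem_univ y) (Set.mem_univ x) hxy
      (h.hasDerivAt_Gfun y)
    rw [slope_eq, le_div_iff₀ (sub_pos.2 hxy)] at this
    linarith

lemma Gfun_nonneg (h : SteinDrift g c₁ c₃) (x : ℝ) : 0 ≤ Gfun g x := by
  simpa [h.map_zero, Gfun_zero] using h.Gfun_add_mul_sub_le x 0

lemma Gfun_sub_le (h : SteinDrift g c₁ c₃) (x y : ℝ) : Gfun g x - Gfun g y ≤ g x * (x - y) := by
  linarith [h.Gfun_add_mul_sub_le y x]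

lemma Gfun_le_of_abs_le (h : SteinDrift g c₁ c₃) (hx : |x| ≤ a) :
    Gfun g x ≤ exp (c₃ * a) * a := by
  have hgx : |g x| ≤ exp (c₃ * a) := by linarith [h.one_add_abs_le_exp hx]
  calc Gfun g x ≤ g x * x := by simpa [Gfun_zero] using h.Gfun_sub_le x 0
    _ ≤ |g x| * |x| := (le_abs_self _).trans_eq (abs_mul _ _)
    _ ≤ exp (c₃ * a) * a := by gcongr

lemma continuous_pfun (h : SteinDrift g c₁ c₃) : Continuous (pfun g c₁) :=
  (h.continuous_Gfun.neg.rexp).const_mul c₁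

lemma pfun_pos (h : SteinDrift g c₁ c₃) (x : ℝ) : 0 < pfun g c₁ x := mul_pos h.c₁_pos (exp_pos _)

lemma integrable_pfun (h : SteinDrift g c₁ c₃) : Integrable (pfun g c₁) :=
  .of_integral_ne_zero (h.integral_pfun ▸ one_ne_zero)

lemma tail_pos (h : SteinDrift g c₁ c₃) (z : ℝ) : 0 < tail g c₁ z := by
  rw [tail, setIntegral_pos_iff_support_of_nonneg_ae (.of_forall fun x => (h.pfun_pos x).le)
    h.integrable_pfun.integrableOn,
    Function.support_eq_univ fun x => (h.pfun_pos x).ne', Set.univ_inter, Real.volume_Ioi]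
  exact ENNReal.coe_lt_top

lemma tail_le_one (h : SteinDrift g c₁ c₃) (z : ℝ) : tail g c₁ z ≤ 1 :=
  h.integral_pfun ▸
    setIntegral_le_integral h.integrable_pfun (.of_forall fun x => (h.pfun_pos x).le)

lemma tail_sub_tail (h : SteinDrift g c₁ c₃) (x y : ℝ) :
    tail g c₁ x - tail g c₁ y = ∫ t in x..y, pfun g c₁ t :=
  intervalIntegral.integral_Ioi_sub_Ioi' h.integrable_pfun.integrableOn
    h.integrable_pfun.integrableOn

lemma hasDerivAt_tail (h : SteinDrift g c₁ c₃) (w : ℝ) :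
    HasDerivAt (tail g c₁) (-pfun g c₁ w) w := by
  have htail : tail g c₁ = fun x => tail g c₁ 0 - ∫ t in (0 : ℝ)..x, pfun g c₁ t :=
    funext fun x => by rw [← h.tail_sub_tail]; ring
  rw [htail]
  exact (h.continuous_pfun.integral_hasStrictDerivAt 0 w).hasDerivAt.const_sub _

lemma tail_neg_comp_neg (h : SteinDrift g c₁ c₃) (w : ℝ) :
    tail (fun x => -g (-x)) c₁ (-w) = 1 - tail g c₁ w := by
  simp only [tail, pfun_neg_comp_neg]
  rw [integral_comp_neg_Ioi, neg_neg, ← h.integral_pfun, ← intervalIntegral.integral_Iic_add_Ioi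
    (b := w) h.integrable_pfun.integrableOn h.integrable_pfun.integrableOn, add_sub_cancel_right]

lemma one_le_map_exp_one_div_mul (h : SteinDrift g c₁ c₃) :
    1 ≤ g (exp 1 / c₁) * (exp 1 / c₁) := by
  have hc := h.c₁_pos
  set w := exp 1 / c₁ with hw
  have hw0 : 0 < w := by positivity
  have hlower : ∀ t ∈ Set.Icc 0 w, c₁ * exp (-(g w * w)) ≤ pfun g c₁ t := fun t ht => by
    have hG : Gfun g t ≤ g t * t := by simpa [Gfun_zero] using h.Gfun_sub_le t 0
    have hgt : g t * t ≤ g w * w :=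
      mul_le_mul (h.monotone ht.2) ht.2 ht.1 (h.nonneg hw0.le)
    rw [pfun]
    gcongr
    exact hG.trans hgt
  have hmass : w * (c₁ * exp (-(g w * w))) ≤ 1 := calc
    w * (c₁ * exp (-(g w * w))) = ∫ _ in (0 : ℝ)..w, c₁ * exp (-(g w * w)) := by
        rw [intervalIntegral.integral_const, sub_zero, smul_eq_mul]
    _ ≤ ∫ t in (0 : ℝ)..w, pfun g c₁ t := intervalIntegral.integral_mono_on hw0.le
        (by simp) (h.continuous_pfun.intervalIntegrable _ _) hlower
    _ ≤ 1 := by rw [← h.tail_sub_tail]; linarith [h.tail_le_one 0, h.tail_pos w]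
  have hexp : w * (c₁ * exp (-(g w * w))) = exp (1 - g w * w) := by
    rw [sub_eq_add_neg, exp_add, hw]; field_simp
  rw [hexp, exp_le_one_iff] at hmass
  linarith

end SteinDrift

/-- The point `max (e / c₁) 1` beyond which a drift is bounded below by `driftFloor c₁`. -/
noncomputable def driftThreshold (c₁ : ℝ) : ℝ := max (exp 1 / c₁) 1

/-- The lower bound `c₁ / e` for a drift beyond `driftThreshold c₁`. -/
noncomputable def driftFloor (c₁ : ℝ) : ℝ := c₁ / exp 1

lemma one_le_driftThreshold (c₁ : ℝ) : 1 ≤ driftThreshold c₁ := le_max_right _ _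

lemma driftThreshold_pos (c₁ : ℝ) : 0 < driftThreshold c₁ :=
  one_pos.trans_le (one_le_driftThreshold c₁)

lemma driftFloor_pos {c₁ : ℝ} (hc₁ : 0 < c₁) : 0 < driftFloor c₁ := div_pos hc₁ (exp_pos _)

namespace SteinDrift

variable {g : ℝ → ℝ} {c₁ c₃ w a : ℝ}

lemma driftFloor_le (h : SteinDrift g c₁ c₃) (hw : driftThreshold c₁ ≤ w) :
    driftFloor c₁ ≤ g w := by
  have hc := h.c₁_pos
  have hmass := h.one_le_map_exp_one_div_mul
  rw [← div_le_iff₀ (by positivity), one_div_div] at hmass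
  exact hmass.trans (h.monotone ((le_max_left _ _).trans hw))

lemma mul_tail_le (h : SteinDrift g c₁ c₃) (hg : 0 < g w) :
    g w * tail g c₁ w ≤ c₁ * exp (-Gfun g w) := by
  have hexp : ∀ y, pfun g c₁ y ≤ c₁ * exp (-Gfun g w) * exp (g w * w) * exp (-g w * y) :=
    fun y => by
      rw [mul_assoc, mul_assoc, ← exp_add, ← exp_add, pfun]
      have := h.c₁_pos.le
      gcongr
      linarith [h.Gfun_add_mul_sub_le y w]
  have htail : tail g c₁ w ≤ c₁ * exp (-Gfun g w) / g w := calc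
    tail g c₁ w ≤ ∫ y in Set.Ioi w, c₁ * exp (-Gfun g w) * exp (g w * w) * exp (-g w * y) :=
        setIntegral_mono_on h.integrable_pfun.integrableOn
          ((integrableOn_exp_mul_Ioi (by linarith) w).const_mul _) measurableSet_Ioi
          fun y _ => hexp y
    _ = c₁ * exp (-Gfun g w) * (exp (g w * w) * exp (-g w * w)) / g w := by
        rw [integral_const_mul, integral_exp_mul_Ioi (by linarith)]; field_simp
    _ = c₁ * exp (-Gfun g w) / g w := by rw [← exp_add]; simp
  rwa [le_div_iff₀' hg] at htail

lemma one_add_abs_mul_tail_le_of_abs_le (h : SteinDrift g c₁ c₃) (hw : |w| ≤ a) :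
    (1 + |g w|) * tail g c₁ w ≤ exp (c₃ * a) * exp (exp (c₃ * a) * a) * exp (-Gfun g w) := calc
  (1 + |g w|) * tail g c₁ w ≤ exp (c₃ * a) * 1 :=
      mul_le_mul (h.one_add_abs_le_exp hw) (h.tail_le_one w) (h.tail_pos w).le (exp_pos _).le
  _ ≤ exp (c₃ * a) * (exp (exp (c₃ * a) * a) * exp (-Gfun g w)) := by
      rw [← exp_add]
      gcongr
      exact one_le_exp (by linarith [h.Gfun_le_of_abs_le hw])
  _ = _ := (mul_assoc _ _ _).symm

lemma one_add_abs_le_mul (h : SteinDrift g c₁ c₃) (hw : driftThreshold c₁ ≤ w) :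
    1 + |g w| ≤ (1 / driftFloor c₁ + 1) * g w := by
  have hfloor := h.driftFloor_le hw
  have hpos := driftFloor_pos h.c₁_pos
  have hone : 1 ≤ g w / driftFloor c₁ := (one_le_div hpos).2 hfloor
  rw [abs_of_pos (hpos.trans_le hfloor), add_mul, one_div_mul_eq_div, one_mul]
  gcongr

end SteinDrift

lemma exists_one_add_abs_mul_tail_le {c₁ : ℝ} (hc₁ : 0 < c₁) (c₃ : ℝ) :
    ∃ K > 0, ∀ g, SteinDrift g c₁ c₃ → ∀ w, -1 ≤ w →
      (1 + |g w|) * tail g c₁ w ≤ K * exp (-Gfun g w) := by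
  have hfloor := driftFloor_pos hc₁
  set a := driftThreshold c₁
  refine ⟨(1 / driftFloor c₁ + 1) * c₁ + exp (c₃ * a) * exp (exp (c₃ * a) * a), by positivity,
    fun g h w hw => ?_⟩
  rw [add_mul _ _ (exp _)]
  rcases le_total a w with haw | hwa
  · have hgw : 0 < g w := hfloor.trans_le (h.driftFloor_le haw)
    calc (1 + |g w|) * tail g c₁ w ≤ (1 / driftFloor c₁ + 1) * g w * tail g c₁ w :=
          mul_le_mul_of_nonneg_right (h.one_add_abs_le_mul haw) (h.tail_pos w).le
      _ ≤ (1 / driftFloor c₁ + 1) * c₁ * exp (-Gfun g w) := by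
          rw [mul_assoc, mul_assoc]
          exact mul_le_mul_of_nonneg_left (h.mul_tail_le hgw) (by positivity)
      _ ≤ _ := le_add_of_nonneg_right (by positivity)
  · have hw' : |w| ≤ a := abs_le.2 ⟨by linarith [one_le_driftThreshold c₁], hwa⟩
    exact (h.one_add_abs_mul_tail_le_of_abs_le hw').trans (le_add_of_nonneg_left (by positivity))

lemma exists_one_add_abs_mul_one_sub_tail_le {c₁ : ℝ} (hc₁ : 0 < c₁) (c₃ : ℝ) :
    ∃ K > 0, ∀ g, SteinDrift g c₁ c₃ → ∀ w, w ≤ 1 →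
      (1 + |g w|) * (1 - tail g c₁ w) ≤ K * exp (-Gfun g w) := by
  obtain ⟨K, hK, hmills⟩ := exists_one_add_abs_mul_tail_le hc₁ c₃
  refine ⟨K, hK, fun g h w hw => ?_⟩
  simpa [h.tail_neg_comp_neg, Gfun_neg_comp_neg] using
    hmills _ h.neg_comp_neg (-w) (neg_le_neg hw)

lemma SteinDrift.mul_exp_neg_Gfun_le {g : ℝ → ℝ} {c₁ c₃ : ℝ} (h : SteinDrift g c₁ c₃) (w : ℝ) :
    c₁ * exp (-exp c₃) * exp (-Gfun g w) ≤ (1 + |g w|) * tail g c₁ w := by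
  have hc := h.c₁_pos.le
  set s := 1 + |g w|
  have hs1 : 1 ≤ s := le_add_of_nonneg_right (abs_nonneg _)
  have hs0 : 0 < s := one_pos.trans_le hs1
  have hlower : ∀ y ∈ Set.Icc w (w + 1 / s),
      c₁ * exp (-exp c₃) * exp (-Gfun g w) ≤ pfun g c₁ y := by
    intro y hy
    have hyw : y - w ≤ 1 / s := by linarith [hy.2]
    have hgy : g y ≤ exp c₃ * s := by
      have := h.one_add_abs_le_of_abs_sub_le_one (x := y) (y := w) <|
        abs_le.2 ⟨by linarith [hy.1], hyw.trans ((div_le_one hs0).2 hs1)⟩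
      linarith [le_abs_self (g y)]
    have hmul : g y * (y - w) ≤ exp c₃ := calc
      g y * (y - w) ≤ exp c₃ * s * (1 / s) :=
          mul_le_mul hgy hyw (by linarith [hy.1]) (by positivity)
      _ = exp c₃ := by field_simp
    rw [mul_assoc, ← exp_add, pfun]
    gcongr
    linarith [h.Gfun_sub_le y w]
  have hmass : 1 / s * (c₁ * exp (-exp c₃) * exp (-Gfun g w)) ≤ tail g c₁ w := calc
    _ = ∫ _ in w..w + 1 / s, c₁ * exp (-exp c₃) * exp (-Gfun g w) := by
        rw [intervalIntegral.integral_const, add_sub_cancel_left, smul_eq_mul]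
    _ ≤ ∫ y in w..w + 1 / s, pfun g c₁ y := intervalIntegral.integral_mono_on
        (le_add_of_nonneg_right (by positivity)) (by simp)
        (h.continuous_pfun.intervalIntegrable _ _) hlower
    _ ≤ tail g c₁ w := by rw [← h.tail_sub_tail]; linarith [h.tail_pos (w + 1 / s)]
  rwa [one_div_mul_eq_div, div_le_iff₀' hs0] at hmass

/-- `f` is dominated by a polynomial in `|g|`. -/
def PolyGrowth (g f : ℝ → ℝ) : Prop := ∃ C, 0 ≤ C ∧ ∃ N : ℕ, ∀ w, |f w| ≤ C * (1 + |g w|) ^ N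

namespace PolyGrowth

variable {g f f₁ f₂ : ℝ → ℝ}

lemma of_bounded {C : ℝ} (hf : ∀ w, |f w| ≤ C) : PolyGrowth g f :=
  ⟨C, (abs_nonneg _).trans (hf 0), 0, fun w => by simpa using hf w⟩

lemma const (c : ℝ) : PolyGrowth g fun _ => c := of_bounded fun _ => le_rfl

lemma self : PolyGrowth g g := ⟨1, one_pos.le, 1, fun w => by simp⟩

lemma of_abs_le (hf₁ : PolyGrowth g f₁) (hle : ∀ w, |f w| ≤ |f₁ w|) : PolyGrowth g f :=
  let ⟨C, hC, N, hN⟩ := hf₁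
  ⟨C, hC, N, fun w => (hle w).trans (hN w)⟩

lemma abs (hf : PolyGrowth g f) : PolyGrowth g fun w => |f w| :=
  hf.of_abs_le fun _ => (abs_abs _).le

lemma add (hf₁ : PolyGrowth g f₁) (hf₂ : PolyGrowth g f₂) :
    PolyGrowth g fun w => f₁ w + f₂ w := by
  obtain ⟨C₁, hC₁, N₁, h₁⟩ := hf₁
  obtain ⟨C₂, hC₂, N₂, h₂⟩ := hf₂
  refine ⟨C₁ + C₂, by positivity, max N₁ N₂, fun w => ?_⟩
  have hone : 1 ≤ 1 + |g w| := le_add_of_nonneg_right (abs_nonneg _)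
  calc |f₁ w + f₂ w| ≤ C₁ * (1 + |g w|) ^ N₁ + C₂ * (1 + |g w|) ^ N₂ :=
        (abs_add_le _ _).trans (add_le_add (h₁ w) (h₂ w))
    _ ≤ C₁ * (1 + |g w|) ^ max N₁ N₂ + C₂ * (1 + |g w|) ^ max N₁ N₂ := by
        gcongr
        exacts [le_max_left _ _, le_max_right _ _]
    _ = (C₁ + C₂) * (1 + |g w|) ^ max N₁ N₂ := (add_mul _ _ _).symm

lemma mul (hf₁ : PolyGrowth g f₁) (hf₂ : PolyGrowth g f₂) :
    PolyGrowth g fun w => f₁ w * f₂ w := by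
  obtain ⟨C₁, hC₁, N₁, h₁⟩ := hf₁
  obtain ⟨C₂, hC₂, N₂, h₂⟩ := hf₂
  refine ⟨C₁ * C₂, by positivity, N₁ + N₂, fun w => ?_⟩
  rw [abs_mul, pow_add, mul_mul_mul_comm]
  exact mul_le_mul (h₁ w) (h₂ w) (abs_nonneg _) (by positivity)

lemma sub (hf₁ : PolyGrowth g f₁) (hf₂ : PolyGrowth g f₂) :
    PolyGrowth g fun w => f₁ w - f₂ w := by
  simpa only [neg_one_mul, ← sub_eq_add_neg] using hf₁.add ((const (-1)).mul hf₂)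

lemma pow (hf : PolyGrowth g f) (n : ℕ) : PolyGrowth g fun w => f w ^ n := by
  induction n with
  | zero => simpa only [pow_zero] using const 1
  | succ n ih => simpa only [pow_succ] using ih.mul hf

lemma ite {p : ℝ → Prop} [DecidablePred p] (hf₁ : PolyGrowth g f₁) (hf₂ : PolyGrowth g f₂) :
    PolyGrowth g fun w => if p w then f₁ w else f₂ w := by
  refine (hf₁.abs.add hf₂.abs).of_abs_le fun w => ?_
  rw [abs_of_nonneg (add_nonneg (abs_nonneg (f₁ w)) (abs_nonneg (f₂ w)))]
  split_ifs
  exacts [le_add_of_nonneg_right (abs_nonneg _), le_add_of_nonneg_left (abs_nonneg _)]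

lemma integrable {ν : Measure ℝ} {δ δ₁ δ₂ τ₁ τ₂ d₀ α : ℝ} (hf : PolyGrowth g f)
    (hν : ApproxStein ν g δ δ₁ δ₂ τ₁ τ₂ d₀ α) (hm : Measurable f) : Integrable f ν :=
  let ⟨C, _, N, hN⟩ := hf
  ((hν.integrable_pow N).const_mul C).mono' hm.aestronglyMeasurable (.of_forall hN)

end PolyGrowth

lemma one_add_pow_succ_le {x : ℝ} (hx : 0 ≤ x) (N : ℕ) :
    (1 + x) ^ (N + 1) ≤ x ^ (N + 1) + (N + 1) * (1 + x) ^ N := by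
  induction N with
  | zero => simp [add_comm]
  | succ N ih =>
    have hpow : x ^ (N + 1) ≤ (1 + x) ^ (N + 1) := by gcongr; linarith
    calc (1 + x) ^ (N + 2) ≤ (x ^ (N + 1) + (N + 1) * (1 + x) ^ N) * (1 + x) := by
          rw [pow_succ]; gcongr
      _ = x ^ (N + 2) + x ^ (N + 1) + (N + 1) * (1 + x) ^ (N + 1) := by ring
      _ ≤ x ^ (N + 2) + ((N + 1 : ℕ) + 1) * (1 + x) ^ (N + 1) := by push_cast; linarith

lemma mul_pow_le_mul_pow_succ_add {A ε s : ℝ} (hA : 0 ≤ A) (hε : 0 < ε) (hs : 0 ≤ s) (N : ℕ) :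
    A * s ^ N ≤ ε * s ^ (N + 1) + A * (A / ε) ^ N := by
  rcases le_total s (A / ε) with hle | hge
  · calc A * s ^ N ≤ A * (A / ε) ^ N := by gcongr
      _ ≤ _ := le_add_of_nonneg_left (by positivity)
  · rw [div_le_iff₀' hε] at hge
    calc A * s ^ N ≤ ε * s * s ^ N := by gcongr
      _ = ε * s ^ (N + 1) := by ring
      _ ≤ _ := le_add_of_nonneg_right (by positivity)

lemma exists_half_mul_pow_sub_le {α A : ℝ} (hα0 : 0 ≤ α) (hα1 : α < 1) (hA : 0 ≤ A) (N : ℕ) :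
    ∃ C > 0, ∀ x ≥ 0, (1 - α) / 2 * (1 + x) ^ (N + 1) - C ≤
      x ^ (N + 1) - α * (x + 1) * x ^ N - A * (1 + x) ^ N := by
  have hβ : 0 < 1 - α := by linarith
  set B := (1 - α) * (N + 1) + α + A
  have hB : 0 < B := by positivity
  refine ⟨B * (B / ((1 - α) / 2)) ^ N, by positivity, fun x hx => ?_⟩
  have hbernoulli := mul_le_mul_of_nonneg_left (one_add_pow_succ_le hx N) hβ.le
  have hpow : α * x ^ N ≤ α * (1 + x) ^ N := by gcongr; linarith
  have habsorb := mul_pow_le_mul_pow_succ_add hB.le (half_pos hβ) (show 0 ≤ 1 + x by linarith) N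
  have hB' : B * (1 + x) ^ N =
      (1 - α) * ((N + 1) * (1 + x) ^ N) + α * (1 + x) ^ N + A * (1 + x) ^ N := by ring
  have hsplit : x ^ (N + 1) - α * (x + 1) * x ^ N = (1 - α) * x ^ (N + 1) - α * x ^ N := by ring
  linarith [hB', hsplit]

namespace SteinDrift

variable {g : ℝ → ℝ} {c₁ c₃ x ξ : ℝ}

lemma pow_mul_deriv_le (h : SteinDrift g c₁ c₃) (n : ℕ) (hξ : |ξ - x| ≤ 1) :
    ((2 * n + 1 : ℕ) : ℝ) * g ξ ^ (2 * n) * deriv g ξ ≤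
      (2 * n + 1) * c₃ * exp c₃ ^ (2 * n + 1) * (1 + |g x|) ^ (2 * n + 1) := by
  have hc := h.c₃_pos.le
  have hpow : g ξ ^ (2 * n) ≤ (1 + |g ξ|) ^ (2 * n) := by
    rw [← (even_two_mul n).pow_abs]
    gcongr
    linarith
  have hderiv := (le_abs_self _).trans (h.abs_deriv_le_mul ξ)
  calc ((2 * n + 1 : ℕ) : ℝ) * g ξ ^ (2 * n) * deriv g ξ
      ≤ ((2 * n + 1 : ℕ) : ℝ) * (1 + |g ξ|) ^ (2 * n) * (c₃ * (1 + |g ξ|)) := by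
        have := h.monotone.deriv_nonneg (x := ξ)
        gcongr
    _ = (2 * n + 1) * c₃ * (1 + |g ξ|) ^ (2 * n + 1) := by push_cast; ring
    _ ≤ (2 * n + 1) * c₃ * (exp c₃ * (1 + |g x|)) ^ (2 * n + 1) := by
        gcongr; exact h.one_add_abs_le_of_abs_sub_le_one hξ
    _ = _ := by rw [mul_pow]; ring

end SteinDrift

lemma Admissible.abs_pow_sub_le {g : ℝ → ℝ} {δ₁ δ₂ τ₁ τ₂ d₀ α w r k : ℝ}
    (h : Admissible g δ₁ δ₂ τ₁ τ₂ d₀ α w r k) (n : ℕ) :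
    |g w| ^ (2 * n + 2) - α * (|g w| + 1) * |g w| ^ (2 * n + 1) ≤
      (g w - r) * g w ^ (2 * n + 1) := by
  have hdrift : g w * g w ^ (2 * n + 1) = |g w| ^ (2 * n + 2) := by
    rw [← pow_succ', (show Even (2 * n + 2) from ⟨n + 1, by ring⟩).pow_abs]
  have hremainder : r * g w ^ (2 * n + 1) ≤ α * (|g w| + 1) * |g w| ^ (2 * n + 1) := calc
    r * g w ^ (2 * n + 1) ≤ |r| * |g w| ^ (2 * n + 1) :=
        (le_abs_self _).trans_eq (by rw [abs_mul, abs_pow])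
    _ ≤ _ := by gcongr; exact h.abs_r_le_linear
  rw [sub_mul, hdrift]
  linarith

lemma exists_integral_one_add_abs_even_pow_le (n : ℕ) (c₁ c₃ : ℝ) {d₀ α : ℝ} (hd₀ : 0 ≤ d₀)
    (hα0 : 0 ≤ α) (hα1 : α < 1) :
    ∃ C > 0, ∀ (g : ℝ → ℝ) (ν : Measure ℝ) (δ δ₁ δ₂ τ₁ τ₂ : ℝ), SteinDrift g c₁ c₃ → δ ≤ 1 →
      ApproxStein ν g δ δ₁ δ₂ τ₁ τ₂ d₀ α → ∫ w, (1 + |g w|) ^ (2 * n + 2) ∂ν ≤ C := by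
  have hβ : 0 < 1 - α := by linarith
  obtain ⟨C, hC, hpoly⟩ := exists_half_mul_pow_sub_le hα0 hα1
    (A := (2 * n + 1) * |c₃| * exp c₃ ^ (2 * n + 1) * d₀) (by positivity) (2 * n + 1)
  refine ⟨C / ((1 - α) / 2), by positivity, fun g ν δ δ₁ δ₂ τ₁ τ₂ h hδ hν => ?_⟩
  have := hν.isProbabilityMeasure
  have hg := h.measurable
  have hc := h.c₃_pos
  rw [abs_of_pos hc] at hpoly
  set D : ℝ → ℝ := fun w =>
    (2 * n + 1) * c₃ * exp c₃ ^ (2 * n + 1) * (1 + |g w|) ^ (2 * n + 1) with hD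
  have hstein := hν.integral_nonpos (fun w => g w ^ (2 * n + 1)) _ D
    (fun w => (1 - α) / 2 * (1 + |g w|) ^ (2 * n + 2) - C) (h.continuous.pow _)
    (fun t => ((h.differentiable t).hasDerivAt.pow (2 * n + 1)).hasDerivWithinAt)
    (by fun_prop) ((PolyGrowth.self.pow _).integrable hν (by fun_prop))
    ((hν.integrable_pow _).const_mul _)
    (((hν.integrable_pow _).const_mul _).sub (integrable_const _))
    fun w => ⟨fun ξ hξ => h.pow_mul_deriv_le n (hξ.trans hδ), fun r k ha => ?_⟩
  · rw [integral_sub ((hν.integrable_pow _).const_mul _) (integrable_const _),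
      integral_const_mul, integral_const, probReal_univ, one_smul] at hstein
    rw [le_div_iff₀' (half_pos hβ)]
    linarith
  · have hDk : D w * k ≤ (2 * n + 1) * c₃ * exp c₃ ^ (2 * n + 1) * d₀ *
        (1 + |g w|) ^ (2 * n + 1) :=
      (mul_le_mul_of_nonneg_left ha.k_le (by positivity)).trans_eq (by rw [hD]; ring)
    linarith [hpoly |g w| (abs_nonneg _), ha.abs_pow_sub_le n]

lemma exists_integral_one_add_abs_pow_le (N : ℕ) (c₁ c₃ : ℝ) {d₀ α : ℝ} (hd₀ : 0 ≤ d₀)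
    (hα0 : 0 ≤ α) (hα1 : α < 1) :
    ∃ C > 0, ∀ (g : ℝ → ℝ) (ν : Measure ℝ) (δ δ₁ δ₂ τ₁ τ₂ : ℝ), SteinDrift g c₁ c₃ → δ ≤ 1 →
      ApproxStein ν g δ δ₁ δ₂ τ₁ τ₂ d₀ α → ∫ w, (1 + |g w|) ^ N ∂ν ≤ C := by
  obtain ⟨C, hC, hmoment⟩ := exists_integral_one_add_abs_even_pow_le N c₁ c₃ hd₀ hα0 hα1
  refine ⟨C, hC, fun g ν δ δ₁ δ₂ τ₁ τ₂ h hδ hν =>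
    (integral_mono (hν.integrable_pow N) (hν.integrable_pow (2 * N + 2)) fun w => ?_).trans
      (hmoment g ν δ δ₁ δ₂ τ₁ τ₂ h hδ hν)⟩
  exact pow_le_pow_right₀ (le_add_of_nonneg_right (abs_nonneg _)) (by omega)

/-- The truncation of `w` to the interval `[0, z]`. -/
noncomputable def clamp (z w : ℝ) : ℝ := max 0 (min w z)

lemma continuous_clamp (z : ℝ) : Continuous (clamp z) := by unfold clamp; fun_prop

lemma clamp_nonneg (z w : ℝ) : 0 ≤ clamp z w := le_max_left _ _

lemma clamp_le {z : ℝ} (hz : 0 ≤ z) (w : ℝ) : clamp z w ≤ z := max_le hz (min_le_right _ _)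

lemma clamp_le_of_le {a z w : ℝ} (ha : 0 ≤ a) (hw : w ≤ a) : clamp z w ≤ a :=
  max_le ha ((min_le_left _ _).trans hw)

lemma clamp_of_nonpos {z w : ℝ} (hw : w ≤ 0) : clamp z w = 0 :=
  max_eq_left ((min_le_left _ _).trans hw)

lemma clamp_of_mem {z w : ℝ} (hw : 0 ≤ w) (hwz : w ≤ z) : clamp z w = w := by
  rw [clamp, min_eq_left hwz, max_eq_right hw]

lemma clamp_of_ge {z w : ℝ} (hz : 0 ≤ z) (hzw : z ≤ w) : clamp z w = z := by
  rw [clamp, min_eq_right hzw, max_eq_right hz]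

lemma abs_clamp_sub_clamp_le (z x y : ℝ) : |clamp z x - clamp z y| ≤ |x - y| := by
  have hmax := abs_max_sub_max_le_max 0 (min x z) 0 (min y z)
  have hmin := abs_min_sub_min_le_max x z y z
  simp only [sub_self, abs_zero, abs_nonneg, max_eq_left, max_eq_right] at hmax hmin
  exact hmax.trans hmin

/-- `w ↦ exp (G (w ∧ z))`, flattened on the negative axis: the reciprocal, up to the level `z`, of
the density `exp (-G)`. -/
noncomputable def envelope (g : ℝ → ℝ) (z w : ℝ) : ℝ := exp (Gfun g (clamp z w))

/-- The growth of `1 + g` beyond the level `z`. -/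
noncomputable def growthRatio (g : ℝ → ℝ) (z w : ℝ) : ℝ := (1 + g (max w z)) / (1 + g z)

/-- The test function for exponential moments: the envelope, tilted by `exp (-s w)` to create a
negative drift below the level `z`, and growing like `(1 + g) ^ m` beyond it. -/
noncomputable def tiltedEnvelope (g : ℝ → ℝ) (s z : ℝ) (m : ℕ) (w : ℝ) : ℝ :=
  exp (Gfun g (clamp z w) - s * clamp z w) * growthRatio g z w ^ m

/-- The right derivative of `tiltedEnvelope`. -/
noncomputable def tiltedEnvelopeDeriv (g : ℝ → ℝ) (s z : ℝ) (m : ℕ) (w : ℝ) : ℝ :=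
  if w < 0 then 0 else if w < z then (g w - s) * tiltedEnvelope g s z m w
    else m * deriv g w / (1 + g w) * tiltedEnvelope g s z m w

/-- A rate at which `log (tiltedEnvelope g s z m)` varies, in units of `1 + |g|`. -/
noncomputable def envelopeRate (c₃ : ℝ) (m : ℕ) : ℝ := exp c₃ + 1 + m * c₃

namespace SteinDrift

variable {g : ℝ → ℝ} {c₁ c₃ s z δ w x ξ : ℝ} {m : ℕ}

lemma Gfun_le_Gfun (h : SteinDrift g c₁ c₃) (hx : 0 ≤ x) (hxw : x ≤ w) : Gfun g x ≤ Gfun g w := by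
  have htangent := h.Gfun_add_mul_sub_le w x
  have hslope := mul_nonneg (h.nonneg hx) (sub_nonneg.2 hxw)
  linarith

lemma continuous_envelope (h : SteinDrift g c₁ c₃) (z : ℝ) : Continuous (envelope g z) :=
  (h.continuous_Gfun.comp (continuous_clamp z)).rexp

lemma one_le_envelope (h : SteinDrift g c₁ c₃) (z w : ℝ) : 1 ≤ envelope g z w :=
  one_le_exp (h.Gfun_nonneg _)

lemma envelope_le (h : SteinDrift g c₁ c₃) (hz : 0 ≤ z) (w : ℝ) : envelope g z w ≤ exp (Gfun g z) :=
  exp_le_exp.2 (h.Gfun_le_Gfun (clamp_nonneg _ _) (clamp_le hz _))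

lemma continuous_growthRatio (h : SteinDrift g c₁ c₃) (z : ℝ) : Continuous (growthRatio g z) := by
  have := h.continuous
  unfold growthRatio
  fun_prop

lemma one_le_growthRatio (h : SteinDrift g c₁ c₃) (hz : 0 ≤ z) (w : ℝ) :
    1 ≤ growthRatio g z w := by
  have hgz := h.nonneg hz
  have hmono := h.monotone (le_max_right w z)
  rw [growthRatio, one_le_div (by linarith)]
  linarith

lemma growthRatio_of_le (h : SteinDrift g c₁ c₃) (hz : 0 ≤ z) (hw : w ≤ z) :
    growthRatio g z w = 1 := by
  have hgz := h.nonneg hz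
  rw [growthRatio, max_eq_right hw, div_self (by linarith)]

lemma one_add_abs_le_mul_growthRatio (h : SteinDrift g c₁ c₃) (hz : 0 ≤ z) (hw : 0 ≤ w) :
    1 + |g w| ≤ (1 + g z) * growthRatio g z w := by
  have hgz := h.nonneg hz
  rw [abs_of_nonneg (h.nonneg hw), growthRatio, mul_div_cancel₀ _ (by linarith)]
  exact add_le_add_right (h.monotone (le_max_left w z)) 1

lemma growthRatio_le_exp_mul (h : SteinDrift g c₁ c₃) (hz : 0 ≤ z) (x ξ : ℝ) :
    growthRatio g z ξ ≤ exp (c₃ * |ξ - x|) * growthRatio g z x := by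
  have hc := h.c₃_pos
  have hgz := h.nonneg hz
  have hgrowth := h.one_add_abs_le_exp_mul (max ξ z) (max x z)
  have hmax := abs_max_sub_max_le_max ξ z x z
  rw [sub_self, abs_zero, max_eq_left (abs_nonneg (ξ - x))] at hmax
  have hgξ := h.nonneg (hz.trans (le_max_right ξ z))
  have hgx := h.nonneg (hz.trans (le_max_right x z))
  rw [abs_of_nonneg hgξ, abs_of_nonneg hgx] at hgrowth
  rw [growthRatio, growthRatio, ← mul_div_assoc]
  gcongr
  exact hgrowth.trans (by gcongr)

lemma continuous_tiltedEnvelope (h : SteinDrift g c₁ c₃) (s z : ℝ) (m : ℕ) :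
    Continuous (tiltedEnvelope g s z m) := by
  have hG := h.continuous_Gfun
  have hclamp := continuous_clamp z
  have hratio := h.continuous_growthRatio z
  unfold tiltedEnvelope
  fun_prop

lemma tiltedEnvelope_pos (h : SteinDrift g c₁ c₃) (hz : 0 ≤ z) (w : ℝ) :
    0 < tiltedEnvelope g s z m w := by
  have := h.one_le_growthRatio hz w
  unfold tiltedEnvelope
  positivity

lemma tiltedEnvelope_of_le (h : SteinDrift g c₁ c₃) (hz : 0 ≤ z) (hw : w ≤ z) :
    tiltedEnvelope g s z m w = exp (Gfun g (clamp z w) - s * clamp z w) := by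
  rw [tiltedEnvelope, h.growthRatio_of_le hz hw, one_pow, mul_one]

lemma tiltedEnvelope_of_ge (hz : 0 ≤ z) (hw : z ≤ w) :
    tiltedEnvelope g s z m w = exp (Gfun g z - s * z) * ((1 + g w) / (1 + g z)) ^ m := by
  rw [tiltedEnvelope, clamp_of_ge hz hw, growthRatio, max_eq_left hw]

lemma polyGrowth_tiltedEnvelope (h : SteinDrift g c₁ c₃) (hs : 0 ≤ s) (hz : 0 ≤ z) (m : ℕ) :
    PolyGrowth g (tiltedEnvelope g s z m) := by
  have hgz := h.nonneg hz
  have hexp : PolyGrowth g fun w => exp (Gfun g (clamp z w) - s * clamp z w) := by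
    refine .of_bounded (C := exp (Gfun g z)) fun w => ?_
    rw [abs_of_pos (exp_pos _)]
    refine (exp_le_exp.2 (sub_le_self _ (mul_nonneg hs (clamp_nonneg z w)))).trans
      (h.envelope_le hz w)
  refine hexp.mul (.pow ⟨1 + g z, by linarith, 1, fun w => ?_⟩ m)
  have hratio := h.one_le_growthRatio hz w
  rw [abs_of_pos (by linarith), pow_one]
  have hnum : 1 + g (max w z) ≤ (1 + g z) * (1 + |g w|) := by
    have hcross := mul_nonneg hgz (abs_nonneg (g w))
    rcases max_cases w z with ⟨hmax, -⟩ | ⟨hmax, -⟩ <;> rw [hmax]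
    · linarith [le_abs_self (g w)]
    · linarith [abs_nonneg (g w)]
  refine (div_le_self ?_ (by linarith)).trans hnum
  linarith [h.monotone (le_max_right w z)]

lemma hasDerivWithinAt_tiltedEnvelope_of_neg (h : SteinDrift g c₁ c₃) (hz : 0 ≤ z) (hw : w < 0) :
    HasDerivWithinAt (tiltedEnvelope g s z m) 0 (Set.Ici w) w := by
  have hone : tiltedEnvelope g s z m =ᶠ[nhds w] fun _ => 1 := by
    filter_upwards [gt_mem_nhds hw] with x hx
    rw [h.tiltedEnvelope_of_le hz (hx.le.trans hz), clamp_of_nonpos hx.le, Gfun_zero, mul_zero,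
      sub_zero, exp_zero]
  exact ((hasDerivAt_const w (1 : ℝ)).congr_of_eventuallyEq hone).hasDerivWithinAt

lemma hasDerivWithinAt_tiltedEnvelope_of_lt (h : SteinDrift g c₁ c₃) (hw : 0 ≤ w) (hwz : w < z) :
    HasDerivWithinAt (tiltedEnvelope g s z m) ((g w - s) * tiltedEnvelope g s z m w)
      (Set.Ici w) w := by
  have hexp : ∀ x, 0 ≤ x → x ≤ z → tiltedEnvelope g s z m x = exp (Gfun g x - s * x) :=
    fun x hx hxz => by rw [h.tiltedEnvelope_of_le (hx.trans hxz) hxz, clamp_of_mem hx hxz]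
  have hderiv : HasDerivAt (fun x => exp (Gfun g x - s * x))
      (exp (Gfun g w - s * w) * (g w - s * 1)) w :=
    ((h.hasDerivAt_Gfun w).sub ((hasDerivAt_id w).const_mul s)).exp
  rw [mul_one, mul_comm, ← hexp w hw hwz.le] at hderiv
  refine hderiv.hasDerivWithinAt.congr_of_eventuallyEq ?_ (hexp w hw hwz.le)
  filter_upwards [self_mem_nhdsWithin, mem_nhdsWithin_of_mem_nhds (gt_mem_nhds hwz)] with x hx hxz
  exact hexp x (hw.trans hx) hxz.le

lemma hasDerivWithinAt_tiltedEnvelope_of_ge (h : SteinDrift g c₁ c₃) (hz : 0 ≤ z) (hzw : z ≤ w) :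
    HasDerivWithinAt (tiltedEnvelope g s z m)
      (m * deriv g w / (1 + g w) * tiltedEnvelope g s z m w) (Set.Ici w) w := by
  have hgz := h.nonneg hz
  have hgw := h.nonneg (hz.trans hzw)
  have hderiv : HasDerivAt (fun x => exp (Gfun g z - s * z) * ((1 + g x) / (1 + g z)) ^ m)
      (exp (Gfun g z - s * z) *
        (m * ((1 + g w) / (1 + g z)) ^ (m - 1) * (deriv g w / (1 + g z)))) w :=
    ((((h.differentiable w).hasDerivAt.const_add 1).div_const _).pow m).const_mul _
  have hlog : exp (Gfun g z - s * z) *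
      (m * ((1 + g w) / (1 + g z)) ^ (m - 1) * (deriv g w / (1 + g z))) =
      m * deriv g w / (1 + g w) * tiltedEnvelope g s z m w := by
    rw [tiltedEnvelope_of_ge hz hzw]
    rcases m with _ | m
    · simp
    · have : 1 + g w ≠ 0 := by linarith
      have : 1 + g z ≠ 0 := by linarith
      simp only [Nat.add_sub_cancel, pow_succ]
      field_simp
  rw [hlog] at hderiv
  exact hderiv.hasDerivWithinAt.congr (fun x hx => tiltedEnvelope_of_ge hz (hzw.trans hx))
    (tiltedEnvelope_of_ge hz hzw)

lemma hasDerivWithinAt_tiltedEnvelope (h : SteinDrift g c₁ c₃) (hz : 0 ≤ z) (m : ℕ) (w : ℝ) :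
    HasDerivWithinAt (tiltedEnvelope g s z m) (tiltedEnvelopeDeriv g s z m w) (Set.Ici w) w := by
  unfold tiltedEnvelopeDeriv
  split_ifs with hneg hlt
  · exact h.hasDerivWithinAt_tiltedEnvelope_of_neg hz hneg
  · exact h.hasDerivWithinAt_tiltedEnvelope_of_lt (not_lt.1 hneg) hlt
  · exact h.hasDerivWithinAt_tiltedEnvelope_of_ge hz (not_lt.1 hlt)

lemma Gfun_clamp_sub_le (h : SteinDrift g c₁ c₃) (hδ : δ ≤ 1) (hξ : 0 ≤ ξ) (hd : |ξ - x| ≤ δ) :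
    Gfun g (clamp z ξ) - Gfun g (clamp z x) ≤ exp c₃ * (1 + |g x|) * δ := by
  have hg : g (clamp z ξ) ≤ exp c₃ * (1 + |g x|) := by
    have hmono := h.monotone (clamp_le_of_le (z := z) hξ le_rfl)
    have hgrowth := h.one_add_abs_le_of_abs_sub_le_one (hd.trans hδ)
    linarith [le_abs_self (g ξ)]
  have hsub : clamp z ξ - clamp z x ≤ δ :=
    ((le_abs_self _).trans (abs_clamp_sub_clamp_le z ξ x)).trans hd
  have hδ0 : 0 ≤ δ := (abs_nonneg _).trans hd
  calc Gfun g (clamp z ξ) - Gfun g (clamp z x) ≤ g (clamp z ξ) * (clamp z ξ - clamp z x) :=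
        h.Gfun_sub_le _ _
    _ ≤ g (clamp z ξ) * δ := mul_le_mul_of_nonneg_left hsub (h.nonneg (clamp_nonneg z ξ))
    _ ≤ _ := by gcongr

lemma tiltedEnvelope_le_exp_mul (h : SteinDrift g c₁ c₃) (hs0 : 0 ≤ s) (hs1 : s ≤ 1) (hz : 0 ≤ z)
    (m : ℕ) (hδ : δ ≤ 1) (hξ : 0 ≤ ξ) (hd : |ξ - x| ≤ δ) :
    tiltedEnvelope g s z m ξ ≤
      exp (envelopeRate c₃ m * (δ * (1 + |g x|))) * tiltedEnvelope g s z m x := by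
  have hδ0 : 0 ≤ δ := (abs_nonneg _).trans hd
  have hc := h.c₃_pos
  have hrξ := h.one_le_growthRatio hz ξ
  have hrx := h.one_le_growthRatio hz x
  have htilt : s * (clamp z x - clamp z ξ) ≤ δ := by
    have hclamp := (abs_clamp_sub_clamp_le z ξ x).trans hd
    rw [abs_sub_comm] at hclamp
    exact (mul_le_mul_of_nonneg_left ((le_abs_self _).trans hclamp) hs0).trans
      (mul_le_of_le_one_left hδ0 hs1)
  have hratio : growthRatio g z ξ ^ m ≤ exp (m * (c₃ * δ)) * growthRatio g z x ^ m := by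
    rw [exp_nat_mul, ← mul_pow]
    gcongr
    exact (h.growthRatio_le_exp_mul hz x ξ).trans (by gcongr)
  have hexponent : exp c₃ * (1 + |g x|) * δ + δ + m * (c₃ * δ) ≤
      envelopeRate c₃ m * (δ * (1 + |g x|)) := by
    unfold envelopeRate
    have : 0 ≤ (1 + m * c₃) * (δ * |g x|) := by positivity
    linarith
  calc tiltedEnvelope g s z m ξ
      ≤ exp (exp c₃ * (1 + |g x|) * δ + δ + (Gfun g (clamp z x) - s * clamp z x)) *
          (exp (m * (c₃ * δ)) * growthRatio g z x ^ m) := by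
        unfold tiltedEnvelope
        gcongr
        linarith [h.Gfun_clamp_sub_le (z := z) hδ hξ hd]
    _ = exp (exp c₃ * (1 + |g x|) * δ + δ + m * (c₃ * δ)) * tiltedEnvelope g s z m x := by
        simp only [tiltedEnvelope, exp_add]
        ring
    _ ≤ _ := by
        have := h.tiltedEnvelope_pos (s := s) (m := m) hz x
        gcongr

lemma tiltedEnvelope_le_of_le (h : SteinDrift g c₁ c₃) (hs : 0 ≤ s) {a : ℝ} (ha : 0 ≤ a)
    (hξ : ξ ≤ a) (haz : a ≤ z) : tiltedEnvelope g s z m ξ ≤ exp (exp (c₃ * a) * a) := by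
  rw [h.tiltedEnvelope_of_le (ha.trans haz) (hξ.trans haz)]
  have hG := h.Gfun_le_of_abs_le
    ((abs_of_nonneg (clamp_nonneg z ξ)).trans_le (clamp_le_of_le (z := z) ha hξ))
  exact exp_le_exp.2 ((sub_le_self _ (mul_nonneg hs (clamp_nonneg z ξ))).trans hG)

lemma tiltedEnvelopeDeriv_le_of_lt (h : SteinDrift g c₁ c₃) (hs : 0 ≤ s) {a : ℝ} (ha : 0 ≤ a)
    (hξ : ξ < a) (haz : a ≤ z) :
    tiltedEnvelopeDeriv g s z m ξ ≤ exp (c₃ * a) * exp (exp (c₃ * a) * a) := by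
  rw [tiltedEnvelopeDeriv, if_pos (hξ.trans_le haz)]
  split_ifs with hneg
  · positivity
  · have hgrowth := h.one_add_abs_le_exp ((abs_of_nonneg (not_lt.1 hneg)).trans_le hξ.le)
    have hpos := h.tiltedEnvelope_pos (s := s) (m := m) (ha.trans haz) ξ
    refine mul_le_mul ?_ (h.tiltedEnvelope_le_of_le hs ha hξ.le haz) hpos.le (exp_pos _).le
    linarith [le_abs_self (g ξ)]

lemma mul_deriv_div_le (h : SteinDrift g c₁ c₃) (hz : 0 < z) (hξ : z ≤ ξ) (m : ℕ) :
    m * deriv g ξ / (1 + g ξ) ≤ m * c₃ / z := by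
  have hc := h.c₃_pos
  have hgξ := h.nonneg (hz.le.trans hξ)
  have hderiv := (le_abs_self _).trans (h.abs_deriv_le ξ)
  rw [abs_of_nonneg hgξ, abs_of_nonneg (hz.le.trans hξ)] at hderiv
  rw [div_le_iff₀ (by linarith)]
  calc m * deriv g ξ ≤ m * (c₃ * (1 + g ξ) / z) := by
        gcongr
        exact hderiv.trans (by gcongr; linarith)
    _ = _ := by ring

lemma tiltedEnvelopeDeriv_le_of_ge (h : SteinDrift g c₁ c₃) (hz : 0 < z) (m : ℕ) (hx : z ≤ x)
    (hξ : z ≤ ξ) (hd : |ξ - x| ≤ 1) :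
    tiltedEnvelopeDeriv g s z m ξ ≤ m * c₃ * exp (m * c₃) / z * tiltedEnvelope g s z m x := by
  have hc := h.c₃_pos
  have hu : tiltedEnvelope g s z m ξ ≤ exp (m * c₃) * tiltedEnvelope g s z m x := by
    have hratio : growthRatio g z ξ ≤ exp c₃ * growthRatio g z x := by
      have := h.one_le_growthRatio hz.le x
      refine (h.growthRatio_le_exp_mul hz.le x ξ).trans ?_
      gcongr
      exact mul_le_of_le_one_right hc.le hd
    have := h.one_le_growthRatio hz.le ξ
    rw [tiltedEnvelope, tiltedEnvelope, clamp_of_ge hz.le hx, clamp_of_ge hz.le hξ]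
    calc _ ≤ exp (Gfun g z - s * z) * (exp c₃ * growthRatio g z x) ^ m := by gcongr
      _ = _ := by rw [mul_pow, exp_nat_mul]; ring
  rw [tiltedEnvelopeDeriv, if_neg (by linarith), if_neg (by linarith)]
  calc m * deriv g ξ / (1 + g ξ) * tiltedEnvelope g s z m ξ
      ≤ m * c₃ / z * (exp (m * c₃) * tiltedEnvelope g s z m x) :=
        mul_le_mul (h.mul_deriv_div_le hz hξ m) hu (h.tiltedEnvelope_pos hz.le ξ).le
          (by positivity)
    _ = _ := by ring

lemma tiltedEnvelopeDeriv_le (h : SteinDrift g c₁ c₃) (hz : 0 < z) (hξ : 0 ≤ ξ)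
    (hslope : ∀ y, z ≤ y → m * c₃ / z ≤ g y - s) :
    tiltedEnvelopeDeriv g s z m ξ ≤ (g ξ - s) * tiltedEnvelope g s z m ξ := by
  rw [tiltedEnvelopeDeriv, if_neg (not_lt.2 hξ)]
  split_ifs with hlt
  · exact le_rfl
  · have := h.tiltedEnvelope_pos (s := s) (m := m) hz.le ξ
    rw [not_lt] at hlt
    gcongr
    exact (h.mul_deriv_div_le hz hlt m).trans (hslope ξ hlt)

end SteinDrift

/-- The levels `z` for which each of the three error terms of the moderate deviation theorem is
at most one. -/
structure ModerateRange (g : ℝ → ℝ) (δ δ₁ δ₂ τ₁ τ₂ z : ℝ) : Prop where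
  δ_nonneg : 0 ≤ δ
  δ₁_nonneg : 0 ≤ δ₁
  δ₂_nonneg : 0 ≤ δ₂
  nonneg : 0 ≤ z
  δ_mul_le : δ * z * g z ^ 2 ≤ 1
  δ₁_mul_le : δ₁ * z * g z ^ (τ₁ + 1) ≤ 1
  δ₂_mul_le : δ₂ * z * g z ^ τ₂ ≤ 1

lemma rpow_add_one_le {x τ : ℝ} (hx : 0 ≤ x) (hτ : 0 ≤ τ) : x ^ τ + 1 ≤ 2 * (1 + x) ^ τ := by
  have hpow : x ^ τ ≤ (1 + x) ^ τ := rpow_le_rpow hx (by linarith) hτ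
  have hone : 1 ≤ (1 + x) ^ τ := one_le_rpow (by linarith) hτ
  linarith

lemma mul_rpow_le_div {ε x b y z τ : ℝ} (hε : 0 ≤ ε) (hx : 0 ≤ x) (hb : 0 ≤ b) (hy : 0 ≤ y)
    (hz : 0 < z) (hτ : 0 ≤ τ) (hxy : x ≤ b * y) (hle : ε * z * y ^ τ ≤ 1) :
    ε * x ^ τ ≤ b ^ τ / z := by
  have hpow : x ^ τ ≤ b ^ τ * y ^ τ := by
    rw [← mul_rpow hb hy]
    exact rpow_le_rpow hx hxy hτ
  rw [le_div_iff₀ hz]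
  calc ε * x ^ τ * z ≤ ε * (b ^ τ * y ^ τ) * z := by gcongr
    _ = b ^ τ * (ε * z * y ^ τ) := by ring
    _ ≤ b ^ τ := mul_le_of_le_one_right (rpow_nonneg hb _) hle

lemma add_mul_mul_one_add_mul_le {y δ P K : ℝ} (hy : 0 ≤ y) (hδ0 : 0 ≤ δ) (hδ1 : δ ≤ 1)
    (hP : 0 ≤ P) (hK : 0 ≤ K) :
    (y + K * (δ * (1 + y))) * (1 + P * (δ * (1 + y))) ≤
      y + (P + K + K * P) * (δ * (1 + y) ^ 2) := by
  have hle : δ * (1 + y) ≤ 1 + y := mul_le_of_le_one_left (by positivity) hδ1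
  have hlin : K * (δ * (1 + y)) * 1 ≤ K * (δ * (1 + y)) * (1 + y) := by gcongr; linarith
  have hquad : K * P * (δ * (1 + y)) * (δ * (1 + y)) ≤ K * P * (δ * (1 + y)) * (1 + y) := by gcongr
  have hP' : 0 ≤ P * (δ * (1 + y)) := by positivity
  linarith

namespace Admissible

variable {g : ℝ → ℝ} {δ δ₁ δ₂ τ₁ τ₂ d₀ α w r k : ℝ}

lemma neg_le_of_le (h : Admissible g δ₁ δ₂ τ₁ τ₂ d₀ α w r k) (hα : α ≤ 1) {u C : ℝ} (hu : 0 ≤ u)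
    (huC : u ≤ C) : -(C * (2 + d₀) * (1 + |g w|)) ≤ (g w - r) * u - C * k := by
  have hC := hu.trans huC
  have hd₀ : 0 ≤ d₀ := h.k_nonneg.trans h.k_le
  have hdrift : |g w - r| ≤ 2 * (1 + |g w|) := by
    have hr : |r| ≤ 1 * (|g w| + 1) := h.abs_r_le_linear.trans (by gcongr)
    linarith [abs_sub (g w) r]
  have hmul : |(g w - r) * u| ≤ 2 * (1 + |g w|) * C := by
    rw [abs_mul, abs_of_nonneg hu]
    gcongr
  have hk : C * k ≤ C * d₀ := by gcongr; exact h.k_le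
  have hrest : 0 ≤ C * d₀ * |g w| := by positivity
  linarith [neg_abs_le ((g w - r) * u)]

lemma sub_le_drift (h : Admissible g δ₁ δ₂ τ₁ τ₂ d₀ α w r k) (hgw : 0 ≤ g w) (hδ : 0 ≤ δ)
    (hδ₁ : 0 ≤ δ₁) (hδ₂ : 0 ≤ δ₂) (hτ₁ : 0 ≤ τ₁) (hτ₂ : 0 ≤ τ₂) {a C₀ C₁ : ℝ} (ha0 : 0 ≤ a)
    (ha1 : a ≤ 1) (hC₁ : 0 ≤ C₁) (hC₀ : δ * (1 + g w) ≤ C₀) :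
    a - C₁ * (δ * (1 + g w) ^ 2) - 2 * (1 + C₁ * C₀) * (δ₁ * (1 + g w) ^ (τ₁ + 1)) -
      2 * (δ₂ * (1 + g w) ^ τ₂) ≤ g w - r - (g w + C₁ * (δ * (1 + g w) ^ 2) - a) * k := by
  obtain ⟨-, -, hk, hr, -⟩ := h
  rw [abs_of_nonneg hgw] at hk hr
  set X := 1 + g w
  have hX0 : 0 < X := by linarith
  have hC₀0 : 0 ≤ C₀ := (by positivity : 0 ≤ δ * X).trans hC₀
  have hsq : C₁ * (δ * X ^ 2) ≤ C₁ * C₀ * X := by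
    calc C₁ * (δ * X ^ 2) = C₁ * (δ * X) * X := by ring
      _ ≤ _ := by gcongr
  have hsq0 : 0 ≤ C₁ * (δ * X ^ 2) := by positivity
  have hslope : |g w + C₁ * (δ * X ^ 2) - a| ≤ (1 + C₁ * C₀) * X := by
    rw [abs_le]
    constructor <;> linarith
  have hk' : |k - 1| ≤ δ₁ * (2 * X ^ τ₁) := hk.trans (by gcongr; exact rpow_add_one_le hgw hτ₁)
  have hr' : r ≤ δ₂ * (2 * X ^ τ₂) :=
    (le_abs_self r).trans (hr.trans (by gcongr; exact rpow_add_one_le hgw hτ₂))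
  have hprod : (g w + C₁ * (δ * X ^ 2) - a) * (k - 1) ≤
      2 * (1 + C₁ * C₀) * (δ₁ * X ^ (τ₁ + 1)) := by
    calc _ ≤ |g w + C₁ * (δ * X ^ 2) - a| * |k - 1| := (le_abs_self _).trans_eq (abs_mul _ _)
      _ ≤ (1 + C₁ * C₀) * X * (δ₁ * (2 * X ^ τ₁)) := by gcongr
      _ = _ := by rw [rpow_add hX0, rpow_one]; ring
  linarith

lemma abs_r_le_mul (h : Admissible g δ₁ δ₂ τ₁ τ₂ d₀ α w r k) (hα0 : 0 ≤ α) (hα1 : α < 1)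
    (hτ₂ : 0 ≤ τ₂) (hδ₂ : 0 ≤ δ₂) {γ : ℝ} (hγ : 0 < γ) (hgw : γ ≤ g w)
    (hsmall : δ₂ * ((2 * α / (1 - α)) ^ τ₂ + 1) ≤ γ / 2) : |r| ≤ (1 + α) / 2 * g w := by
  have hβ : 0 < 1 - α := by linarith
  have hg0 : 0 ≤ g w := hγ.le.trans hgw
  obtain ⟨-, -, -, hr, hrlin⟩ := h
  rw [abs_of_nonneg hg0] at hr hrlin
  rcases le_total (2 * α / (1 - α)) (g w) with hlarge | hle
  · rw [div_le_iff₀ hβ] at hlarge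
    linarith
  · have hpow : δ₂ * (g w ^ τ₂ + 1) ≤ δ₂ * ((2 * α / (1 - α)) ^ τ₂ + 1) := by gcongr
    linarith [mul_nonneg hα0 hg0]

end Admissible

namespace SteinDrift

variable {g : ℝ → ℝ} {c₁ c₃ s z δ x ξ C₀ : ℝ} {m : ℕ}

lemma tiltedEnvelope_le_one_add_mul (h : SteinDrift g c₁ c₃) (hs0 : 0 ≤ s) (hs1 : s ≤ 1)
    (hz : 0 ≤ z) (hδ : δ ≤ 1) (hξ : 0 ≤ ξ) (hd : |ξ - x| ≤ δ) (hC₀ : δ * (1 + |g x|) ≤ C₀) :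
    tiltedEnvelope g s z m ξ ≤
      (1 + envelopeRate c₃ m * exp (envelopeRate c₃ m * C₀) * (δ * (1 + |g x|))) *
        tiltedEnvelope g s z m x := by
  have hδ0 : 0 ≤ δ := (abs_nonneg _).trans hd
  have hrate : 0 ≤ envelopeRate c₃ m := by
    have := h.c₃_pos
    unfold envelopeRate
    positivity
  have hpos := h.tiltedEnvelope_pos (s := s) (m := m) hz x
  set t := δ * (1 + |g x|)
  have hexp : exp (envelopeRate c₃ m * t) ≤
      1 + envelopeRate c₃ m * t * exp (envelopeRate c₃ m * t) := by
    have hle := mul_le_mul_of_nonneg_right (add_one_le_exp (-(envelopeRate c₃ m * t)))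
      (exp_pos (envelopeRate c₃ m * t)).le
    rw [← exp_add, neg_add_cancel, exp_zero] at hle
    linarith
  calc tiltedEnvelope g s z m ξ
      ≤ exp (envelopeRate c₃ m * t) * tiltedEnvelope g s z m x :=
        h.tiltedEnvelope_le_exp_mul hs0 hs1 hz m hδ hξ hd
    _ ≤ (1 + envelopeRate c₃ m * t * exp (envelopeRate c₃ m * C₀)) *
          tiltedEnvelope g s z m x := by
        gcongr
        exact hexp.trans (by gcongr)
    _ = _ := by ring

lemma exp_neg_mul_tiltedEnvelope_le (h : SteinDrift g c₁ c₃) (hs0 : 0 ≤ s) (hs1 : s ≤ 1)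
    (hz : 0 ≤ z) (hδ : δ ≤ 1) (hx : 0 ≤ x) (hd : |ξ - x| ≤ δ) (hC₀ : δ * (1 + |g x|) ≤ C₀) :
    exp (-(envelopeRate c₃ m * (exp c₃ * C₀))) * tiltedEnvelope g s z m x ≤
      tiltedEnvelope g s z m ξ := by
  have hδ0 : 0 ≤ δ := (abs_nonneg _).trans hd
  have hrate : 0 ≤ envelopeRate c₃ m := by
    have := h.c₃_pos
    unfold envelopeRate
    positivity
  have hpos := h.tiltedEnvelope_pos (s := s) (m := m) hz ξ
  rw [exp_neg, inv_mul_le_iff₀ (exp_pos _)]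
  refine (h.tiltedEnvelope_le_exp_mul hs0 hs1 hz m hδ hx ((abs_sub_comm _ _).trans_le hd)).trans
    (mul_le_mul_of_nonneg_right (exp_le_exp.2 (mul_le_mul_of_nonneg_left ?_ hrate)) hpos.le)
  calc δ * (1 + |g ξ|) ≤ δ * (exp c₃ * (1 + |g x|)) := by
        gcongr; exact h.one_add_abs_le_of_abs_sub_le_one (hd.trans hδ)
    _ = exp c₃ * (δ * (1 + |g x|)) := by ring
    _ ≤ _ := by gcongr

lemma exists_tiltedEnvelopeDeriv_le (m : ℕ) {c₃ : ℝ} (hc₃ : 0 < c₃) (C₀ : ℝ) :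
    ∃ C₁ > 0, ∃ q > 0, ∀ {g : ℝ → ℝ} {c₁ s z δ x ξ : ℝ}, SteinDrift g c₁ c₃ → 0 ≤ s →
      s ≤ 1 → 0 < z → δ ≤ 1 → 1 ≤ x → |ξ - x| ≤ δ → δ * (1 + g x) ≤ C₀ →
      (∀ y, z ≤ y → m * c₃ / z ≤ g y - s) →
      tiltedEnvelopeDeriv g s z m ξ ≤
        (g x + C₁ * (δ * (1 + g x) ^ 2) - q * s) * tiltedEnvelope g s z m x := by
  have hrate : 0 < envelopeRate c₃ m := by unfold envelopeRate; positivity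
  set P := envelopeRate c₃ m * exp (envelopeRate c₃ m * C₀)
  set K := c₃ * exp c₃
  have hP : 0 < P := by positivity
  have hK : 0 < K := by positivity
  refine ⟨P + K + K * P, by positivity, exp (-(envelopeRate c₃ m * (exp c₃ * C₀))), exp_pos _,
    ?_⟩
  intro g c₁ s z δ x ξ h hs0 hs1 hz hδ hx hd hCx hslope
  have hδ0 : 0 ≤ δ := (abs_nonneg _).trans hd
  have hξ : 0 ≤ ξ := by linarith [(abs_le.1 hd).1]
  have hgx := h.nonneg (zero_le_one.trans hx)
  rw [← abs_of_nonneg hgx] at hCx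
  have hupper := h.tiltedEnvelope_le_one_add_mul (m := m) hs0 hs1 hz.le hδ hξ hd hCx
  have hlower := h.exp_neg_mul_tiltedEnvelope_le (m := m) hs0 hs1 hz.le hδ (by linarith) hd hCx
  rw [abs_of_nonneg hgx] at hupper
  set t := δ * (1 + g x)
  have hgξ : g ξ ≤ g x + K * t := by
    have hlip := h.abs_sub_le (hd.trans hδ)
    rw [abs_of_nonneg hgx] at hlip
    have : K * (1 + g x) * |ξ - x| ≤ K * (1 + g x) * δ := by gcongr
    linarith [le_abs_self (g ξ - g x)]
  have hu := h.tiltedEnvelope_pos (s := s) (m := m) hz.le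
  have hu₀ := (hu x).le
  have hquad := add_mul_mul_one_add_mul_le hgx hδ0 hδ hP.le hK.le
  calc tiltedEnvelopeDeriv g s z m ξ ≤ g ξ * tiltedEnvelope g s z m ξ -
        s * tiltedEnvelope g s z m ξ :=
        (h.tiltedEnvelopeDeriv_le hz hξ hslope).trans_eq (sub_mul _ _ _)
    _ ≤ (g x + K * t) * ((1 + P * t) * tiltedEnvelope g s z m x) -
        s * (exp (-(envelopeRate c₃ m * (exp c₃ * C₀))) * tiltedEnvelope g s z m x) := by
        have := (hu ξ).le
        gcongr
    _ = ((g x + K * t) * (1 + P * t) - exp (-(envelopeRate c₃ m * (exp c₃ * C₀))) * s) *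
        tiltedEnvelope g s z m x := by ring
    _ ≤ _ := by gcongr

end SteinDrift

section DriftMajorants

variable {g f f' : ℝ → ℝ} {c₁ c₃ s z δ δ₁ δ₂ τ₁ τ₂ d₀ α x φ ψ d : ℝ} {m : ℕ}

lemma IsDriftMajorant.mono (h : IsDriftMajorant g δ δ₁ δ₂ τ₁ τ₂ d₀ α f f' x φ d) (hle : ψ ≤ φ) :
    IsDriftMajorant g δ δ₁ δ₂ τ₁ τ₂ d₀ α f f' x ψ d :=
  ⟨h.1, fun r k ha => hle.trans (h.2 r k ha)⟩

lemma SteinDrift.isDriftMajorant_of_lt (h : SteinDrift g c₁ c₃) (hs : 0 ≤ s) {a : ℝ} (ha : 0 ≤ a)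
    (haz : a + 1 ≤ z) (hδ : δ ≤ 1) (hα : α ≤ 1) (hx : x < a) :
    IsDriftMajorant g δ δ₁ δ₂ τ₁ τ₂ d₀ α (tiltedEnvelope g s z m) (tiltedEnvelopeDeriv g s z m) x
      (-(exp (c₃ * (a + 1)) * exp (exp (c₃ * (a + 1)) * (a + 1)) * (2 + d₀) * (1 + |g x|)))
      (exp (c₃ * (a + 1)) * exp (exp (c₃ * (a + 1)) * (a + 1))) := by
  refine ⟨fun ξ hξ => h.tiltedEnvelopeDeriv_le_of_lt hs (by positivity)
    (by linarith [(abs_le.1 hξ).2]) haz, fun r k hrk => hrk.neg_le_of_le hα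
    (h.tiltedEnvelope_pos (by linarith) x).le ?_⟩
  have hone : 1 ≤ exp (c₃ * (a + 1)) := one_le_exp (by have := h.c₃_pos; positivity)
  exact (h.tiltedEnvelope_le_of_le hs (by positivity) (by linarith) haz).trans
    (le_mul_of_one_le_left (exp_pos _).le hone)

/- Each error term is at most a constant over `z`, so a tilt of size `a / z` with `a` larger than
the sum of these constants leaves a drift of at least `1 / z`. -/
lemma ModerateRange.isDriftMajorant (hrange : ModerateRange g δ δ₁ δ₂ τ₁ τ₂ z) (hz : 0 < z)
    (hgz : 0 ≤ g z) (hτ₁ : 0 ≤ τ₁) (hτ₂ : 0 ≤ τ₂) {a b C₀ C₁ : ℝ} (hb : 0 ≤ b) (hC₁ : 0 ≤ C₁)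
    (hgx : 0 ≤ g x) (hxb : 1 + g x ≤ b * g z) (hC₀ : δ * (1 + g x) ≤ C₀) (haz : a ≤ z)
    (ha : 1 + C₁ * b ^ 2 + 2 * (1 + C₁ * C₀) * b ^ (τ₁ + 1) + 2 * b ^ τ₂ ≤ a) (hf : 0 ≤ f x)
    (hslope : ∀ ξ, |ξ - x| ≤ δ → f' ξ ≤ (g x + C₁ * (δ * (1 + g x) ^ 2) - a / z) * f x) :
    IsDriftMajorant g δ δ₁ δ₂ τ₁ τ₂ d₀ α f f' x (f x / z)
      ((g x + C₁ * (δ * (1 + g x) ^ 2) - a / z) * f x) := by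
  have hδ := hrange.δ_nonneg
  have hC₀0 : 0 ≤ C₀ := (by positivity : 0 ≤ δ * (1 + g x)).trans hC₀
  have ha0 : 0 ≤ a := le_trans (by positivity) ha
  have hsq : δ * (1 + g x) ^ 2 ≤ b ^ 2 / z := by
    simpa only [rpow_two] using mul_rpow_le_div (τ := 2) hδ (by linarith) hb hgz hz two_pos.le hxb
      (by simpa only [rpow_two] using hrange.δ_mul_le)
  have hvar := mul_rpow_le_div hrange.δ₁_nonneg (by linarith) hb hgz hz (by linarith) hxb
    hrange.δ₁_mul_le
  have hrem := mul_rpow_le_div hrange.δ₂_nonneg (by linarith) hb hgz hz hτ₂ hxb hrange.δ₂_mul_le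
  have hmargin : 1 / z ≤ a / z - C₁ * (δ * (1 + g x) ^ 2) -
      2 * (1 + C₁ * C₀) * (δ₁ * (1 + g x) ^ (τ₁ + 1)) - 2 * (δ₂ * (1 + g x) ^ τ₂) := calc
    1 / z ≤ (a - C₁ * b ^ 2 - 2 * (1 + C₁ * C₀) * b ^ (τ₁ + 1) - 2 * b ^ τ₂) / z := by
        gcongr; linarith
    _ = a / z - C₁ * (b ^ 2 / z) - 2 * (1 + C₁ * C₀) * (b ^ (τ₁ + 1) / z) -
        2 * (b ^ τ₂ / z) := by ring
    _ ≤ _ := by gcongr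
  refine ⟨hslope, fun r k hrk => ?_⟩
  have hdrift := hrk.sub_le_drift hgx hδ hrange.δ₁_nonneg hrange.δ₂_nonneg hτ₁ hτ₂
    (div_nonneg ha0 hz.le) ((div_le_one hz).2 haz) hC₁ hC₀
  calc f x / z = 1 / z * f x := (one_div_mul_eq_div _ _).symm
    _ ≤ (g x - r - (g x + C₁ * (δ * (1 + g x) ^ 2) - a / z) * k) * f x := by
        gcongr; exact hmargin.trans hdrift
    _ = _ := by ring

lemma SteinDrift.isDriftMajorant_of_ge (h : SteinDrift g c₁ c₃) (hα0 : 0 ≤ α) (hα1 : α < 1)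
    (hτ₂ : 0 ≤ τ₂) (hδ : δ ≤ 1) (hδ₂ : 0 ≤ δ₂)
    (hsmall : δ₂ * ((2 * α / (1 - α)) ^ τ₂ + 1) ≤ driftFloor c₁ / 2) (hz : driftThreshold c₁ ≤ z)
    (hlarge : m * c₃ * exp (m * c₃) * d₀ + 1 ≤ (1 - α) / 2 * driftFloor c₁ * z)
    (hx : z + 1 < x) :
    IsDriftMajorant g δ δ₁ δ₂ τ₁ τ₂ d₀ α (tiltedEnvelope g s z m) (tiltedEnvelopeDeriv g s z m) x
      (tiltedEnvelope g s z m x / z)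
      (m * c₃ * exp (m * c₃) / z * tiltedEnvelope g s z m x) := by
  have hz0 : 0 < z := (driftThreshold_pos c₁).trans_le hz
  have hu := (h.tiltedEnvelope_pos (s := s) (m := m) hz0.le x).le
  have hc := h.c₃_pos
  have hfloor := h.driftFloor_le (hz.trans (by linarith : z ≤ x))
  set C := m * c₃ * exp (m * c₃)
  refine ⟨fun ξ hξ => h.tiltedEnvelopeDeriv_le_of_ge hz0 m (by linarith)
    (by linarith [(abs_le.1 hξ).1]) (hξ.trans hδ), fun r k hrk => ?_⟩
  have hr := (le_abs_self r).trans
    (hrk.abs_r_le_mul hα0 hα1 hτ₂ hδ₂ (driftFloor_pos h.c₁_pos) hfloor hsmall)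
  have hmargin : 1 / z ≤ g x - r - C / z * k := by
    have hk : C / z * k ≤ C / z * d₀ := by gcongr; exact hrk.k_le
    have hdiv : (C * d₀ + 1) / z ≤ (1 - α) / 2 * driftFloor c₁ := (div_le_iff₀ hz0).2 hlarge
    have hg : (1 - α) / 2 * driftFloor c₁ ≤ (1 - α) / 2 * g x :=
      mul_le_mul_of_nonneg_left hfloor (by linarith)
    rw [add_div, mul_div_right_comm] at hdiv
    linarith
  calc tiltedEnvelope g s z m x / z = 1 / z * tiltedEnvelope g s z m x :=
        (one_div_mul_eq_div _ _).symm
    _ ≤ (g x - r - C / z * k) * tiltedEnvelope g s z m x := by gcongr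
    _ = _ := by ring

lemma SteinDrift.one_add_le_mul_of_le_add_one (h : SteinDrift g c₁ c₃)
    (hz : driftThreshold c₁ ≤ z) (hx : x ≤ z + 1) :
    1 + g x ≤ exp c₃ * (1 / driftFloor c₁ + 1) * g z := calc
  1 + g x ≤ 1 + |g (z + 1)| := by gcongr; exact (h.monotone hx).trans (le_abs_self _)
  _ ≤ exp c₃ * (1 + |g z|) := h.one_add_abs_le_of_abs_sub_le_one (by simp)
  _ ≤ exp c₃ * ((1 / driftFloor c₁ + 1) * g z) := by gcongr; exact h.one_add_abs_le_mul hz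
  _ = _ := (mul_assoc _ _ _).symm

lemma ModerateRange.mul_one_add_le_div (hrange : ModerateRange g δ δ₁ δ₂ τ₁ τ₂ z) {b γ : ℝ}
    (hγ : 0 < γ) (hgz : γ ≤ g z) (hz : 1 ≤ z) (hxb : 1 + g x ≤ b * g z) (hb : 0 ≤ b) :
    δ * (1 + g x) ≤ b / γ := by
  have hδ0 := hrange.δ_nonneg
  have hgz0 : 0 ≤ g z := hγ.le.trans hgz
  rw [le_div_iff₀ hγ]
  calc δ * (1 + g x) * γ ≤ δ * (b * g z) * g z := by gcongr
    _ = b * (δ * 1 * g z ^ 2) := by ring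
    _ ≤ b * (δ * z * g z ^ 2) := by gcongr
    _ ≤ b := mul_le_of_le_one_right hb hrange.δ_mul_le

lemma exists_eventually_isDriftMajorant (m : ℕ) {c₁ c₃ τ₁ τ₂ : ℝ} (hc₁ : 0 < c₁) (hc₃ : 0 < c₃)
    (hτ₁ : 0 ≤ τ₁) (hτ₂ : 0 ≤ τ₂) :
    ∃ κ > 0, ∃ a C : ℝ, ∀ᶠ z in Filter.atTop, ∀ {g : ℝ → ℝ} {δ δ₁ δ₂ d₀ α x : ℝ},
      SteinDrift g c₁ c₃ → δ ≤ 1 → ModerateRange g δ δ₁ δ₂ τ₁ τ₂ z → driftThreshold c₁ ≤ x →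
      x ≤ z + 1 → IsDriftMajorant g δ δ₁ δ₂ τ₁ τ₂ d₀ α (tiltedEnvelope g (κ / z) z m)
        (tiltedEnvelopeDeriv g (κ / z) z m) x (tiltedEnvelope g (κ / z) z m x / z)
        ((g x + C * (δ * (1 + g x) ^ 2) - a / z) * tiltedEnvelope g (κ / z) z m x) := by
  have hγ := driftFloor_pos hc₁
  set γ := driftFloor c₁
  set b := exp c₃ * (1 / γ + 1)
  have hb : 0 < b := by positivity
  obtain ⟨C₁, hC₁, q, hq, hderiv⟩ :=
    SteinDrift.exists_tiltedEnvelopeDeriv_le m hc₃ (b / γ)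
  set a := 1 + C₁ * b ^ 2 + 2 * (1 + C₁ * (b / γ)) * b ^ (τ₁ + 1) + 2 * b ^ τ₂
  have ha : 0 < a := by positivity
  refine ⟨a / q, by positivity, a, C₁, ?_⟩
  filter_upwards [Filter.eventually_ge_atTop (a / q), Filter.eventually_ge_atTop a,
    Filter.eventually_ge_atTop (driftThreshold c₁),
    Filter.eventually_ge_atTop ((m * c₃ + a / q) / γ)] with z hκz haz hthr hlarge
  intro g δ δ₁ δ₂ d₀ α x h hδ hrange hx hxz
  have hz0 : 0 < z := (driftThreshold_pos c₁).trans_le hthr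
  have hgz : γ ≤ g z := h.driftFloor_le hthr
  have hgz0 : 0 ≤ g z := hγ.le.trans hgz
  have hx1 := (one_le_driftThreshold c₁).trans hx
  have hgx : 0 ≤ g x := h.nonneg (by linarith)
  have hxb := h.one_add_le_mul_of_le_add_one hthr hxz
  have hδg := hrange.mul_one_add_le_div hγ hgz ((one_le_driftThreshold c₁).trans hthr) hxb hb.le
  refine hrange.isDriftMajorant hz0 hgz0 hτ₁ hτ₂ hb.le hC₁.le hgx hxb hδg haz le_rfl
    (h.tiltedEnvelope_pos hz0.le x).le fun ξ hξ => ?_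
  have hslope : ∀ y, z ≤ y → m * c₃ / z ≤ g y - a / q / z := fun y hy => by
    have hy' := hgz.trans (h.monotone hy)
    rw [div_le_iff₀ hγ] at hlarge
    rw [le_sub_iff_add_le, ← add_div, div_le_iff₀ hz0]
    exact hlarge.trans (by rw [mul_comm]; gcongr)
  have hle := hderiv h (by positivity) ((div_le_one hz0).2 hκz) hz0 hδ hx1 hξ hδg hslope
  rwa [show q * (a / q / z) = a / z by field_simp] at hle

end DriftMajorants

lemma ApproxStein.integral_indicator_le {ν : Measure ℝ} {g f f' D₁ D₂ : ℝ → ℝ}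
    {δ δ₁ δ₂ τ₁ τ₂ d₀ α a b z A c : ℝ} (hν : ApproxStein ν g δ δ₁ δ₂ τ₁ τ₂ d₀ α)
    (hf : Continuous f)
    (hf' : ∀ x, HasDerivWithinAt f (f' x) (Set.Ici x) x) (hfp : PolyGrowth g f)
    (hD₁ : Measurable D₁) (hD₁p : PolyGrowth g D₁) (hD₂ : Measurable D₂) (hD₂p : PolyGrowth g D₂)
    (hz : 0 < z) (hA : 0 ≤ A)
    (hlow : ∀ x < a, IsDriftMajorant g δ δ₁ δ₂ τ₁ τ₂ d₀ α f f' x (-(A * (1 + |g x|))) c)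
    (hmid : ∀ x, a ≤ x → x ≤ b → IsDriftMajorant g δ δ₁ δ₂ τ₁ τ₂ d₀ α f f' x (f x / z) (D₁ x))
    (hhigh : ∀ x, b < x → IsDriftMajorant g δ δ₁ δ₂ τ₁ τ₂ d₀ α f f' x (f x / z) (D₂ x)) :
    ∫ w in Set.Ici a, f w ∂ν ≤ A * z * ∫ w, (1 + |g w|) ∂ν := by
  have hfi : Integrable f ν := hfp.integrable hν hf.measurable
  have hgi : Integrable (fun w => 1 + |g w|) ν := by simpa only [pow_one] using hν.integrable_pow 1
  have hindi : Integrable ((Set.Ici a).indicator fun w => f w / z) ν :=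
    (hfi.div_const z).indicator measurableSet_Ici
  set D : ℝ → ℝ := fun x => if x < a then c else if x ≤ b then D₁ x else D₂ x
  have hD : Measurable D := measurable_const.ite measurableSet_Iio (hD₁.ite measurableSet_Iic hD₂)
  have hDp : PolyGrowth g D := (PolyGrowth.const c).ite (hD₁p.ite hD₂p)
  have hstein := hν.integral_nonpos f f' D
    (fun w => (Set.Ici a).indicator (fun w => f w / z) w - A * (1 + |g w|)) hf hf' hD hfi
    (hDp.integrable hν hD) (hindi.sub (hgi.const_mul A)) fun x => ?_
  · rw [integral_sub hindi (hgi.const_mul A), integral_indicator measurableSet_Ici, integral_div,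
      integral_const_mul, sub_nonpos, div_le_iff₀ hz] at hstein
    linarith
  have hsub : ∀ y : ℝ, y - A * (1 + |g x|) ≤ y := fun y => sub_le_self _ (by positivity)
  simp only [D]
  split_ifs with hxa hxb
  · rw [Set.indicator_of_notMem (by simpa using hxa), zero_sub]
    exact hlow x hxa
  · rw [Set.indicator_of_mem (by simpa using hxa)]
    exact (hmid x (not_lt.1 hxa) hxb).mono (hsub _)
  · rw [Set.indicator_of_mem (by simpa using hxa)]
    exact (hhigh x (not_le.1 hxb)).mono (hsub _)

lemma exists_eventually_setIntegral_tiltedEnvelope_le (m : ℕ) {c₁ c₃ d₀ τ₁ τ₂ α : ℝ} (hc₁ : 0 < c₁)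
    (hc₃ : 0 < c₃) (hd₀ : 0 ≤ d₀) (hτ₁ : 0 ≤ τ₁) (hτ₂ : 0 ≤ τ₂) (hα0 : 0 ≤ α) (hα1 : α < 1) :
    ∃ κ > 0, ∃ η > 0, ∃ C > 0, ∀ᶠ z in Filter.atTop, ∀ {g : ℝ → ℝ} {ν : Measure ℝ} {δ δ₁ δ₂ : ℝ},
      SteinDrift g c₁ c₃ → δ ≤ 1 → δ₂ ≤ η → ApproxStein ν g δ δ₁ δ₂ τ₁ τ₂ d₀ α →
      ModerateRange g δ δ₁ δ₂ τ₁ τ₂ z →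
      ∫ w in Set.Ici (driftThreshold c₁), tiltedEnvelope g (κ / z) z m w ∂ν ≤ C * z := by
  have hγ := driftFloor_pos hc₁
  have hthr := driftThreshold_pos c₁
  obtain ⟨κ, hκ, a, C₁, hmid⟩ := exists_eventually_isDriftMajorant m hc₁ hc₃ hτ₁ hτ₂
  obtain ⟨M, hM, hmoment⟩ := exists_integral_one_add_abs_pow_le 1 c₁ c₃ hd₀ hα0 hα1
  set T := driftThreshold c₁ + 1
  set A := exp (c₃ * T) * exp (exp (c₃ * T) * T) * (2 + d₀)
  set P := (2 * α / (1 - α)) ^ τ₂ + 1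
  refine ⟨κ, hκ, driftFloor c₁ / 2 / P, by positivity, A * M, by positivity, ?_⟩
  filter_upwards [hmid, Filter.eventually_ge_atTop T, Filter.eventually_ge_atTop
    ((m * c₃ * exp (m * c₃) * d₀ + 1) / ((1 - α) / 2 * driftFloor c₁))] with z hmid hTz hlarge
  intro g ν δ δ₁ δ₂ h hδ hδ₂ hν hrange
  have hzthr : driftThreshold c₁ ≤ z := by linarith
  have hz : 0 < z := by linarith
  rw [div_le_iff₀' (by positivity)] at hlarge
  rw [le_div_iff₀ (by positivity)] at hδ₂
  have hf := h.continuous_tiltedEnvelope (κ / z) z m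
  have hfp := h.polyGrowth_tiltedEnvelope (s := κ / z) (by positivity) hz.le m
  have hg := h.measurable
  have hsq : PolyGrowth g fun x => (1 + g x) ^ 2 := ((PolyGrowth.const 1).add PolyGrowth.self).pow 2
  have hcoef : PolyGrowth g fun x => g x + C₁ * (δ * (1 + g x) ^ 2) - a / z :=
    (PolyGrowth.self.add ((PolyGrowth.const C₁).mul ((PolyGrowth.const δ).mul hsq))).sub
      (PolyGrowth.const _)
  have hstein := hν.integral_indicator_le hf (h.hasDerivWithinAt_tiltedEnvelope hz.le m) hfp
    (by fun_prop) (hcoef.mul hfp) (hf.measurable.const_mul _) ((PolyGrowth.const _).mul hfp) hz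
    (by positivity : 0 ≤ A)
    (fun x hx => h.isDriftMajorant_of_lt (by positivity) hthr.le hTz hδ hα1.le hx)
    (fun x hx hxz => hmid h hδ hrange hx hxz)
    (fun x hx => h.isDriftMajorant_of_ge hα0 hα1 hτ₂ hδ hrange.δ₂_nonneg hδ₂ hzthr hlarge hx)
  have hM' := hmoment g ν δ δ₁ δ₂ τ₁ τ₂ h hδ hν
  simp only [pow_one] at hM'
  exact hstein.trans ((mul_le_mul_of_nonneg_left hM' (by positivity)).trans_eq (by ring))

lemma rpow_le_pow_of_le {x k : ℝ} {m : ℕ} (hx : 1 ≤ x) (hk : k ≤ m) : x ^ k ≤ x ^ m := by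
  rw [← rpow_natCast]
  exact rpow_le_rpow_of_exponent_le hx hk

namespace SteinDrift

variable {g : ℝ → ℝ} {c₁ c₃ κ z w a k : ℝ} {m : ℕ}

lemma envelope_le_of_le (h : SteinDrift g c₁ c₃) (haw : clamp z w ≤ a) :
    envelope g z w ≤ exp (exp (c₃ * a) * a) :=
  exp_le_exp.2 (h.Gfun_le_of_abs_le (by rwa [abs_of_nonneg (clamp_nonneg z w)]))

lemma rpow_mul_envelope_le_of_le (h : SteinDrift g c₁ c₃) (hk : k ≤ m)
    (haw : clamp z w ≤ a) :
    (1 + |g w|) ^ k * envelope g z w ≤ exp (exp (c₃ * a) * a) * (1 + |g w|) ^ m := by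
  have hone : 1 ≤ 1 + |g w| := le_add_of_nonneg_right (abs_nonneg _)
  rw [mul_comm]
  exact mul_le_mul (h.envelope_le_of_le haw) (rpow_le_pow_of_le hone hk) (by positivity)
    (exp_pos _).le

lemma rpow_mul_envelope_le_mul_tiltedEnvelope (h : SteinDrift g c₁ c₃) (hk0 : 0 ≤ k) (hk : k ≤ m)
    (hκ : 0 ≤ κ) (hz : 0 < z) (hw : 0 ≤ w) :
    (1 + |g w|) ^ k * envelope g z w ≤
      (1 + g z) ^ k * (exp κ * tiltedEnvelope g (κ / z) z m w) := by
  have hgz := h.nonneg hz.le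
  have hρ := h.one_le_growthRatio hz.le w
  have hpow : (1 + |g w|) ^ k ≤ (1 + g z) ^ k * growthRatio g z w ^ m := calc
    (1 + |g w|) ^ k ≤ ((1 + g z) * growthRatio g z w) ^ k :=
        rpow_le_rpow (by positivity) (h.one_add_abs_le_mul_growthRatio hz.le hw) hk0
    _ = (1 + g z) ^ k * growthRatio g z w ^ k := mul_rpow (by linarith) (by linarith)
    _ ≤ _ := by gcongr; exact rpow_le_pow_of_le hρ hk
  have htilt : envelope g z w ≤ exp κ * exp (Gfun g (clamp z w) - κ / z * clamp z w) := by
    have hclamp : κ / z * clamp z w ≤ κ := by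
      rw [div_mul_eq_mul_div, div_le_iff₀ hz]
      exact mul_le_mul_of_nonneg_left (clamp_le hz.le w) hκ
    rw [← exp_add]
    exact exp_le_exp.2 (by linarith)
  calc (1 + |g w|) ^ k * envelope g z w
      ≤ (1 + g z) ^ k * growthRatio g z w ^ m *
          (exp κ * exp (Gfun g (clamp z w) - κ / z * clamp z w)) :=
        mul_le_mul hpow htilt (exp_pos _).le (by positivity)
    _ = _ := by unfold tiltedEnvelope; ring

lemma polyGrowth_rpow_mul_envelope (h : SteinDrift g c₁ c₃) (hk : k ≤ m) (hz : 0 ≤ z) :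
    PolyGrowth g fun w => (1 + |g w|) ^ k * envelope g z w :=
  ⟨exp (exp (c₃ * z) * z), (exp_pos _).le, m, fun w =>
    (abs_of_nonneg (mul_nonneg (rpow_nonneg (by positivity) _) (exp_pos _).le)).trans_le
      (h.rpow_mul_envelope_le_of_le hk (clamp_le hz w))⟩

lemma integrable_rpow_mul_envelope (h : SteinDrift g c₁ c₃) {ν : Measure ℝ}
    {δ δ₁ δ₂ τ₁ τ₂ d₀ α : ℝ} (hν : ApproxStein ν g δ δ₁ δ₂ τ₁ τ₂ d₀ α) (hk : k ≤ m) (hz : 0 ≤ z) :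
    Integrable (fun w => (1 + |g w|) ^ k * envelope g z w) ν := by
  have hg := h.measurable
  have henv := (h.continuous_envelope z).measurable
  exact (h.polyGrowth_rpow_mul_envelope hk hz).integrable hν (by fun_prop)

lemma integral_rpow_mul_envelope_le_of_le (h : SteinDrift g c₁ c₃) {ν : Measure ℝ}
    {δ δ₁ δ₂ τ₁ τ₂ d₀ α : ℝ} (hν : ApproxStein ν g δ δ₁ δ₂ τ₁ τ₂ d₀ α) (hk : k ≤ m) (hz : 0 ≤ z)
    (hza : z ≤ a) : ∫ w, (1 + |g w|) ^ k * envelope g z w ∂ν ≤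
      exp (exp (c₃ * a) * a) * ∫ w, (1 + |g w|) ^ m ∂ν := by
  rw [← integral_const_mul]
  exact integral_mono (h.integrable_rpow_mul_envelope hν hk hz)
    ((hν.integrable_pow m).const_mul _) fun w =>
      h.rpow_mul_envelope_le_of_le hk ((clamp_le hz w).trans hza)

lemma integral_rpow_mul_envelope_le (h : SteinDrift g c₁ c₃) {ν : Measure ℝ}
    {δ δ₁ δ₂ τ₁ τ₂ d₀ α : ℝ} (hν : ApproxStein ν g δ δ₁ δ₂ τ₁ τ₂ d₀ α) (hk0 : 0 ≤ k) (hk : k ≤ m)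
    (hκ : 0 ≤ κ) (hz : 0 < z) (ha : 0 ≤ a) :
    ∫ w, (1 + |g w|) ^ k * envelope g z w ∂ν ≤
      (1 + g z) ^ k * (exp κ * ∫ w in Set.Ici a, tiltedEnvelope g (κ / z) z m w ∂ν +
        exp (exp (c₃ * a) * a) * ∫ w, (1 + |g w|) ^ m ∂ν) := by
  have hpowi := hν.integrable_pow m
  have htilti : Integrable ((Set.Ici a).indicator (tiltedEnvelope g (κ / z) z m)) ν :=
    ((h.polyGrowth_tiltedEnvelope (by positivity) hz.le m).integrable hν
      (h.continuous_tiltedEnvelope _ z m).measurable).indicator measurableSet_Ici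
  have hgz := h.nonneg hz.le
  have hgz1 : 1 ≤ (1 + g z) ^ k := one_le_rpow (by linarith) hk0
  rw [← integral_indicator measurableSet_Ici, ← integral_const_mul, ← integral_const_mul,
    ← integral_add (htilti.const_mul _) (hpowi.const_mul _), ← integral_const_mul]
  refine integral_mono (h.integrable_rpow_mul_envelope hν hk hz.le)
    (((htilti.const_mul _).add (hpowi.const_mul _)).const_mul _) fun w => ?_
  simp only
  rcases lt_or_ge w a with hwa | haw
  · rw [Set.indicator_of_notMem (by simpa using hwa), mul_zero, zero_add]
    exact (h.rpow_mul_envelope_le_of_le hk (clamp_le_of_le ha hwa.le)).trans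
      (le_mul_of_one_le_left (by positivity) hgz1)
  · rw [Set.indicator_of_mem (by simpa using haw)]
    refine (h.rpow_mul_envelope_le_mul_tiltedEnvelope hk0 hk hκ hz (ha.trans haw)).trans ?_
    gcongr
    exact le_add_of_nonneg_right (by positivity)

end SteinDrift

lemma exists_integral_rpow_mul_envelope_le (m : ℕ) {c₁ c₃ d₀ τ₁ τ₂ α : ℝ} (hc₁ : 0 < c₁)
    (hc₃ : 0 < c₃) (hd₀ : 0 ≤ d₀) (hτ₁ : 0 ≤ τ₁) (hτ₂ : 0 ≤ τ₂) (hα0 : 0 ≤ α) (hα1 : α < 1) :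
    ∃ η > 0, ∃ C > 0, ∀ {g : ℝ → ℝ} {ν : Measure ℝ} {δ δ₁ δ₂ z k : ℝ}, SteinDrift g c₁ c₃ →
      δ ≤ 1 → δ₂ ≤ η → ApproxStein ν g δ δ₁ δ₂ τ₁ τ₂ d₀ α → ModerateRange g δ δ₁ δ₂ τ₁ τ₂ z →
      0 ≤ k → k ≤ m → ∫ w, (1 + |g w|) ^ k * envelope g z w ∂ν ≤ C * (1 + z) * (1 + g z) ^ k := by
  obtain ⟨κ, hκ, η, hη, C₁, hC₁, htail⟩ :=
    exists_eventually_setIntegral_tiltedEnvelope_le m hc₁ hc₃ hd₀ hτ₁ hτ₂ hα0 hα1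
  obtain ⟨M, hM, hmoment⟩ := exists_integral_one_add_abs_pow_le m c₁ c₃ hd₀ hα0 hα1
  obtain ⟨z₀, htail⟩ := Filter.eventually_atTop.1 (htail.and (Filter.eventually_gt_atTop 0))
  have hz₀ := (htail z₀ le_rfl).2
  have ha := (driftThreshold_pos c₁).le
  set B := exp (exp (c₃ * driftThreshold c₁) * driftThreshold c₁)
  set B₀ := exp (exp (c₃ * z₀) * z₀)
  have hB : 0 < B := exp_pos _
  refine ⟨η, hη, B₀ * M + (exp κ * C₁ + B * M), by positivity, ?_⟩
  intro g ν δ δ₁ δ₂ z k h hδ hδ₂ hν hrange hk0 hk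
  have hm := hmoment g ν δ δ₁ δ₂ τ₁ τ₂ h hδ hν
  have hz := hrange.nonneg
  have hgz := h.nonneg hz
  have hone : 1 ≤ (1 + z) * (1 + g z) ^ k :=
    one_le_mul_of_one_le_of_one_le (by linarith) (one_le_rpow (by linarith) hk0)
  rw [mul_assoc, add_mul]
  rcases le_total z z₀ with hzz | hzz
  · calc _ ≤ B₀ * M := (h.integral_rpow_mul_envelope_le_of_le hν hk hz hzz).trans (by gcongr)
      _ ≤ B₀ * M * ((1 + z) * (1 + g z) ^ k) := le_mul_of_one_le_right (by positivity) hone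
      _ ≤ _ := le_add_of_nonneg_right (by positivity)
  · have htail := (htail z hzz).1 h hδ hδ₂ hν hrange
    have htail' : C₁ * z ≤ C₁ * (1 + z) := by gcongr; linarith
    have hm' : B * M ≤ B * M * (1 + z) := le_mul_of_one_le_right (by positivity) (by linarith)
    calc _ ≤ (1 + g z) ^ k * (exp κ * ∫ w in Set.Ici (driftThreshold c₁),
              tiltedEnvelope g (κ / z) z m w ∂ν + B * ∫ w, (1 + |g w|) ^ m ∂ν) :=
          h.integral_rpow_mul_envelope_le hν hk0 hk hκ.le (hz₀.trans_le hzz) ha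
      _ ≤ (1 + g z) ^ k * (exp κ * (C₁ * (1 + z)) + B * M * (1 + z)) := by
          have hterm := (mul_le_mul_of_nonneg_left hm hB.le).trans hm'
          gcongr
          exact htail.trans htail'
      _ = (exp κ * C₁ + B * M) * ((1 + z) * (1 + g z) ^ k) := by ring
      _ ≤ _ := le_add_of_nonneg_left (by positivity)

/-- The bounded solution `f` of the Stein equation `f' = g f + P(Y > z) - 1_{[z, ∞)}`. -/
noncomputable def steinSolution (g : ℝ → ℝ) (c₁ z w : ℝ) : ℝ :=
  tail g c₁ (max z w) * (1 - tail g c₁ (min z w)) * (exp (Gfun g w) / c₁)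

/-- The right derivative of `steinSolution`. -/
noncomputable def steinSolutionDeriv (g : ℝ → ℝ) (c₁ z w : ℝ) : ℝ :=
  g w * steinSolution g c₁ z w + tail g c₁ z - if z ≤ w then 1 else 0

/-- The level `z'` is a perturbation of `z ≥ 0` by at most `ε ≤ 1`, over which `G` changes by a
bounded amount. -/
structure NearLevel (g : ℝ → ℝ) (ε C₀ z z' : ℝ) : Prop where
  nonneg : 0 ≤ z
  abs_sub_le : |z' - z| ≤ ε
  le_one : ε ≤ 1
  mul_le : ε * g z ≤ C₀

lemma NearLevel.radius_nonneg {g : ℝ → ℝ} {ε C₀ z z' : ℝ} (hz : NearLevel g ε C₀ z z') : 0 ≤ ε :=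
  (abs_nonneg _).trans hz.abs_sub_le

lemma exp_neg_Gfun_mul_exp_Gfun (g : ℝ → ℝ) (w : ℝ) : exp (-Gfun g w) * exp (Gfun g w) = 1 := by
  rw [← exp_add, neg_add_cancel, exp_zero]

namespace SteinDrift

variable {g : ℝ → ℝ} {c₁ c₃ ε C₀ z z' w x ξ : ℝ}

lemma continuous_tail (h : SteinDrift g c₁ c₃) : Continuous (tail g c₁) :=
  continuous_iff_continuousAt.2 fun w => (h.hasDerivAt_tail w).continuousAt

lemma continuous_steinSolution (h : SteinDrift g c₁ c₃) (z : ℝ) :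
    Continuous (steinSolution g c₁ z) := by
  have := h.continuous_tail
  have := h.continuous_Gfun
  unfold steinSolution
  fun_prop

lemma steinSolution_nonneg (h : SteinDrift g c₁ c₃) (z w : ℝ) : 0 ≤ steinSolution g c₁ z w :=
  mul_nonneg (mul_nonneg (h.tail_pos _).le (sub_nonneg.2 (h.tail_le_one _)))
    (div_nonneg (exp_pos _).le h.c₁_pos.le)

lemma pfun_mul_exp_Gfun_div (h : SteinDrift g c₁ c₃) (w : ℝ) :
    pfun g c₁ w * (exp (Gfun g w) / c₁) = 1 := by
  rw [pfun, mul_div_assoc', mul_assoc, exp_neg_Gfun_mul_exp_Gfun, mul_one, div_self h.c₁_pos.ne']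

lemma hasDerivWithinAt_steinSolution (h : SteinDrift g c₁ c₃) (z w : ℝ) :
    HasDerivWithinAt (steinSolution g c₁ z) (steinSolutionDeriv g c₁ z w) (Set.Ici w) w := by
  have hexp : HasDerivAt (fun x => exp (Gfun g x) / c₁) (exp (Gfun g w) * g w / c₁) w :=
    ((h.hasDerivAt_Gfun w).exp).div_const _
  have htail := h.hasDerivAt_tail w
  have hdensity := h.pfun_mul_exp_Gfun_div w
  rcases le_or_gt z w with hzw | hwz
  · have heq : ∀ x, z ≤ x → steinSolution g c₁ z x =
        tail g c₁ x * (1 - tail g c₁ z) * (exp (Gfun g x) / c₁) := fun x hx => by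
      rw [steinSolution, max_eq_right hx, min_eq_left hx]
    refine ((((htail.mul_const _).mul hexp).hasDerivWithinAt (s := Set.Ici w)).congr_of_eventuallyEq
      ?_ (heq w hzw)).congr_deriv ?_
    · filter_upwards [self_mem_nhdsWithin] with x hx using heq x (hzw.trans hx)
    · rw [steinSolutionDeriv, heq w hzw, if_pos hzw]
      linear_combination (-(1 - tail g c₁ z)) * hdensity
  · have heq : ∀ x, x < z → steinSolution g c₁ z x =
        tail g c₁ z * (1 - tail g c₁ x) * (exp (Gfun g x) / c₁) := fun x hx => by
      rw [steinSolution, max_eq_left hx.le, min_eq_right hx.le]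
    refine (((((htail.const_sub 1).const_mul _).mul hexp).hasDerivWithinAt
      (s := Set.Ici w)).congr_of_eventuallyEq ?_ (heq w hwz)).congr_deriv ?_
    · filter_upwards [mem_nhdsWithin_of_mem_nhds (gt_mem_nhds hwz)] with x hx using heq x hx
    · rw [steinSolutionDeriv, heq w hwz, if_neg hwz.not_ge]
      linear_combination tail g c₁ z * hdensity

lemma mul_exp_neg_Gfun_le_of_nonneg (h : SteinDrift g c₁ c₃) (hz : 0 ≤ z) :
    c₁ * exp (-Gfun g z) ≤ exp (exp c₃) * ((1 + g z) * tail g c₁ z) := by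
  have hmills := h.mul_exp_neg_Gfun_le z
  rw [abs_of_nonneg (h.nonneg hz), exp_neg, mul_right_comm, ← div_eq_mul_inv,
    div_le_iff₀' (exp_pos _)] at hmills
  exact hmills

lemma exp_Gfun_le_mul_envelope (h : SteinDrift g c₁ c₃) (hz : NearLevel g ε C₀ z z')
    (hw : z - ε ≤ w) : exp (Gfun g z) ≤ exp C₀ * envelope g z w := by
  rw [envelope, ← exp_add]
  have hclamp : z - clamp z w ≤ ε :=
    sub_le_comm.1 (le_max_of_le_right (le_min hw (by linarith [hz.radius_nonneg])))
  have hslope := mul_le_mul_of_nonneg_left hclamp (h.nonneg hz.nonneg)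
  gcongr
  linarith [h.Gfun_sub_le z (clamp z w), hz.mul_le]

lemma envelope_le_mul_envelope (h : SteinDrift g c₁ c₃) (hz : NearLevel g ε C₀ z z')
    (hξ : |ξ - x| ≤ ε) : envelope g z ξ ≤ exp C₀ * envelope g z x := by
  rw [envelope, envelope, ← exp_add]
  have hclamp := (le_abs_self _).trans ((abs_clamp_sub_clamp_le z ξ x).trans hξ)
  have hslope : g (clamp z ξ) * (clamp z ξ - clamp z x) ≤ g z * ε :=
    (mul_le_mul_of_nonneg_left hclamp (h.nonneg (clamp_nonneg z ξ))).trans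
      (mul_le_mul_of_nonneg_right (h.monotone (clamp_le hz.nonneg ξ)) hz.radius_nonneg)
  gcongr
  linarith [h.Gfun_sub_le (clamp z ξ) (clamp z x), hz.mul_le]

lemma one_add_le_exp_mul (h : SteinDrift g c₁ c₃) (hz : NearLevel g ε C₀ z z') (hw : z - ε ≤ w) :
    1 + g z ≤ exp c₃ * (1 + |g w|) := by
  have hgz := h.nonneg hz.nonneg
  rcases le_total z w with hzw | hwz
  · calc 1 + g z ≤ 1 + |g w| := by linarith [h.monotone hzw, le_abs_self (g w)]
      _ ≤ _ := le_mul_of_one_le_left (by positivity) (one_le_exp h.c₃_pos.le)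
  · rw [← abs_of_nonneg hgz]
    refine h.one_add_abs_le_of_abs_sub_le_one ?_
    rw [abs_of_nonneg (sub_nonneg.2 hwz)]
    linarith [hz.le_one]

lemma abs_tail_sub_le (h : SteinDrift g c₁ c₃) (hz : NearLevel g ε C₀ z z') :
    |tail g c₁ z' - tail g c₁ z| ≤ exp C₀ * exp (exp c₃) * (ε * (1 + g z)) * tail g c₁ z := by
  have hε := hz.radius_nonneg
  have hc := h.c₁_pos
  have hdensity : ∀ y ∈ Set.uIoc z' z, ‖pfun g c₁ y‖ ≤ c₁ * exp C₀ * exp (-Gfun g z) := by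
    intro y hy
    have hyz : z - y ≤ ε := (le_abs_self _).trans <| (Set.abs_sub_right_of_mem_uIcc
      (Set.uIoc_subset_uIcc hy)).trans <| (abs_sub_comm _ _).trans_le hz.abs_sub_le
    have hslope := mul_le_mul_of_nonneg_left hyz (h.nonneg hz.nonneg)
    rw [norm_eq_abs, abs_of_pos (h.pfun_pos y), pfun, mul_assoc, ← exp_add]
    gcongr
    linarith [h.Gfun_sub_le z y, hz.mul_le]
  rw [h.tail_sub_tail, ← norm_eq_abs]
  calc _ ≤ c₁ * exp C₀ * exp (-Gfun g z) * |z - z'| :=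
        intervalIntegral.norm_integral_le_of_norm_le_const hdensity
    _ ≤ c₁ * exp C₀ * exp (-Gfun g z) * ε := by
        rw [abs_sub_comm]
        gcongr
        exact hz.abs_sub_le
    _ = exp C₀ * ε * (c₁ * exp (-Gfun g z)) := by ring
    _ ≤ exp C₀ * ε * (exp (exp c₃) * ((1 + g z) * tail g c₁ z)) :=
        mul_le_mul_of_nonneg_left (h.mul_exp_neg_Gfun_le_of_nonneg hz.nonneg) (by positivity)
    _ = _ := by ring

lemma tail_le_mul_tail (h : SteinDrift g c₁ c₃) (hz : NearLevel g ε C₀ z z') :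
    tail g c₁ z' ≤ (1 + exp C₀ * exp (exp c₃) * (1 + C₀)) * tail g c₁ z := by
  have hdiff := (le_abs_self _).trans (h.abs_tail_sub_le hz)
  have hε : ε * (1 + g z) ≤ 1 + C₀ := by linarith [hz.mul_le, hz.le_one]
  have hmono : exp C₀ * exp (exp c₃) * (ε * (1 + g z)) * tail g c₁ z ≤
      exp C₀ * exp (exp c₃) * (1 + C₀) * tail g c₁ z := by
    have := (h.tail_pos z).le
    gcongr
  linarith

/- Mills' ratio makes `tail z * envelope z w` bounded below by a multiple of `1 / (1 + |g w|)`
where the indicator of the level can jump. -/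
lemma one_le_mul_tail_mul_envelope (h : SteinDrift g c₁ c₃) (hz : NearLevel g ε C₀ z z')
    (hw : z - ε ≤ w) : 1 ≤ exp (exp c₃) * exp c₃ * exp C₀ / c₁ *
      ((1 + |g w|) * (tail g c₁ z * envelope g z w)) := by
  have hQ := h.tail_pos z
  rw [div_mul_eq_mul_div, one_le_div h.c₁_pos]
  calc c₁ = c₁ * exp (-Gfun g z) * exp (Gfun g z) := by
        rw [mul_assoc, exp_neg_Gfun_mul_exp_Gfun, mul_one]
    _ ≤ exp (exp c₃) * ((exp c₃ * (1 + |g w|)) * tail g c₁ z) * (exp C₀ * envelope g z w) := by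
        refine mul_le_mul ((h.mul_exp_neg_Gfun_le_of_nonneg hz.nonneg).trans ?_)
          (h.exp_Gfun_le_mul_envelope hz hw) (exp_pos _).le (by positivity)
        gcongr
        exact h.one_add_le_exp_mul hz hw
    _ = _ := by ring

lemma exp_Gfun_le_of_nonneg (h : SteinDrift g c₁ c₃) (hz : NearLevel g ε C₀ z z') (hw : 0 ≤ w)
    (hwz : w ≤ z') : exp (Gfun g w) ≤ exp (exp c₃ * (1 + C₀)) * envelope g z w := by
  have hgz := h.nonneg hz.nonneg
  have hε := hz.radius_nonneg
  have hC₀ := (mul_nonneg hε hgz).trans hz.mul_le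
  rw [envelope, ← exp_add]
  gcongr
  rcases le_total w z with hle | hge
  · rw [clamp_of_mem hw hle]
    exact le_add_of_nonneg_left (by positivity)
  · rw [clamp_of_ge hz.nonneg hge]
    have hwε : w - z ≤ ε := by linarith [(abs_le.1 hz.abs_sub_le).2]
    have hgw : 1 + |g w| ≤ exp c₃ * (1 + |g z|) := h.one_add_abs_le_of_abs_sub_le_one <| by
      rw [abs_of_nonneg (sub_nonneg.2 hge)]
      exact hwε.trans hz.le_one
    rw [abs_of_nonneg hgz] at hgw
    have hslope : g w * (w - z) ≤ exp c₃ * (1 + C₀) := calc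
      g w * (w - z) ≤ exp c₃ * (1 + g z) * ε :=
          mul_le_mul (by linarith [le_abs_self (g w)]) hwε (sub_nonneg.2 hge) (by positivity)
      _ = exp c₃ * (ε + ε * g z) := by ring
      _ ≤ _ := by gcongr; exacts [hz.le_one, hz.mul_le]
    linarith [h.Gfun_sub_le w z]

end SteinDrift

lemma exists_one_sub_tail_mul_exp_le {c₁ : ℝ} (hc₁ : 0 < c₁) (c₃ C₀ : ℝ) :
    ∃ K > 0, ∀ {g : ℝ → ℝ} {ε z z' w : ℝ}, SteinDrift g c₁ c₃ → NearLevel g ε C₀ z z' → w ≤ z' →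
      (1 - tail g c₁ w) * exp (Gfun g w) ≤ K * envelope g z w := by
  obtain ⟨K, hK, hmills⟩ := exists_one_add_abs_mul_one_sub_tail_le hc₁ c₃
  set L := exp (exp c₃ * (1 + C₀))
  refine ⟨K + L, by positivity, fun {g ε z z' w} h hz hw => ?_⟩
  have htail := sub_nonneg.2 (h.tail_le_one w)
  have henv : 0 < envelope g z w := exp_pos _
  rw [add_mul]
  rcases le_total w 0 with hneg | hpos
  · calc (1 - tail g c₁ w) * exp (Gfun g w)
        ≤ (1 + |g w|) * (1 - tail g c₁ w) * exp (Gfun g w) := by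
          gcongr
          exact le_mul_of_one_le_left htail (le_add_of_nonneg_right (abs_nonneg _))
      _ ≤ K * exp (-Gfun g w) * exp (Gfun g w) :=
          mul_le_mul_of_nonneg_right (hmills g h w (by linarith)) (exp_pos _).le
      _ = K * 1 := by rw [mul_assoc, exp_neg_Gfun_mul_exp_Gfun]
      _ ≤ K * envelope g z w := by gcongr; exact h.one_le_envelope z w
      _ ≤ _ := le_add_of_nonneg_right (by positivity)
  · calc (1 - tail g c₁ w) * exp (Gfun g w) ≤ 1 * (L * envelope g z w) :=
          mul_le_mul (sub_le_self _ (h.tail_pos w).le) (h.exp_Gfun_le_of_nonneg hz hpos hw)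
            (exp_pos _).le one_pos.le
      _ = L * envelope g z w := one_mul _
      _ ≤ _ := le_add_of_nonneg_left (by positivity)

lemma exists_tail_mul_exp_le {c₁ : ℝ} (hc₁ : 0 < c₁) (c₃ C₀ : ℝ) :
    ∃ K > 0, ∀ {g : ℝ → ℝ} {ε z z' w : ℝ}, SteinDrift g c₁ c₃ → NearLevel g ε C₀ z z' → z' ≤ w →
      tail g c₁ w * exp (Gfun g w) ≤ K * (tail g c₁ z * envelope g z w) := by
  obtain ⟨K, hK, hmills⟩ := exists_one_add_abs_mul_tail_le hc₁ c₃
  set L := exp (exp c₃) * exp c₃ * exp C₀ / c₁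
  refine ⟨K * L, by positivity, fun {g ε z z' w} h hz hw => ?_⟩
  have hclose := (abs_le.1 hz.abs_sub_le).1
  have hbase : 0 < tail g c₁ z * envelope g z w := mul_pos (h.tail_pos z) (exp_pos _)
  have hL := h.one_le_mul_tail_mul_envelope hz (w := w) (by linarith)
  have hfactor := (mul_pos (h.tail_pos w) (exp_pos (Gfun g w))).le
  calc tail g c₁ w * exp (Gfun g w)
      ≤ tail g c₁ w * exp (Gfun g w) * (L * ((1 + |g w|) * (tail g c₁ z * envelope g z w))) :=
        le_mul_of_one_le_right hfactor hL
    _ = (1 + |g w|) * tail g c₁ w * exp (Gfun g w) * (L * (tail g c₁ z * envelope g z w)) := by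
        ring
    _ ≤ K * exp (-Gfun g w) * exp (Gfun g w) * (L * (tail g c₁ z * envelope g z w)) := by
        refine mul_le_mul_of_nonneg_right (mul_le_mul_of_nonneg_right (hmills g h w ?_) ?_) ?_
        exacts [by linarith [hz.nonneg, hz.le_one], (exp_pos _).le, by positivity]
    _ = _ := by rw [mul_assoc K, exp_neg_Gfun_mul_exp_Gfun, mul_one, mul_assoc]

lemma exists_steinSolution_le {c₁ C₀ : ℝ} (hc₁ : 0 < c₁) (c₃ : ℝ) (hC₀ : 0 ≤ C₀) :
    ∃ K > 0, ∀ {g : ℝ → ℝ} {ε z z' : ℝ}, SteinDrift g c₁ c₃ → NearLevel g ε C₀ z z' → ∀ w,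
      steinSolution g c₁ z' w ≤ K * (tail g c₁ z * envelope g z w) := by
  obtain ⟨K, hK, hleft⟩ := exists_one_sub_tail_mul_exp_le hc₁ c₃ C₀
  obtain ⟨L, hL, hright⟩ := exists_tail_mul_exp_le hc₁ c₃ C₀
  set M := 1 + exp C₀ * exp (exp c₃) * (1 + C₀)
  refine ⟨M * K / c₁ + L / c₁, by positivity, fun {g ε z z'} h hz w => ?_⟩
  have hbase : 0 < tail g c₁ z * envelope g z w := mul_pos (h.tail_pos z) (exp_pos _)
  rw [add_mul]
  rcases le_total w z' with hwz | hzw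
  · rw [steinSolution, max_eq_left hwz, min_eq_right hwz]
    calc tail g c₁ z' * (1 - tail g c₁ w) * (exp (Gfun g w) / c₁)
        = tail g c₁ z' * ((1 - tail g c₁ w) * exp (Gfun g w)) / c₁ := by ring
      _ ≤ M * tail g c₁ z * (K * envelope g z w) / c₁ := by
          gcongr ?_ / c₁
          exact mul_le_mul (h.tail_le_mul_tail hz) (hleft h hz hwz)
            (mul_nonneg (sub_nonneg.2 (h.tail_le_one w)) (exp_pos _).le)
            ((h.tail_pos z').le.trans (h.tail_le_mul_tail hz))
      _ = M * K / c₁ * (tail g c₁ z * envelope g z w) := by ring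
      _ ≤ _ := le_add_of_nonneg_right (by positivity)
  · rw [steinSolution, max_eq_right hzw, min_eq_left hzw]
    calc tail g c₁ w * (1 - tail g c₁ z') * (exp (Gfun g w) / c₁)
        = (1 - tail g c₁ z') * (tail g c₁ w * exp (Gfun g w)) / c₁ := by ring
      _ ≤ 1 * (L * (tail g c₁ z * envelope g z w)) / c₁ := by
          gcongr ?_ / c₁
          exact mul_le_mul (sub_le_self _ (h.tail_pos z').le) (hright h hz hzw)
            (mul_pos (h.tail_pos w) (exp_pos _)).le one_pos.le
      _ = L / c₁ * (tail g c₁ z * envelope g z w) := by ring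
      _ ≤ _ := le_add_of_nonneg_left (by positivity)

lemma exists_abs_mul_steinSolution_add_sub_le {c₁ C₀ : ℝ} (hc₁ : 0 < c₁) (c₃ : ℝ)
    (hC₀ : 0 ≤ C₀) : ∃ K > 0, ∀ {g : ℝ → ℝ} {ε z z' w i : ℝ}, SteinDrift g c₁ c₃ →
      NearLevel g ε C₀ z z' → |i| ≤ (Set.Ici (z - ε)).indicator 1 w →
      |g w * steinSolution g c₁ z' w + tail g c₁ z' - i| ≤
        K * ((1 + |g w|) * (tail g c₁ z * envelope g z w)) := by
  obtain ⟨K, hK, hsol⟩ := exists_steinSolution_le hc₁ c₃ hC₀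
  set L := 1 + exp C₀ * exp (exp c₃) * (1 + C₀)
  set M := exp (exp c₃) * exp c₃ * exp C₀ / c₁
  refine ⟨K + L + M, by positivity, fun {g ε z z' w i} h hz hi => ?_⟩
  have htail := h.tail_pos z
  have hbase : 0 < tail g c₁ z * envelope g z w := mul_pos htail (exp_pos _)
  have hone : 1 ≤ 1 + |g w| := le_add_of_nonneg_right (abs_nonneg _)
  have hdrift : |g w * steinSolution g c₁ z' w| ≤
      K * ((1 + |g w|) * (tail g c₁ z * envelope g z w)) := by
    rw [abs_mul, abs_of_nonneg (h.steinSolution_nonneg z' w), mul_left_comm]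
    exact mul_le_mul (le_add_of_nonneg_left one_pos.le) (hsol h hz w)
      (h.steinSolution_nonneg z' w) (by positivity)
  have hlevel : |tail g c₁ z'| ≤ L * ((1 + |g w|) * (tail g c₁ z * envelope g z w)) := by
    rw [abs_of_pos (h.tail_pos z')]
    refine (h.tail_le_mul_tail hz).trans ?_
    gcongr
    exact (le_mul_of_one_le_right htail.le (h.one_le_envelope z w)).trans
      (le_mul_of_one_le_left hbase.le hone)
  have hjump : |i| ≤ M * ((1 + |g w|) * (tail g c₁ z * envelope g z w)) := by
    refine hi.trans (Set.indicator_apply_le' (fun hw => ?_) fun _ => by positivity)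
    exact h.one_le_mul_tail_mul_envelope hz hw
  rw [add_mul, add_mul]
  exact (abs_sub _ _).trans (add_le_add ((abs_add_le _ _).trans (add_le_add hdrift hlevel)) hjump)

lemma exists_abs_steinSolution_sub_le {c₁ c₃ C₀ : ℝ} (hc₁ : 0 < c₁) (hC₀ : 0 ≤ C₀) :
    ∃ K > 0, ∀ {g : ℝ → ℝ} {ε z z' x ξ : ℝ}, SteinDrift g c₁ c₃ → NearLevel g ε C₀ z z' →
      |ξ - x| ≤ ε → |steinSolution g c₁ z' ξ - steinSolution g c₁ z' x| ≤
        K * ((1 + |g x|) * (tail g c₁ z * envelope g z x)) * ε := by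
  obtain ⟨K, hK, hderiv⟩ := exists_abs_mul_steinSolution_add_sub_le hc₁ c₃ hC₀
  refine ⟨K * exp c₃ * exp C₀, by positivity, fun {g ε z z' x ξ} h hz hξ => ?_⟩
  have htail := (h.tail_pos z).le
  have henv : 0 < envelope g z x := exp_pos _
  refine (abs_sub_le_of_abs_rightDeriv_le (h.continuous_steinSolution z')
    (h.hasDerivWithinAt_steinSolution z') fun t ht => ?_).trans
    (mul_le_mul_of_nonneg_left hξ (by positivity))
  have htx : |t - x| ≤ ε := by
    rw [abs_sub_comm]
    exact (Set.abs_sub_right_of_mem_uIcc ht).trans ((abs_sub_comm _ _).trans_le hξ)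
  have hjump : |(if z' ≤ t then 1 else 0 : ℝ)| ≤ (Set.Ici (z - ε)).indicator 1 t := by
    have hclose := (abs_le.1 hz.abs_sub_le).1
    split_ifs with hzt
    · rw [Set.indicator_of_mem (Set.mem_Ici.2 (by linarith)), abs_one, Pi.one_apply]
    · rw [abs_zero]
      exact Set.indicator_nonneg (fun _ _ => zero_le_one) t
  calc |steinSolutionDeriv g c₁ z' t|
      ≤ K * ((1 + |g t|) * (tail g c₁ z * envelope g z t)) := hderiv h hz hjump
    _ ≤ K * (exp c₃ * (1 + |g x|) * (tail g c₁ z * (exp C₀ * envelope g z x))) := by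
        have henvt : 0 < envelope g z t := exp_pos _
        gcongr
        exacts [h.one_add_abs_le_of_abs_sub_le_one (htx.trans hz.le_one),
          h.envelope_le_mul_envelope hz htx]
    _ = _ := by ring

lemma exists_abs_mul_steinSolution_sub_le {c₁ c₃ C₀ : ℝ} (hc₁ : 0 < c₁) (hc₃ : 0 < c₃)
    (hC₀ : 0 ≤ C₀) : ∃ K > 0, ∀ {g : ℝ → ℝ} {ε z z' x ξ : ℝ}, SteinDrift g c₁ c₃ →
      NearLevel g ε C₀ z z' → |ξ - x| ≤ ε →
      |g ξ * steinSolution g c₁ z' ξ - g x * steinSolution g c₁ z' x| ≤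
        K * (ε * (1 + |g x|) ^ 2 * (tail g c₁ z * envelope g z x)) := by
  obtain ⟨K, hK, hsol⟩ := exists_steinSolution_le hc₁ c₃ hC₀
  obtain ⟨L, hL, hlip⟩ := exists_abs_steinSolution_sub_le (c₃ := c₃) hc₁ hC₀
  refine ⟨c₃ * exp c₃ * K * exp C₀ + L, by positivity, fun {g ε z z' x ξ} h hz hξ => ?_⟩
  have hε := hz.radius_nonneg
  have htail := (h.tail_pos z).le
  have henv : 0 < envelope g z x := exp_pos _
  have hone : 1 ≤ 1 + |g x| := le_add_of_nonneg_right (abs_nonneg _)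
  have hg : |g ξ - g x| ≤ c₃ * exp c₃ * (1 + |g x|) * ε :=
    (h.abs_sub_le (hξ.trans hz.le_one)).trans (by gcongr)
  have hf : |steinSolution g c₁ z' ξ| ≤ K * (tail g c₁ z * (exp C₀ * envelope g z x)) := by
    rw [abs_of_nonneg (h.steinSolution_nonneg z' ξ)]
    exact (hsol h hz ξ).trans (by gcongr; exact h.envelope_le_mul_envelope hz hξ)
  calc |g ξ * steinSolution g c₁ z' ξ - g x * steinSolution g c₁ z' x|
      = |(g ξ - g x) * steinSolution g c₁ z' ξ +
          g x * (steinSolution g c₁ z' ξ - steinSolution g c₁ z' x)| := by ring_nf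
    _ ≤ |g ξ - g x| * |steinSolution g c₁ z' ξ| +
          |g x| * |steinSolution g c₁ z' ξ - steinSolution g c₁ z' x| := by
        rw [← abs_mul, ← abs_mul]
        exact abs_add_le _ _
    _ ≤ c₃ * exp c₃ * (1 + |g x|) * ε * (K * (tail g c₁ z * (exp C₀ * envelope g z x))) *
          (1 + |g x|) +
          (1 + |g x|) * (L * ((1 + |g x|) * (tail g c₁ z * envelope g z x)) * ε) := by
        refine add_le_add ((mul_le_mul hg hf (abs_nonneg _) (by positivity)).trans
          (le_mul_of_one_le_right (by positivity) hone)) ?_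
        exact mul_le_mul (le_add_of_nonneg_left one_pos.le) (hlip h hz hξ) (abs_nonneg _)
          (by positivity)
    _ = _ := by ring

/-- The pointwise error in the Stein equation, relative to `P(Y > z)` times the envelope. -/
noncomputable def steinError (g : ℝ → ℝ) (ε δ₁ δ₂ τ₁ τ₂ w : ℝ) : ℝ :=
  ε * (1 + |g w|) ^ (2 : ℝ) + δ₁ * (1 + |g w|) ^ (τ₁ + 1) + δ₂ * (1 + |g w|) ^ τ₂

lemma mul_add_mul_add_mul_le {a b c x y z : ℝ} (ha : 0 ≤ a) (hb : 0 ≤ b) (hc : 0 ≤ c) (hx : 0 ≤ x)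
    (hy : 0 ≤ y) (hz : 0 ≤ z) : a * x + b * y + c * z ≤ (a + b + c) * (x + y + z) := by
  have hrest : 0 ≤ a * (y + z) + b * (x + z) + c * (x + y) := by positivity
  linarith

namespace Admissible

variable {g : ℝ → ℝ} {δ₁ δ₂ τ₁ τ₂ d₀ α w r k : ℝ}

lemma abs_r_le_two_mul_rpow (h : Admissible g δ₁ δ₂ τ₁ τ₂ d₀ α w r k) (hδ₂ : 0 ≤ δ₂)
    (hτ₂ : 0 ≤ τ₂) : |r| ≤ 2 * (δ₂ * (1 + |g w|) ^ τ₂) :=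
  h.abs_r_le.trans <| (mul_le_mul_of_nonneg_left (rpow_add_one_le (abs_nonneg _) hτ₂) hδ₂).trans_eq
    (mul_left_comm _ _ _)

lemma abs_k_sub_one_le_two_mul_rpow (h : Admissible g δ₁ δ₂ τ₁ τ₂ d₀ α w r k) (hδ₁ : 0 ≤ δ₁)
    (hτ₁ : 0 ≤ τ₁) : |k - 1| ≤ 2 * (δ₁ * (1 + |g w|) ^ τ₁) :=
  h.abs_k_sub_one_le.trans <|
    (mul_le_mul_of_nonneg_left (rpow_add_one_le (abs_nonneg _) hτ₁) hδ₁).trans_eq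
      (mul_left_comm _ _ _)

end Admissible

lemma exists_le_mul_steinSolution_sub {c₁ C₀ d₀ τ₁ τ₂ L : ℝ} (hc₁ : 0 < c₁) (c₃ : ℝ) (hC₀ : 0 ≤ C₀)
    (hd₀ : 0 ≤ d₀) (hτ₁ : 0 ≤ τ₁) (hτ₂ : 0 ≤ τ₂) (hL : 0 ≤ L) :
    ∃ K > 0, ∀ {g : ℝ → ℝ} {δ₁ δ₂ α ε z z' w i r k s : ℝ}, SteinDrift g c₁ c₃ →
      NearLevel g ε C₀ z z' → 0 ≤ δ₁ → 0 ≤ δ₂ → |s| = 1 → |i| ≤ (Set.Ici (z - ε)).indicator 1 w →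
      Admissible g δ₁ δ₂ τ₁ τ₂ d₀ α w r k →
      s * (i - tail g c₁ z') - K * (tail g c₁ z * (steinError g ε δ₁ δ₂ τ₁ τ₂ w * envelope g z w)) ≤
        (g w - r) * (s * steinSolution g c₁ z' w) -
          (s * (g w * steinSolution g c₁ z' w + tail g c₁ z' - i) +
            L * (ε * (1 + |g w|) ^ 2 * (tail g c₁ z * envelope g z w))) * k := by
  obtain ⟨M, hM, hsol⟩ := exists_steinSolution_le hc₁ c₃ hC₀
  obtain ⟨N, hN, hderiv⟩ := exists_abs_mul_steinSolution_add_sub_le hc₁ c₃ hC₀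
  refine ⟨L * d₀ + 2 * N + 2 * M, by positivity, ?_⟩
  intro g δ₁ δ₂ α ε z z' w i r k s h hz hδ₁ hδ₂ hs hi hadm
  have hε := hz.radius_nonneg
  have hX : 0 < 1 + |g w| := by positivity
  set B := tail g c₁ z * envelope g z w with hB
  have hB₀ : 0 < B := mul_pos (h.tail_pos z) (exp_pos _)
  set f := steinSolution g c₁ z' w
  set D := g w * f + tail g c₁ z' - i
  have hr : s * (r * f) ≤ 2 * M * (δ₂ * (1 + |g w|) ^ τ₂ * B) := by
    refine (le_abs_self _).trans ?_
    rw [abs_mul, hs, one_mul, abs_mul, abs_of_nonneg (h.steinSolution_nonneg z' w)]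
    exact (mul_le_mul (hadm.abs_r_le_two_mul_rpow hδ₂ hτ₂) (hsol h hz w)
      (h.steinSolution_nonneg z' w) (by positivity)).trans_eq (by ring)
  have hk : s * (D * (k - 1)) ≤ 2 * N * (δ₁ * (1 + |g w|) ^ (τ₁ + 1) * B) := by
    refine (le_abs_self _).trans ?_
    rw [abs_mul, hs, one_mul, abs_mul]
    exact (mul_le_mul (hderiv h hz hi) (hadm.abs_k_sub_one_le_two_mul_rpow hδ₁ hτ₁)
      (abs_nonneg _) (by positivity)).trans_eq (by rw [rpow_add hX, rpow_one]; ring)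
  have hslope : L * (ε * (1 + |g w|) ^ 2 * B) * k ≤ L * d₀ * (ε * (1 + |g w|) ^ (2 : ℝ) * B) := by
    rw [rpow_two]
    exact (mul_le_mul_of_nonneg_left hadm.k_le (by positivity)).trans_eq (by ring)
  have hsum := mul_add_mul_add_mul_le (show 0 ≤ L * d₀ by positivity)
    (show 0 ≤ 2 * N by positivity) (show 0 ≤ 2 * M by positivity)
    (show 0 ≤ ε * (1 + |g w|) ^ (2 : ℝ) * B by positivity)
    (show 0 ≤ δ₁ * (1 + |g w|) ^ (τ₁ + 1) * B by positivity)
    (show 0 ≤ δ₂ * (1 + |g w|) ^ τ₂ * B by positivity)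
  rw [← add_mul, ← add_mul, ← steinError] at hsum
  rw [mul_left_comm (tail g c₁ z), ← hB]
  linear_combination hr + hk + hslope + hsum

lemma exists_isDriftMajorant_steinSolution {c₁ c₃ C₀ d₀ τ₁ τ₂ : ℝ} (hc₁ : 0 < c₁) (hc₃ : 0 < c₃)
    (hC₀ : 0 ≤ C₀) (hd₀ : 0 ≤ d₀) (hτ₁ : 0 ≤ τ₁) (hτ₂ : 0 ≤ τ₂) :
    ∃ K > 0, ∃ L, ∀ {g : ℝ → ℝ} {δ δ₁ δ₂ α ε z z' s : ℝ}, SteinDrift g c₁ c₃ →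
      NearLevel g ε C₀ z z' → δ ≤ ε → 0 ≤ δ₁ → 0 ≤ δ₂ → |s| = 1 →
      (∀ x ξ, |ξ - x| ≤ δ → s * ((Set.Ioi z).indicator 1 x - if z' ≤ ξ then 1 else 0) ≤ 0) →
      ∀ x, IsDriftMajorant g δ δ₁ δ₂ τ₁ τ₂ d₀ α (fun w => s * steinSolution g c₁ z' w)
        (fun w => s * steinSolutionDeriv g c₁ z' w) x
        (s * ((Set.Ioi z).indicator 1 x - tail g c₁ z') -
          K * (tail g c₁ z * (steinError g ε δ₁ δ₂ τ₁ τ₂ x * envelope g z x)))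
        (s * (g x * steinSolution g c₁ z' x + tail g c₁ z' - (Set.Ioi z).indicator 1 x) +
          L * (ε * (1 + |g x|) ^ 2 * (tail g c₁ z * envelope g z x))) := by
  obtain ⟨L, hL, hlip⟩ := exists_abs_mul_steinSolution_sub_le hc₁ hc₃ hC₀
  obtain ⟨K, hK, hdrift⟩ := exists_le_mul_steinSolution_sub hc₁ c₃ hC₀ hd₀ hτ₁ hτ₂ hL.le
  refine ⟨K, hK, L, ?_⟩
  intro g δ δ₁ δ₂ α ε z z' s h hz hδε hδ₁ hδ₂ hs hjump x
  refine ⟨fun ξ hξ => ?_, fun r k hadm => hdrift h hz hδ₁ hδ₂ hs ?_ hadm⟩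
  · have hinc : s * (g ξ * steinSolution g c₁ z' ξ - g x * steinSolution g c₁ z' x) ≤
        L * (ε * (1 + |g x|) ^ 2 * (tail g c₁ z * envelope g z x)) := by
      refine (le_abs_self _).trans ?_
      rw [abs_mul, hs, one_mul]
      exact hlip h hz (hξ.trans hδε)
    simp only [steinSolutionDeriv]
    linear_combination hinc + hjump x ξ hξ
  · have hind : 0 ≤ (Set.Ioi z).indicator (1 : ℝ → ℝ) x :=
      Set.indicator_nonneg (fun _ _ => zero_le_one) x
    rw [abs_of_nonneg hind]
    refine Set.indicator_le_indicator_of_subset (fun w hw => ?_) (fun _ => zero_le_one) x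
    exact (sub_le_self z hz.radius_nonneg).trans (le_of_lt hw)

namespace SteinDrift

variable {g : ℝ → ℝ} {c₁ c₃ δ δ₁ δ₂ τ₁ τ₂ d₀ α ε z z' C₀ : ℝ} {ν : Measure ℝ}

lemma polyGrowth_envelope (h : SteinDrift g c₁ c₃) (hz : 0 ≤ z) :
    PolyGrowth g (envelope g z) :=
  .of_bounded fun w => by
    rw [abs_of_pos (show 0 < envelope g z w from exp_pos _)]
    exact h.envelope_le hz w

lemma polyGrowth_steinSolution (h : SteinDrift g c₁ c₃) (hz : NearLevel g ε C₀ z z') :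
    PolyGrowth g (steinSolution g c₁ z') := by
  have hC₀ : 0 ≤ C₀ := (mul_nonneg hz.radius_nonneg (h.nonneg hz.nonneg)).trans hz.mul_le
  obtain ⟨K, -, hsol⟩ := exists_steinSolution_le h.c₁_pos c₃ hC₀
  refine ((PolyGrowth.const K).mul ((PolyGrowth.const (tail g c₁ z)).mul
    (h.polyGrowth_envelope hz.nonneg))).of_abs_le fun w => ?_
  rw [abs_of_nonneg (h.steinSolution_nonneg z' w)]
  exact (hsol h hz w).trans (le_abs_self _)

lemma integral_steinError_mul_envelope (h : SteinDrift g c₁ c₃)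
    (hν : ApproxStein ν g δ δ₁ δ₂ τ₁ τ₂ d₀ α) (hz : 0 ≤ z) :
    Integrable (fun w => steinError g ε δ₁ δ₂ τ₁ τ₂ w * envelope g z w) ν ∧
      ∫ w, steinError g ε δ₁ δ₂ τ₁ τ₂ w * envelope g z w ∂ν =
        ε * ∫ w, (1 + |g w|) ^ (2 : ℝ) * envelope g z w ∂ν +
          δ₁ * ∫ w, (1 + |g w|) ^ (τ₁ + 1) * envelope g z w ∂ν +
          δ₂ * ∫ w, (1 + |g w|) ^ τ₂ * envelope g z w ∂ν := by
  have hint : ∀ k : ℝ, Integrable (fun w => (1 + |g w|) ^ k * envelope g z w) ν := fun k =>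
    h.integrable_rpow_mul_envelope hν (Nat.le_ceil k) hz
  simp only [steinError, add_mul, mul_assoc]
  have h₂ := (hint 2).const_mul ε
  have h₁ := (hint (τ₁ + 1)).const_mul δ₁
  have h₀ := (hint τ₂).const_mul δ₂
  refine ⟨(h₂.fun_add h₁).fun_add h₀, ?_⟩
  rw [integral_add (h₂.fun_add h₁) h₀, integral_add h₂ h₁, integral_const_mul, integral_const_mul,
    integral_const_mul]

end SteinDrift

lemma exists_mul_measureReal_Ioi_sub_tail_le {c₁ c₃ C₀ d₀ τ₁ τ₂ : ℝ} (hc₁ : 0 < c₁) (hc₃ : 0 < c₃)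
    (hC₀ : 0 ≤ C₀) (hd₀ : 0 ≤ d₀) (hτ₁ : 0 ≤ τ₁) (hτ₂ : 0 ≤ τ₂) :
    ∃ K > 0, ∀ {g : ℝ → ℝ} {ν : Measure ℝ} {δ δ₁ δ₂ α ε z z' s : ℝ}, SteinDrift g c₁ c₃ →
      ApproxStein ν g δ δ₁ δ₂ τ₁ τ₂ d₀ α → NearLevel g ε C₀ z z' → δ ≤ ε → 0 ≤ δ₁ → 0 ≤ δ₂ →
      |s| = 1 →
      (∀ x ξ, |ξ - x| ≤ δ → s * ((Set.Ioi z).indicator 1 x - if z' ≤ ξ then 1 else 0) ≤ 0) →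
      s * (ν.real (Set.Ioi z) - tail g c₁ z') ≤
        K * (tail g c₁ z * ∫ w, steinError g ε δ₁ δ₂ τ₁ τ₂ w * envelope g z w ∂ν) := by
  obtain ⟨K, hK, L, hmaj⟩ := exists_isDriftMajorant_steinSolution hc₁ hc₃ hC₀ hd₀ hτ₁ hτ₂
  refine ⟨K, hK, ?_⟩
  intro g ν δ δ₁ δ₂ α ε z z' s h hν hz hδε hδ₁ hδ₂ hs hjump
  have := hν.isProbabilityMeasure
  have hg := h.measurable
  have hf := (h.continuous_steinSolution z').measurable
  have henv := (h.continuous_envelope z).measurable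
  have hind : Measurable ((Set.Ioi z).indicator (1 : ℝ → ℝ)) :=
    measurable_one.indicator measurableSet_Ioi
  have growth_env := h.polyGrowth_envelope hz.nonneg
  have growth_f := h.polyGrowth_steinSolution hz
  have growth_ind : PolyGrowth g ((Set.Ioi z).indicator 1) :=
    .ite (.const 1) (.const 0)
  have growth_D := ((PolyGrowth.const s).mul (((PolyGrowth.self.mul growth_f).add
    (.const (tail g c₁ z'))).sub growth_ind)).add ((PolyGrowth.const L).mul
      (((PolyGrowth.const ε).mul (((PolyGrowth.const 1).add PolyGrowth.self.abs).pow 2)).mul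
        ((PolyGrowth.const (tail g c₁ z)).mul growth_env)))
  have hindi := growth_ind.integrable hν hind
  obtain ⟨herri, -⟩ := h.integral_steinError_mul_envelope (ε := ε) hν hz.nonneg
  have hmain := (hindi.sub (integrable_const (tail g c₁ z'))).const_mul s
  have herr := (herri.const_mul (tail g c₁ z)).const_mul K
  have hnonpos := hν.integral_nonpos _ _ _ _ ((h.continuous_steinSolution z').const_mul s)
    (fun x => (h.hasDerivWithinAt_steinSolution z' x).const_mul s) (by fun_prop)
    (((PolyGrowth.const s).mul growth_f).integrable hν (by fun_prop))
    (growth_D.integrable hν (by fun_prop)) (hmain.sub herr)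
    (hmaj h hz hδε hδ₁ hδ₂ hs hjump)
  rw [integral_sub' hmain herr, integral_const_mul, integral_const_mul, integral_const_mul,
    integral_sub' hindi (integrable_const _), integral_indicator_one measurableSet_Ioi,
    integral_const, probReal_univ, one_smul] at hnonpos
  exact sub_nonpos.1 hnonpos

/-- The relative error in the moderate deviation theorem. -/
noncomputable def moderateRate (g : ℝ → ℝ) (δ δ₁ δ₂ τ₁ τ₂ z : ℝ) : ℝ :=
  δ * (1 + z * g z ^ 2) + δ₁ * (1 + z * g z ^ (τ₁ + 1)) + δ₂ * (1 + z * g z ^ τ₂)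

lemma exists_one_add_mul_rpow_le {c₁ : ℝ} (hc₁ : 0 < c₁) (c₃ : ℝ) {k : ℝ} (hk : 0 ≤ k) :
    ∃ C > 0, ∀ {g : ℝ → ℝ} {z : ℝ}, SteinDrift g c₁ c₃ → 0 ≤ z →
      (1 + z) * (1 + g z) ^ k ≤ C * (1 + z * g z ^ k) := by
  have hfloor := driftFloor_pos hc₁
  have hthr := driftThreshold_pos c₁
  set a := driftThreshold c₁
  set b := 1 / driftFloor c₁ + 1
  refine ⟨(1 + a) * exp (c₃ * a) ^ k + 2 * b ^ k, by positivity, fun {g z} h hz => ?_⟩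
  have hgz := h.nonneg hz
  have hzg : 0 ≤ z * g z ^ k := by positivity
  rw [add_mul ((1 + a) * exp (c₃ * a) ^ k)]
  rcases le_total z a with hza | haz
  · have hg : 1 + g z ≤ exp (c₃ * a) := by
      simpa only [abs_of_nonneg hgz] using h.one_add_abs_le_exp ((abs_of_nonneg hz).trans_le hza)
    calc (1 + z) * (1 + g z) ^ k ≤ (1 + a) * exp (c₃ * a) ^ k := by gcongr
      _ ≤ (1 + a) * exp (c₃ * a) ^ k * (1 + z * g z ^ k) :=
          le_mul_of_one_le_right (by positivity) (by linarith)
      _ ≤ _ := le_add_of_nonneg_right (by positivity)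
  · have hg : 1 + g z ≤ b * g z := by
      simpa only [abs_of_nonneg hgz] using h.one_add_abs_le_mul haz
    calc (1 + z) * (1 + g z) ^ k ≤ 2 * z * (b * g z) ^ k := by
          gcongr
          linarith [one_le_driftThreshold c₁]
      _ = 2 * b ^ k * (z * g z ^ k) := by rw [mul_rpow (by positivity) hgz]; ring
      _ ≤ 2 * b ^ k * (1 + z * g z ^ k) := by gcongr; linarith
      _ ≤ _ := le_add_of_nonneg_left (by positivity)

lemma exists_le_tail {c₁ : ℝ} (hc₁ : 0 < c₁) (c₃ a : ℝ) : ∃ c > 0, ∀ {g : ℝ → ℝ} {z : ℝ},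
    SteinDrift g c₁ c₃ → 0 ≤ z → z ≤ a → c ≤ tail g c₁ z := by
  refine ⟨c₁ * exp (-exp c₃) * exp (-(exp (c₃ * a) * a)) / exp (c₃ * a), by positivity,
    fun {g z} h hz hza => ?_⟩
  have habs : |z| ≤ a := (abs_of_nonneg hz).trans_le hza
  have htail := (h.tail_pos z).le
  rw [div_le_iff₀ (exp_pos _)]
  calc c₁ * exp (-exp c₃) * exp (-(exp (c₃ * a) * a)) ≤ c₁ * exp (-exp c₃) * exp (-Gfun g z) := by
        gcongr
        exact h.Gfun_le_of_abs_le habs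
    _ ≤ (1 + |g z|) * tail g c₁ z := h.mul_exp_neg_Gfun_le z
    _ ≤ exp (c₃ * a) * tail g c₁ z := by gcongr; exact h.one_add_abs_le_exp habs
    _ = tail g c₁ z * exp (c₃ * a) := mul_comm _ _

namespace SteinDrift

variable {g : ℝ → ℝ} {c₁ c₃ δ η k z : ℝ}

lemma le_of_mul_rpow_le_one (h : SteinDrift g c₁ c₃) (hk : 0 ≤ k) (hη : 0 < η) (hδ : η ≤ δ)
    (hz : 0 ≤ z) (hle : δ * z * g z ^ k ≤ 1) :
    z ≤ driftThreshold c₁ + 1 / (η * driftFloor c₁ ^ k) := by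
  have hfloor := driftFloor_pos h.c₁_pos
  have hδ₀ := hη.le.trans hδ
  rcases le_total z (driftThreshold c₁) with hza | haz
  · exact hza.trans (le_add_of_nonneg_right (by positivity))
  · refine le_add_of_nonneg_of_le (driftThreshold_pos c₁).le ?_
    rw [le_div_iff₀ (by positivity)]
    calc z * (η * driftFloor c₁ ^ k) ≤ z * (δ * g z ^ k) := by
          gcongr
          exact h.driftFloor_le haz
      _ = δ * z * g z ^ k := by ring
      _ ≤ 1 := hle

lemma mul_le_of_mul_sq_le_one (h : SteinDrift g c₁ c₃) (hδ0 : 0 ≤ δ) (hδ1 : δ ≤ 1) (hz : 0 ≤ z)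
    (hle : δ * z * g z ^ 2 ≤ 1) :
    δ * g z ≤ exp (c₃ * driftThreshold c₁) + 1 / driftFloor c₁ := by
  have hfloor := driftFloor_pos h.c₁_pos
  have hgz := h.nonneg hz
  rcases le_total z (driftThreshold c₁) with hza | haz
  · have hg := h.one_add_abs_le_exp ((abs_of_nonneg hz).trans_le hza)
    refine le_add_of_le_of_nonneg ((mul_le_of_le_one_left hgz hδ1).trans ?_) (by positivity)
    linarith [le_abs_self (g z)]
  · refine le_add_of_nonneg_of_le (exp_pos _).le ?_
    rw [le_div_iff₀ hfloor]
    calc δ * g z * driftFloor c₁ ≤ δ * g z * g z := by gcongr; exact h.driftFloor_le haz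
      _ = δ * 1 * g z ^ 2 := by ring
      _ ≤ δ * z * g z ^ 2 := by gcongr; exact (one_le_driftThreshold c₁).trans haz
      _ ≤ 1 := hle

end SteinDrift

lemma exists_integral_steinError_mul_envelope_le {c₁ c₃ d₀ τ₁ τ₂ α : ℝ} (hc₁ : 0 < c₁)
    (hc₃ : 0 < c₃) (hd₀ : 0 ≤ d₀) (hτ₁ : 0 ≤ τ₁) (hτ₂ : 0 ≤ τ₂) (hα0 : 0 ≤ α) (hα1 : α < 1) :
    ∃ η > 0, ∃ C > 0, ∀ {g : ℝ → ℝ} {ν : Measure ℝ} {δ δ₁ δ₂ ε z : ℝ}, SteinDrift g c₁ c₃ →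
      δ ≤ 1 → δ₂ ≤ η → 0 ≤ ε → ApproxStein ν g δ δ₁ δ₂ τ₁ τ₂ d₀ α →
      ModerateRange g δ δ₁ δ₂ τ₁ τ₂ z →
      ∫ w, steinError g ε δ₁ δ₂ τ₁ τ₂ w * envelope g z w ∂ν ≤
        C * moderateRate g ε δ₁ δ₂ τ₁ τ₂ z := by
  obtain ⟨η, hη, C, hC, hint⟩ := exists_integral_rpow_mul_envelope_le (⌈τ₁⌉₊ + ⌈τ₂⌉₊ + 2) hc₁ hc₃
    hd₀ hτ₁ hτ₂ hα0 hα1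
  obtain ⟨C₂, hC₂, hpow₂⟩ := exists_one_add_mul_rpow_le hc₁ c₃ (zero_le_two (α := ℝ))
  obtain ⟨C₁, hC₁, hpow₁⟩ := exists_one_add_mul_rpow_le hc₁ c₃ (show 0 ≤ τ₁ + 1 by positivity)
  obtain ⟨C₀, hC₀, hpow₀⟩ := exists_one_add_mul_rpow_le hc₁ c₃ hτ₂
  refine ⟨η, hη, C * C₂ + C * C₁ + C * C₀, by positivity, ?_⟩
  intro g ν δ δ₁ δ₂ ε z h hδ hδ₂ hε hν hrange
  have hz := hrange.nonneg
  have hgz := h.nonneg hz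
  have := hrange.δ₁_nonneg
  have := hrange.δ₂_nonneg
  have hceil₁ := Nat.le_ceil τ₁
  have hceil₂ := Nat.le_ceil τ₂
  have bound : ∀ {k K : ℝ}, 0 ≤ k → k ≤ τ₁ + τ₂ + 2 →
      (1 + z) * (1 + g z) ^ k ≤ K * (1 + z * g z ^ k) →
      ∫ w, (1 + |g w|) ^ k * envelope g z w ∂ν ≤ C * K * (1 + z * g z ^ k) := fun hk0 hk hK => by
    refine (hint h hδ hδ₂ hν hrange hk0 (by push_cast; linarith)).trans ?_
    rw [mul_assoc, mul_assoc]
    gcongr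
  have h₂ := bound zero_le_two (by linarith) (hpow₂ h hz)
  have h₁ := bound (by positivity) (by linarith) (hpow₁ h hz)
  have h₀ := bound hτ₂ (by linarith) (hpow₀ h hz)
  rw [rpow_two (g z)] at h₂
  rw [(h.integral_steinError_mul_envelope hν hz).2, moderateRate]
  calc _ ≤ ε * (C * C₂ * (1 + z * g z ^ 2)) + δ₁ * (C * C₁ * (1 + z * g z ^ (τ₁ + 1))) +
          δ₂ * (C * C₀ * (1 + z * g z ^ τ₂)) := by gcongr
    _ = C * C₂ * (ε * (1 + z * g z ^ 2)) + C * C₁ * (δ₁ * (1 + z * g z ^ (τ₁ + 1))) +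
          C * C₀ * (δ₂ * (1 + z * g z ^ τ₂)) := by ring
    _ ≤ _ := mul_add_mul_add_mul_le (by positivity) (by positivity) (by positivity)
        (by positivity) (by positivity) (by positivity)

section ModerateRate

variable {g : ℝ → ℝ} {δ δ₁ δ₂ τ₁ τ₂ z : ℝ}

lemma le_moderateRate_left (hδ₁ : 0 ≤ δ₁) (hδ₂ : 0 ≤ δ₂) (hz : 0 ≤ z) (hgz : 0 ≤ g z) :
    δ * (1 + z * g z ^ 2) ≤ moderateRate g δ δ₁ δ₂ τ₁ τ₂ z := by
  rw [moderateRate, add_assoc]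
  exact le_add_of_nonneg_right (by positivity)

lemma le_moderateRate_right (hδ : 0 ≤ δ) (hδ₁ : 0 ≤ δ₁) (hz : 0 ≤ z) (hgz : 0 ≤ g z) :
    δ₂ * (1 + z * g z ^ τ₂) ≤ moderateRate g δ δ₁ δ₂ τ₁ τ₂ z :=
  le_add_of_nonneg_left (by positivity)

lemma moderateRate_two_mul_le (hδ₁ : 0 ≤ δ₁) (hδ₂ : 0 ≤ δ₂) (hz : 0 ≤ z) (hgz : 0 ≤ g z) :
    moderateRate g (2 * δ) δ₁ δ₂ τ₁ τ₂ z ≤ 2 * moderateRate g δ δ₁ δ₂ τ₁ τ₂ z := by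
  have h₁ : 0 ≤ δ₁ * (1 + z * g z ^ (τ₁ + 1)) := by positivity
  have h₂ : 0 ≤ δ₂ * (1 + z * g z ^ τ₂) := by positivity
  unfold moderateRate
  linarith

end ModerateRate

lemma ModerateRange.nearLevel {g : ℝ → ℝ} {c₁ c₃ δ δ₁ δ₂ τ₁ τ₂ z z' : ℝ}
    (hrange : ModerateRange g δ δ₁ δ₂ τ₁ τ₂ z) (h : SteinDrift g c₁ c₃) (hδ : δ ≤ 1 / 2)
    (hz' : |z' - z| ≤ 2 * δ) :
    NearLevel g (2 * δ) (2 * (exp (c₃ * driftThreshold c₁) + 1 / driftFloor c₁)) z z' where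
  nonneg := hrange.nonneg
  abs_sub_le := hz'
  le_one := by linarith
  mul_le := by
    rw [mul_assoc]
    exact mul_le_mul_of_nonneg_left (h.mul_le_of_mul_sq_le_one hrange.δ_nonneg (by linarith)
      hrange.nonneg hrange.δ_mul_le) zero_le_two

lemma exists_mul_one_add_le_moderateRate {c₁ : ℝ} (hc₁ : 0 < c₁) (c₃ : ℝ) :
    ∃ C > 0, ∀ {g : ℝ → ℝ} {δ δ₁ δ₂ τ₁ τ₂ z : ℝ}, SteinDrift g c₁ c₃ → 0 ≤ δ → 0 ≤ δ₁ → 0 ≤ δ₂ →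
      0 ≤ z → δ * (1 + g z) ≤ C * moderateRate g δ δ₁ δ₂ τ₁ τ₂ z := by
  obtain ⟨C, hC, hpow⟩ := exists_one_add_mul_rpow_le hc₁ c₃ (zero_le_two (α := ℝ))
  refine ⟨C, hC, fun {g δ δ₁ δ₂ τ₁ τ₂ z} h hδ hδ₁ hδ₂ hz => ?_⟩
  have hgz := h.nonneg hz
  have hsq := hpow h hz
  rw [rpow_two, rpow_two] at hsq
  calc δ * (1 + g z) ≤ δ * ((1 + z) * (1 + g z) ^ 2) := by
        gcongr
        nlinarith [mul_nonneg hz (sq_nonneg (1 + g z))]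
    _ ≤ δ * (C * (1 + z * g z ^ 2)) := by gcongr
    _ = C * (δ * (1 + z * g z ^ 2)) := mul_left_comm _ _ _
    _ ≤ _ := by gcongr; exact le_moderateRate_left hδ₁ hδ₂ hz hgz

lemma exists_mul_measureReal_Ioi_sub_tail_le_moderateRate {c₁ c₃ d₀ τ₁ τ₂ α : ℝ} (hc₁ : 0 < c₁)
    (hc₃ : 0 < c₃) (hd₀ : 0 ≤ d₀) (hτ₁ : 0 ≤ τ₁) (hτ₂ : 0 ≤ τ₂) (hα0 : 0 ≤ α) (hα1 : α < 1) :
    ∃ η > 0, ∃ C > 0, ∀ {g : ℝ → ℝ} {ν : Measure ℝ} {δ δ₁ δ₂ z z' s : ℝ}, SteinDrift g c₁ c₃ →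
      δ ≤ η → δ₂ ≤ η → ApproxStein ν g δ δ₁ δ₂ τ₁ τ₂ d₀ α → ModerateRange g δ δ₁ δ₂ τ₁ τ₂ z →
      |z' - z| ≤ 2 * δ → |s| = 1 →
      (∀ x ξ, |ξ - x| ≤ δ → s * ((Set.Ioi z).indicator 1 x - if z' ≤ ξ then 1 else 0) ≤ 0) →
      s * (ν.real (Set.Ioi z) - tail g c₁ z) ≤
        tail g c₁ z * (C * moderateRate g δ δ₁ δ₂ τ₁ τ₂ z) := by
  have hfloor := driftFloor_pos hc₁
  set C₀ := 2 * (exp (c₃ * driftThreshold c₁) + 1 / driftFloor c₁)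
  obtain ⟨K, hK, hstein⟩ := exists_mul_measureReal_Ioi_sub_tail_le (C₀ := C₀) hc₁ hc₃
    (by positivity) hd₀ hτ₁ hτ₂
  obtain ⟨η, hη, C, hC, hint⟩ := exists_integral_steinError_mul_envelope_le hc₁ hc₃ hd₀ hτ₁ hτ₂
    hα0 hα1
  obtain ⟨C₂, hC₂, hlevel⟩ := exists_mul_one_add_le_moderateRate hc₁ c₃
  set M := exp C₀ * exp (exp c₃)
  refine ⟨min η (1 / 2), by positivity, 2 * (K * C + M * C₂), by positivity, ?_⟩
  intro g ν δ δ₁ δ₂ z z' s h hδη hδ₂η hν hrange hz' hs hjump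
  have hδ := hδη.trans (min_le_right _ _)
  have hδ₂η := hδ₂η.trans (min_le_left _ _)
  have hδ₀ := hrange.δ_nonneg
  have hδ₁ := hrange.δ₁_nonneg
  have hδ₂ := hrange.δ₂_nonneg
  have hz := hrange.nonneg
  have hgz := h.nonneg hz
  have htail := (h.tail_pos z).le
  have hnear := hrange.nearLevel h hδ hz'
  have hshift : s * (tail g c₁ z' - tail g c₁ z) ≤ M * (2 * δ * (1 + g z)) * tail g c₁ z := by
    refine (le_abs_self _).trans ?_
    rw [abs_mul, hs, one_mul]
    exact h.abs_tail_sub_le hnear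
  calc s * (ν.real (Set.Ioi z) - tail g c₁ z)
      = s * (ν.real (Set.Ioi z) - tail g c₁ z') + s * (tail g c₁ z' - tail g c₁ z) := by ring
    _ ≤ K * (tail g c₁ z * (C * moderateRate g (2 * δ) δ₁ δ₂ τ₁ τ₂ z)) +
          M * (C₂ * moderateRate g (2 * δ) δ₁ δ₂ τ₁ τ₂ z) * tail g c₁ z := by
        refine add_le_add ((hstein h hν hnear (by linarith) hδ₁ hδ₂ hs hjump).trans ?_)
          (hshift.trans ?_)
        · gcongr
          exact hint h (by linarith) hδ₂η (by positivity) hν hrange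
        · exact mul_le_mul_of_nonneg_right (mul_le_mul_of_nonneg_left
            (hlevel h (by positivity) hδ₁ hδ₂ hz) (by positivity)) htail
    _ = tail g c₁ z * ((K * C + M * C₂) * moderateRate g (2 * δ) δ₁ δ₂ τ₁ τ₂ z) := by ring
    _ ≤ tail g c₁ z * ((K * C + M * C₂) * (2 * moderateRate g δ δ₁ δ₂ τ₁ τ₂ z)) := by
        gcongr
        exact moderateRate_two_mul_le hδ₁ hδ₂ hz hgz
    _ = _ := by ring

lemma exists_abs_measureReal_Ioi_sub_tail_le_of_le {c₁ c₃ d₀ τ₁ τ₂ α : ℝ} (hc₁ : 0 < c₁)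
    (hc₃ : 0 < c₃) (hd₀ : 0 ≤ d₀) (hτ₁ : 0 ≤ τ₁) (hτ₂ : 0 ≤ τ₂) (hα0 : 0 ≤ α) (hα1 : α < 1) :
    ∃ η > 0, ∃ C > 0, ∀ {g : ℝ → ℝ} {ν : Measure ℝ} {δ δ₁ δ₂ z : ℝ}, SteinDrift g c₁ c₃ →
      0 < δ → δ ≤ η → δ₂ ≤ η → ApproxStein ν g δ δ₁ δ₂ τ₁ τ₂ d₀ α →
      ModerateRange g δ δ₁ δ₂ τ₁ τ₂ z →
      |ν.real (Set.Ioi z) - tail g c₁ z| ≤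
        tail g c₁ z * (C * moderateRate g δ δ₁ δ₂ τ₁ τ₂ z) := by
  obtain ⟨η, hη, C, hC, hside⟩ := exists_mul_measureReal_Ioi_sub_tail_le_moderateRate hc₁ hc₃ hd₀
    hτ₁ hτ₂ hα0 hα1
  refine ⟨η, hη, C, hC, fun {g ν δ δ₁ δ₂ z} h hδ hδη hδ₂η hν hrange => abs_le'.2 ⟨?_, ?_⟩⟩
  · have hupper := hside (z' := z - 2 * δ) (s := 1) h hδη hδ₂η hν hrange
      (by rw [sub_sub_cancel_left, abs_neg, abs_of_pos (by positivity)]) abs_one fun x ξ hξ => by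
        simp only [Set.indicator_apply, Set.mem_Ioi, Pi.one_apply]
        split_ifs <;> linarith [abs_le.1 hξ]
    rwa [one_mul] at hupper
  · have hlower := hside (z' := z + 2 * δ) (s := -1) h hδη hδ₂η hν hrange
      (by rw [add_sub_cancel_left, abs_of_pos (by positivity)]) (by simp) fun x ξ hξ => by
        simp only [Set.indicator_apply, Set.mem_Ioi, Pi.one_apply]
        split_ifs <;> linarith [abs_le.1 hξ]
    rwa [neg_one_mul] at hlower

lemma exists_abs_measureReal_Ioi_sub_tail_le {c₁ c₃ d₀ τ₁ τ₂ α : ℝ} (hc₁ : 0 < c₁)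
    (hc₃ : 0 < c₃) (hd₀ : 0 ≤ d₀) (hτ₁ : 0 ≤ τ₁) (hτ₂ : 0 ≤ τ₂) (hα0 : 0 ≤ α) (hα1 : α < 1) :
    ∃ C > 0, ∀ {g : ℝ → ℝ} {ν : Measure ℝ} {δ δ₁ δ₂ z : ℝ}, SteinDrift g c₁ c₃ → 0 < δ →
      ApproxStein ν g δ δ₁ δ₂ τ₁ τ₂ d₀ α → ModerateRange g δ δ₁ δ₂ τ₁ τ₂ z →
      |ν.real (Set.Ioi z) - tail g c₁ z| ≤
        tail g c₁ z * (C * moderateRate g δ δ₁ δ₂ τ₁ τ₂ z) := by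
  obtain ⟨η, hη, C, hC, hsmall⟩ := exists_abs_measureReal_Ioi_sub_tail_le_of_le hc₁ hc₃ hd₀ hτ₁ hτ₂
    hα0 hα1
  set a := driftThreshold c₁ + 1 / (η * driftFloor c₁ ^ (2 : ℝ))
  set b := driftThreshold c₁ + 1 / (η * driftFloor c₁ ^ τ₂)
  obtain ⟨c, hc, htail⟩ := exists_le_tail hc₁ c₃ (max a b)
  refine ⟨C + 1 / (c * η), by positivity, fun {g ν δ δ₁ δ₂ z} h hδ hν hrange => ?_⟩
  have hδ₁ := hrange.δ₁_nonneg
  have hδ₂ := hrange.δ₂_nonneg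
  have hz := hrange.nonneg
  have hgz := h.nonneg hz
  have htail₀ := h.tail_pos z
  have hν1 := hν.isProbabilityMeasure
  have hrate : 0 ≤ moderateRate g δ δ₁ δ₂ τ₁ τ₂ z := by unfold moderateRate; positivity
  have large : z ≤ max a b → η ≤ moderateRate g δ δ₁ δ₂ τ₁ τ₂ z →
      |ν.real (Set.Ioi z) - tail g c₁ z| ≤
        tail g c₁ z * ((C + 1 / (c * η)) * moderateRate g δ δ₁ δ₂ τ₁ τ₂ z) := fun hzab hle => calc
    _ ≤ 1 - 0 := abs_sub_le_of_le_of_le measureReal_nonneg measureReal_le_one htail₀.le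
        (h.tail_le_one z)
    _ = c * (1 / (c * η) * η) := by rw [sub_zero]; field_simp
    _ ≤ tail g c₁ z * ((C + 1 / (c * η)) * moderateRate g δ δ₁ δ₂ τ₁ τ₂ z) := by
        gcongr
        exacts [htail h hz hzab, le_add_of_nonneg_left hC.le]
  rcases le_total δ η with hδη | hηδ
  · rcases le_total δ₂ η with hδ₂η | hηδ₂
    · refine (hsmall h hδ hδη hδ₂η hν hrange).trans ?_
      gcongr
      exact le_add_of_nonneg_right (by positivity)
    · exact large
        ((h.le_of_mul_rpow_le_one hτ₂ hη hηδ₂ hz hrange.δ₂_mul_le).trans (le_max_right _ _))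
        ((hηδ₂.trans (le_mul_of_one_le_right hδ₂ (le_add_of_nonneg_right (by positivity)))).trans
          (le_moderateRate_right hδ.le hδ₁ hz hgz))
  · refine large ((h.le_of_mul_rpow_le_one zero_le_two hη hηδ hz ?_).trans (le_max_left _ _))
      ((hηδ.trans (le_mul_of_one_le_right hδ.le (le_add_of_nonneg_right (by positivity)))).trans
        (le_moderateRate_left hδ₁ hδ₂ hz hgz))
    rw [rpow_two]
    exact hrange.δ_mul_le

lemma GCond.steinDrift {g : ℝ → ℝ} {c₁ c₂ c₃ : ℝ} (hg : GCond g c₂ c₃) (hc₁ : 0 < c₁)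
    (hint : ∫ y, pfun g c₁ y = 1) : SteinDrift g c₁ c₃ :=
  ⟨hg.diff, hg.mono, hg.zero, hc₁, zero_lt_one.trans_le hg.c₃ge, hg.derivBound, hint⟩

lemma ModerateRange.of_add_le {g : ℝ → ℝ} {δ δ₁ δ₂ τ₁ τ₂ z : ℝ} (hδ : 0 ≤ δ) (hδ₁ : 0 ≤ δ₁)
    (hδ₂ : 0 ≤ δ₂) (hz : 0 ≤ z) (hgz : 0 ≤ g z)
    (hle : δ * z * g z ^ 2 + δ₁ * z * g z ^ (τ₁ + 1) + δ₂ * z * g z ^ τ₂ ≤ 1) :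
    ModerateRange g δ δ₁ δ₂ τ₁ τ₂ z := by
  have h : 0 ≤ δ * z * g z ^ 2 := by positivity
  have h₁ : 0 ≤ δ₁ * z * g z ^ (τ₁ + 1) := by positivity
  have h₂ : 0 ≤ δ₂ * z * g z ^ τ₂ := by positivity
  constructor <;> linarith

lemma integrable_abs_pow_of_mul_abs_le {Ω : Type*} [MeasurableSpace Ω] {μ : Measure Ω}
    [IsFiniteMeasure μ] {X : Ω → ℝ} {δ d : ℝ} (hX : AEStronglyMeasurable X μ) (hδ : 0 < δ)
    (hbound : ∀ᵐ ω ∂μ, δ * |X ω| ≤ d) (n : ℕ) : Integrable (fun ω => |X ω| ^ n) μ := by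
  refine .of_bound (hX.norm.pow n) ((d / δ) ^ n) ?_
  filter_upwards [hbound] with ω hω
  rw [norm_pow, norm_eq_abs, abs_abs]
  gcongr
  exact (le_div_iff₀' hδ).2 hω

theorem stmt_1_general {c₁ c₃ d₀ τ₁ τ₂ α : ℝ} (hd₀ : 0 ≤ d₀) (hτ₁ : 0 ≤ τ₁) (hτ₂ : 0 ≤ τ₂)
    (hα0 : 0 ≤ α) (hα1 : α < 1) :
    ∃ C > 0, ∀ {Ω : Type*} [MeasurableSpace Ω] {μ : Measure Ω} [IsProbabilityMeasure μ]
      {W W' R : Ω → ℝ} {g : ℝ → ℝ} {lam δ δ₁ δ₂ z : ℝ},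
      SteinDrift g c₁ c₃ → ApproxExchangeablePair μ W W' R g lam δ δ₁ δ₂ τ₁ τ₂ d₀ α →
      (∀ n : ℕ, Integrable (fun ω => |g (W ω)| ^ n) μ) → 0 < δ →
      ModerateRange g δ δ₁ δ₂ τ₁ τ₂ z →
      |μ.real {ω | z < W ω} / tail g c₁ z - 1| ≤ C * moderateRate g δ δ₁ δ₂ τ₁ τ₂ z := by
  by_cases hc : 0 < c₁ ∧ 0 < c₃
  · obtain ⟨C, hC, hmain⟩ := exists_abs_measureReal_Ioi_sub_tail_le hc.1 hc.2 hd₀ hτ₁ hτ₂ hα0 hα1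
    refine ⟨C, hC, ?_⟩
    intro Ω _ μ _ W W' R g lam δ δ₁ δ₂ z h hpair hmom hδ hrange
    have htail := h.tail_pos z
    have hbound := hmain h hδ (hpair.approxStein_map h.measurable hmom) hrange
    rw [map_measureReal_apply hpair.measurable_left measurableSet_Ioi] at hbound
    rw [div_sub_one htail.ne', abs_div, abs_of_pos htail, div_le_iff₀' htail]
    exact hbound
  · exact ⟨1, one_pos, fun h => absurd ⟨h.c₁_pos, h.c₃_pos⟩ hc⟩

theorem stmt_1 (c₁ c₂ c₃ d₀ d₁ τ₁ τ₂ α μ₁ : ℝ)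
    (hd₀ : 1 ≤ d₀) (hd₁ : 0 < d₁) (hτ₁ : 0 < τ₁) (hτ₂ : 0 < τ₂)
    (hα0 : 0 ≤ α) (hα1 : α < 1) :
    ∃ C : ℝ, 0 < C ∧
      ∀ (Ω : Type) [MeasurableSpace Ω] (μ : Measure Ω),
        IsProbabilityMeasure μ →
        ∀ (W W' R : Ω → ℝ) (g : ℝ → ℝ) (lam δ δ₁ δ₂ : ℝ),
        Measurable W → Measurable W' → Measurable R →
        GCond g c₂ c₃ →
        0 < c₁ → (∫ y : ℝ, pfun g c₁ y) = 1 →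
        max (g 1) |g (-1)| = μ₁ →
        0 < δ → 0 < δ₁ → 0 ≤ δ₂ → 0 < lam → lam < 1 →
        -- `(W, W')` is an exchangeable pair
        Measure.map (fun ω => (W ω, W' ω)) μ = Measure.map (fun ω => (W' ω, W ω)) μ →
        -- `|Δ| = |W - W'| ≤ δ`
        (∀ ω, |W ω - W' ω| ≤ δ) →
        -- `E(Δ | W) = λ (g(W) - R(W))`
        (μ[fun ω => W ω - W' ω | MeasurableSpace.comap W Real.measurableSpace]
          =ᵐ[μ] fun ω => lam * (g (W ω) - R ω)) →
        -- conditions (2.6)-(2.10) with `K̂₁ = Δ²/(2λ)`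
        (∀ᵐ ω ∂μ,
          |(μ[fun ω => (W ω - W' ω) ^ 2 / (2 * lam) |
              MeasurableSpace.comap W Real.measurableSpace]) ω - 1|
            ≤ δ₁ * (|g (W ω)| ^ τ₁ + 1)) →
        (∀ᵐ ω ∂μ, |R ω| ≤ δ₂ * (|g (W ω)| ^ τ₂ + 1)) →
        (∀ᵐ ω ∂μ,
          (μ[fun ω => (W ω - W' ω) ^ 2 / (2 * lam) |
              MeasurableSpace.comap W Real.measurableSpace]) ω ≤ d₀) →
        (∀ᵐ ω ∂μ, δ * |g (W ω)| ≤ d₁) →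
        (∀ᵐ ω ∂μ, |R ω| ≤ α * (|g (W ω)| + 1)) →
        ∀ z : ℝ, 0 ≤ z →
          δ * z * g z ^ 2 + δ₁ * z * g z ^ (τ₁ + 1) + δ₂ * z * g z ^ τ₂ ≤ 1 →
          |(μ {ω | z < W ω}).toReal / (∫ y in Set.Ioi z, pfun g c₁ y) - 1|
            ≤ C * (δ * (1 + z * g z ^ 2) + δ₁ * (1 + z * g z ^ (τ₁ + 1))
                + δ₂ * (1 + z * g z ^ τ₂)) := by
  obtain ⟨C, hC, hmain⟩ := stmt_1_general (c₁ := c₁) (c₃ := c₃) (zero_le_one.trans hd₀) hτ₁.le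
    hτ₂.le hα0 hα1
  refine ⟨C, hC, ?_⟩
  intro Ω _ μ _ W W' R g lam δ δ₁ δ₂ hW hW' _ hg hc₁ hint _ hδ hδ₁ hδ₂ hlam _ hswap hΔ hreg hk hr
    hkd hgd hrα z hz hle
  have h : SteinDrift g c₁ c₃ := hg.steinDrift hc₁ hint
  have hpair : ApproxExchangeablePair μ W W' R g lam δ δ₁ δ₂ τ₁ τ₂ d₀ α := by
    refine ⟨hW, hW', hlam, hswap, hΔ, hreg, ?_⟩
    have hk₀ := condExp_nonneg (m := MeasurableSpace.comap W Real.measurableSpace) (μ := μ)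
      (f := fun ω => (W ω - W' ω) ^ 2 / (2 * lam)) (.of_forall fun ω => by positivity)
    filter_upwards [hk₀, hkd, hk, hr, hrα] with ω using Admissible.mk
  exact hmain h hpair (integrable_abs_pow_of_mul_abs_le
    (h.measurable.comp hW).aestronglyMeasurable hδ hgd) hδ
    (.of_add_le hδ.le hδ₁.le hδ₂ hz (h.nonneg hz) hle)
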